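/- Assume (A1)–(A3) and (A6)–(A7). Then there exists a threshold value q* ∈ [q₁, q₂) such that c_NL*(q) = c₀* for all q ∈ [0, q*] and c_NL*(q) > c₀* for all q ∈ (q*, ∞). Moreover, for q ≥ 0, the minimal nonlocal traveling wave 𝒲_q (i.e. a front with speed c_NL*(q)) satisfies 𝒲_q(ξ) = B e^{−λ₀ξ} + o(e^{−λ₀ξ}) as ξ → +∞ for some constant B > 0 if and only if q = q*. -/

import Mathlib

open Filter Asymptotics MeasureTheory Set

noncomputable section

/-- A continuous, nonnegative, even, compactly supported dispersal kernel of total mass 1. -/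
def IsKernel (J : ℝ → ℝ) : Prop :=
  Continuous J ∧ (∀ x, 0 ≤ J x) ∧ (∀ x, J (-x) = J x) ∧
  HasCompactSupport J ∧ (∫ x, J x) = 1

/-- A nonlocal traveling wave front with speed `c` for the kernel `J` and nonlinearity `g`. -/
def IsNLFront (J : ℝ → ℝ) (g : ℝ → ℝ) (c : ℝ) (W : ℝ → ℝ) : Prop :=
  ContDiff ℝ 1 W ∧
  (∀ ξ, (∫ y, J (ξ - y) * W y) - W ξ + c * deriv W ξ + g (W ξ) = 0) ∧
  Tendsto W atBot (nhds 1) ∧ Tendsto W atTop (nhds 0) ∧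
  (∀ ξ, deriv W ξ < 0)

/-- The linearized minimal speed `c₀* = inf_{λ>0} (∫ J(x)e^{λx}dx + γ₀ - 1)/λ`. -/
noncomputable def c0star (J : ℝ → ℝ) (γ₀ : ℝ) : ℝ :=
  sInf ((fun l : ℝ => ((∫ x, J x * Real.exp (l * x)) + γ₀ - 1) / l) '' Ioi 0)

/-! ### Part 1: basic operators -/

/-- antitone functions with values in `[0,1]` -/
def Adm (U : ℝ → ℝ) : Prop := Antitone U ∧ ∀ x, 0 ≤ U x ∧ U x ≤ 1

def cv (ρ u : ℝ → ℝ) (x : ℝ) : ℝ := ∫ y, ρ y * u (x - y)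

def PP (α : ℝ) (h : ℝ → ℝ) (x : ℝ) : ℝ := ∫ s in Ioi (0:ℝ), Real.exp (-s) * h (x + α * s)

def NN (J g : ℝ → ℝ) (K : ℝ) (U : ℝ → ℝ) (x : ℝ) : ℝ :=
  (cv J U x + ((K - 1) * U x + g (U x))) / K

def TT (J g : ℝ → ℝ) (K α : ℝ) (χ U : ℝ → ℝ) (x : ℝ) : ℝ :=
  PP α (fun z => χ z * NN J g K U z) x

structure Nice (g : ℝ → ℝ) (K : ℝ) : Prop where
  K1 : 1 < K
  g0 : g 0 = 0
  g1 : g 1 = 0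
  pos : ∀ w ∈ Ioo (0:ℝ) 1, 0 < g w
  cont : ContinuousOn g (Icc 0 1)
  mono : ∀ x ∈ Icc (0:ℝ) 1, ∀ y ∈ Icc (0:ℝ) 1, x ≤ y → (K - 1) * x + g x ≤ (K - 1) * y + g y

lemma Adm.meas {U : ℝ → ℝ} (h : Adm U) : Measurable U := h.1.measurable

lemma Adm.shift {U : ℝ → ℝ} (h : Adm U) (s : ℝ) : Adm (fun x => U (x + s)) :=
  ⟨fun x y hxy => h.1 (by linarith), fun x => h.2 _⟩

lemma Adm.abs {U : ℝ → ℝ} (h : Adm U) (x : ℝ) : |U x| ≤ 1 := by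
  rw [abs_of_nonneg (h.2 x).1]; exact (h.2 x).2

lemma Adm.one : Adm (fun _ => 1) := ⟨fun _ _ _ => le_rfl, fun _ => by norm_num⟩

lemma Adm.mul {U V : ℝ → ℝ} (h : Adm U) (h' : Adm V) : Adm (fun x => U x * V x) :=
  ⟨fun x y hxy => mul_le_mul (h.1 hxy) (h'.1 hxy) (h'.2 _).1 (h.2 _).1,
   fun x => ⟨mul_nonneg (h.2 _).1 (h'.2 _).1, mul_le_one₀ (h.2 _).2 (h'.2 _).1 (h'.2 _).2⟩⟩

lemma Adm.max {U V : ℝ → ℝ} (h : Adm U) (h' : Adm V) : Adm (fun x => max (U x) (V x)) :=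
  ⟨fun x y hxy => max_le_max (h.1 hxy) (h'.1 hxy),
   fun x => ⟨le_max_of_le_left (h.2 x).1, max_le (h.2 x).2 (h'.2 x).2⟩⟩

lemma Adm.mem {U : ℝ → ℝ} (h : Adm U) (x : ℝ) : U x ∈ Icc (0:ℝ) 1 := h.2 x

lemma Adm.limTop {U : ℝ → ℝ} (h : Adm U) : ∃ l ∈ Icc (0:ℝ) 1, Tendsto U atTop (nhds l) ∧ ∀ x, l ≤ U x := by
  have hb : BddBelow (range U) := ⟨0, by rintro _ ⟨x, rfl⟩; exact (h.2 x).1⟩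
  have := tendsto_atTop_ciInf h.1 hb
  refine ⟨_, ?_, this, fun x => ciInf_le hb x⟩
  exact isClosed_Icc.mem_of_tendsto this (Eventually.of_forall h.mem)

lemma Adm.limBot {U : ℝ → ℝ} (h : Adm U) : ∃ l ∈ Icc (0:ℝ) 1, Tendsto U atBot (nhds l) ∧ ∀ x, U x ≤ l := by
  have hb : BddAbove (range U) := ⟨1, by rintro _ ⟨x, rfl⟩; exact (h.2 x).2⟩
  have := tendsto_atBot_ciSup h.1 hb
  refine ⟨_, ?_, this, fun x => le_ciSup hb x⟩
  exact isClosed_Icc.mem_of_tendsto this (Eventually.of_forall h.mem)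

/-! #### the operator `PP` -/

lemma PP_int {h : ℝ → ℝ} (hm : Measurable h) (hb : ∀ x, |h x| ≤ 1) (α x : ℝ) :
    IntegrableOn (fun s => Real.exp (-s) * h (x + α * s)) (Ioi (0:ℝ)) := by
  refine Integrable.mono' (integrableOn_exp_neg_Ioi 0) ?_ ?_
  · exact (Measurable.mul (by fun_prop) (hm.comp (by fun_prop))).aestronglyMeasurable
  · refine Eventually.of_forall fun s => ?_
    rw [Real.norm_eq_abs, abs_mul, abs_of_pos (Real.exp_pos _)]
    exact mul_le_of_le_one_right (Real.exp_pos _).le (hb _)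

lemma PP_const (α b x : ℝ) : PP α (fun _ => b) x = b := by
  unfold PP
  rw [integral_mul_const, integral_exp_neg_Ioi_zero, one_mul]

lemma PP_mono {α : ℝ} (hα : 0 < α) {h k : ℝ → ℝ} (hh : Adm h) (hk : Adm k) {x : ℝ}
    (hle : ∀ y, x ≤ y → h y ≤ k y) : PP α h x ≤ PP α k x := by
  unfold PP
  refine setIntegral_mono_on (PP_int hh.meas hh.abs _ _) (PP_int hk.meas hk.abs _ _) measurableSet_Ioi ?_
  intro s hs
  have : 0 < s := hs
  exact mul_le_mul_of_nonneg_left (hle _ (by nlinarith)) (Real.exp_pos _).le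

lemma PP_le_of {α : ℝ} (hα : 0 < α) {h k : ℝ → ℝ} (hh : Adm h) (hk : Adm k) {x b : ℝ}
    (hle : ∀ y, x ≤ y → h y - k y ≤ b) : PP α h x - PP α k x ≤ b := by
  have h1 := PP_int hh.meas hh.abs α x
  have h2 := PP_int hk.meas hk.abs α x
  have : PP α h x - PP α k x = ∫ s in Ioi (0:ℝ), (Real.exp (-s) * h (x + α * s) - Real.exp (-s) * k (x + α * s)) := by
    rw [integral_sub h1 h2]; rfl
  rw [this]
  have hb : ∫ s in Ioi (0:ℝ), Real.exp (-s) * b = b := PP_const α b x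
  rw [← hb]
  refine setIntegral_mono_on (h1.sub h2) ((integrableOn_exp_neg_Ioi 0).mul_const _) measurableSet_Ioi ?_
  intro s hs
  have : 0 < s := hs
  rw [← mul_sub]
  exact mul_le_mul_of_nonneg_left (hle _ (by nlinarith)) (Real.exp_pos _).le

lemma PP_tendsto {ι : Type*} {l : Filter ι} [l.IsCountablyGenerated] {α : ℝ}
    {h : ι → ℝ → ℝ} {k : ℝ → ℝ} {x : ι → ℝ} {y : ℝ}
    (hm : ∀ i, Measurable (h i)) (hb : ∀ i z, |h i z| ≤ 1)
    (hl : ∀ s, 0 < s → Tendsto (fun i => h i (x i + α * s)) l (nhds (k (y + α * s)))) :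
    Tendsto (fun i => PP α (h i) (x i)) l (nhds (PP α k y)) := by
  unfold PP
  refine tendsto_integral_filter_of_dominated_convergence (fun s => Real.exp (-s)) ?_ ?_
    (integrableOn_exp_neg_Ioi 0) ?_
  · exact Eventually.of_forall fun i => (PP_int (hm i) (hb i) _ _).aestronglyMeasurable
  · refine Eventually.of_forall fun i => Eventually.of_forall fun s => ?_
    rw [Real.norm_eq_abs, abs_mul, abs_of_pos (Real.exp_pos _)]
    exact mul_le_of_le_one_right (Real.exp_pos _).le (hb _ _)
  · refine (ae_restrict_iff' measurableSet_Ioi).2 (Eventually.of_forall fun s hs => ?_)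
    exact (hl s hs).const_mul _

lemma PP_shift (α : ℝ) (h : ℝ → ℝ) (s x : ℝ) : PP α (fun z => h (z + s)) x = PP α h (x + s) := by
  unfold PP
  congr 1; ext t
  congr 2; ring

lemma PP_adm {α : ℝ} (hα : 0 < α) {h : ℝ → ℝ} (hh : Adm h) : Adm (PP α h) := by
  refine ⟨fun x y hxy => ?_, fun x => ⟨?_, ?_⟩⟩
  · have e1 : PP α h y = PP α (fun z => h (z + (y - x))) x := by rw [PP_shift]; congr 1; ring
    rw [e1]
    exact PP_mono hα (hh.shift _) hh (fun z _ => hh.1 (by linarith))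
  · have := PP_mono hα (h := fun _ => 0) (k := h) ⟨fun _ _ _ => le_rfl, fun _ => by norm_num⟩ hh (x := x)
      (fun y _ => (hh.2 y).1)
    rwa [PP_const] at this
  · have := PP_mono hα (h := h) (k := fun _ => 1) hh Adm.one (x := x)
      (fun y _ => (hh.2 y).2)
    rwa [PP_const] at this

lemma PP_u {α : ℝ} (hα : 0 < α) (h : ℝ → ℝ) (x : ℝ) :
    PP α h x = α⁻¹ * (Real.exp (x / α) * ∫ u in Ioi x, Real.exp (-(u / α)) * h u) := by
  have h1 := integral_comp_mul_left_Ioi (fun t => Real.exp (-(t / α)) * h (x + t)) 0 hα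
  have h2 : PP α h x = ∫ s in Ioi (0:ℝ), Real.exp (-(α * s / α)) * h (x + α * s) := by
    unfold PP; congr 1; ext s; rw [mul_div_cancel_left₀ _ hα.ne']
  rw [h2, h1, mul_zero, smul_eq_mul]
  congr 1
  rw [← integral_const_mul, ← integral_indicator measurableSet_Ioi, ← integral_indicator measurableSet_Ioi]
  rw [← integral_sub_right_eq_self _ x]
  congr 1; ext u
  simp only [indicator, mem_Ioi, sub_pos]
  split_ifs
  · rw [← mul_assoc, ← Real.exp_add]; congr 2 <;> ring_nf
  · rfl

lemma PP_split {α : ℝ} (hα : 0 < α) {h : ℝ → ℝ} (hh : Adm h) (x y : ℝ) :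
    α * Real.exp (-(x / α)) * PP α h x = (∫ u in x..y, Real.exp (-(u / α)) * h u)
      + α * Real.exp (-(y / α)) * PP α h y := by
  have hIoi : ∀ x, IntegrableOn (fun u => Real.exp (-(u / α)) * h u) (Ioi x) := by
    intro x
    refine Integrable.mono' (g := fun u => Real.exp (-(1/α) * u)) (integrableOn_exp_mul_Ioi (by
      have : 0 < 1 / α := by positivity
      linarith) x) ?_ ?_
    · exact (Measurable.mul (by fun_prop) hh.meas).aestronglyMeasurable
    · refine Eventually.of_forall fun s => ?_
      rw [Real.norm_eq_abs, abs_mul, abs_of_pos (Real.exp_pos _)]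
      have : -(s / α) = -(1/α) * s := by ring
      rw [this]
      exact mul_le_of_le_one_right (Real.exp_pos _).le (hh.abs _)
  have e : ∀ x, α * Real.exp (-(x / α)) * PP α h x = ∫ u in Ioi x, Real.exp (-(u / α)) * h u := by
    intro x
    rw [PP_u hα]
    have : Real.exp (-(x/α)) * Real.exp (x/α) = 1 := by rw [← Real.exp_add]; simp
    calc _ = (α * α⁻¹) * (Real.exp (-(x/α)) * Real.exp (x/α)) * ∫ u in Ioi x, Real.exp (-(u / α)) * h u := by ring
      _ = _ := by rw [this, mul_inv_cancel₀ hα.ne']; ring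
  rw [e, e, intervalIntegral.integral_interval_add_Ioi (hIoi x) (hIoi y)]

lemma PP_hasDeriv {α : ℝ} (hα : 0 < α) {h : ℝ → ℝ} (hh : Adm h) (x : ℝ) (hc : ContinuousAt h x) :
    HasDerivAt (PP α h) ((PP α h x - h x) / α) x := by
  have key : PP α h = fun y => α⁻¹ * (Real.exp (y / α) *
      (α * Real.exp (-(x / α)) * PP α h x - ∫ u in x..y, Real.exp (-(u / α)) * h u)) := by
    ext y
    rw [PP_split hα hh x y]
    have : Real.exp (-(y/α)) * Real.exp (y/α) = 1 := by rw [← Real.exp_add]; simp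
    calc PP α h y = (α⁻¹ * α) * (Real.exp (-(y/α)) * Real.exp (y/α)) * PP α h y := by
          rw [this, inv_mul_cancel₀ hα.ne']; ring
      _ = _ := by ring
  have hmeas : Measurable (fun u => Real.exp (-(u / α)) * h u) := Measurable.mul (by fun_prop) hh.meas
  have d1 : HasDerivAt (fun y => ∫ u in x..y, Real.exp (-(u / α)) * h u) (Real.exp (-(x / α)) * h x) x := by
    apply intervalIntegral.integral_hasDerivAt_right
    · exact IntervalIntegrable.refl
    · exact hmeas.stronglyMeasurable.stronglyMeasurableAtFilter
    · exact ContinuousAt.mul (by fun_prop) hc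
  have d2 : HasDerivAt (fun y => Real.exp (y / α)) (Real.exp (x/α) * (1 / α)) x :=
    (hasDerivAt_id x).div_const α |>.exp
  have d3 := ((d2.mul (d1.const_sub (α * Real.exp (-(x / α)) * PP α h x))).const_mul α⁻¹)
  rw [key]
  refine (d3.congr_deriv ?_)
  rw [← key]
  have : Real.exp (x/α) * Real.exp (-(x/α)) = 1 := by rw [← Real.exp_add]; simp
  simp only [intervalIntegral.integral_same, sub_zero]
  calc _ = α⁻¹ * ((α * (1/α)) * (Real.exp (x/α) * Real.exp (-(x/α))) * PP α h x - (Real.exp (x/α) * Real.exp (-(x/α))) * h x) := by ring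
    _ = _ := by rw [this, mul_one_div_cancel hα.ne']; ring

lemma PP_lip {α : ℝ} (hα : 0 < α) {h : ℝ → ℝ} (hh : Adm h) (x y : ℝ) :
    |PP α h x - PP α h y| ≤ α⁻¹ * |x - y| := by
  wlog hxy : x ≤ y generalizing x y
  · rw [abs_sub_comm, abs_sub_comm x y]; exact this y x (le_of_not_ge hxy)
  have hP := PP_adm hα hh
  rw [abs_of_nonneg (sub_nonneg.2 (hP.1 hxy)), abs_of_nonpos (by linarith)]
  have hs := PP_split hα hh x y
  have hi : (∫ u in x..y, Real.exp (-(u / α)) * h u) ≤ Real.exp (-(x/α)) * (y - x) := by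
    have : ∀ u ∈ Set.uIoc x y, ‖Real.exp (-(u / α)) * h u‖ ≤ Real.exp (-(x/α)) := by
      intro u hu
      rw [uIoc_of_le hxy] at hu
      rw [Real.norm_eq_abs, abs_mul, abs_of_pos (Real.exp_pos _)]
      have h1 : Real.exp (-(u / α)) ≤ Real.exp (-(x/α)) := by
        apply Real.exp_le_exp.2; have := hu.1; gcongr
      calc _ ≤ Real.exp (-(x/α)) * 1 := mul_le_mul h1 (hh.abs _) (abs_nonneg _) (Real.exp_pos _).le
        _ = _ := mul_one _
    have h2 := intervalIntegral.norm_integral_le_of_norm_le_const this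
    rw [abs_of_nonneg (by linarith : 0 ≤ y - x)] at h2
    exact (le_abs_self _).trans h2
  have hy : Real.exp (-(y/α)) ≤ Real.exp (-(x/α)) := by
    apply Real.exp_le_exp.2; gcongr
  have h3 : α * Real.exp (-(x / α)) * PP α h x ≤ Real.exp (-(x/α)) * (y - x) + α * Real.exp (-(x / α)) * PP α h y := by
    rw [hs]
    have := mul_le_mul_of_nonneg_right (mul_le_mul_of_nonneg_left hy hα.le) (hP.2 y).1
    linarith
  have he := Real.exp_pos (-(x/α))
  have h4 : α * PP α h x ≤ (y - x) + α * PP α h y := by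
    by_contra hcon
    push Not at hcon
    nlinarith
  have : α * (PP α h x - PP α h y) ≤ α * (α⁻¹ * -(x - y)) := by
    rw [← mul_assoc, mul_inv_cancel₀ hα.ne']; linarith
  exact le_of_mul_le_mul_left this hα

lemma PP_cont {α : ℝ} (hα : 0 < α) {h : ℝ → ℝ} (hh : Adm h) : Continuous (PP α h) := by
  have : LipschitzWith (Real.toNNReal α⁻¹) (PP α h) := by
    apply LipschitzWith.of_dist_le_mul
    intro x y
    rw [Real.dist_eq, Real.dist_eq, Real.coe_toNNReal _ (by positivity)]
    exact PP_lip hα hh x y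
  exact this.continuous

lemma PP_eq {α : ℝ} (hα : 0 < α) {h k : ℝ → ℝ} (hh : Adm h) (hk : Adm k) {x : ℝ}
    (hle : ∀ y, x ≤ y → h y ≤ k y) (he : PP α h x = PP α k x) :
    ∀ b, ∃ y, b ≤ y ∧ x ≤ y ∧ h y = k y := by
  have h1 := PP_int hh.meas hh.abs α x
  have h2 := PP_int hk.meas hk.abs α x
  have h0 : ∫ s in Ioi (0:ℝ), (Real.exp (-s) * k (x + α * s) - Real.exp (-s) * h (x + α * s)) = 0 := by
    rw [integral_sub h2 h1]
    unfold PP at he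
    rw [he, sub_self]
  rw [setIntegral_eq_zero_iff_of_nonneg_ae] at h0
  · intro b
    have h3 : ∀ᵐ s ∂(volume.restrict (Ioi (max 0 ((b - x)/α)))), Real.exp (-s) * k (x + α * s) - Real.exp (-s) * h (x + α * s) = 0 :=
      ae_restrict_of_ae_restrict_of_subset (Ioi_subset_Ioi (le_max_left _ _)) h0
    have h4 := (h3.and (ae_restrict_mem measurableSet_Ioi))
    have : (volume.restrict (Ioi (max 0 ((b - x)/α)))) ≠ 0 := by
      rw [Ne, Measure.restrict_eq_zero]; simp
    have : NeBot (ae (volume.restrict (Ioi (max 0 ((b - x)/α))))) := ae_neBot.2 this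
    obtain ⟨s, hs1, hs2⟩ := h4.exists
    have hs3 : 0 < s := lt_of_le_of_lt (le_max_left _ _) hs2
    have hs4 : (b - x)/α < s := lt_of_le_of_lt (le_max_right _ _) hs2
    rw [div_lt_iff₀ hα] at hs4
    refine ⟨x + α * s, by nlinarith, by nlinarith, ?_⟩
    have he := Real.exp_pos (-s)
    have : Real.exp (-s) * (k (x + α * s) - h (x + α * s)) = 0 := by rw [← hs1]; ring
    rcases mul_eq_zero.1 this with h | h
    · linarith
    · linarith
  · refine (ae_restrict_iff' measurableSet_Ioi).2 (Eventually.of_forall fun s hs => ?_)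
    have : 0 < s := hs
    have := hle (x + α * s) (by nlinarith)
    simp only [Pi.zero_apply]
    rw [← mul_sub]
    exact mul_nonneg (Real.exp_pos _).le (by linarith)
  · exact h2.sub h1

/-! ### Part 2: the operators `NN` and `TT` -/

lemma IsKernel.int {J : ℝ → ℝ} (hJ : IsKernel J) : Integrable J :=
  hJ.1.integrable_of_hasCompactSupport hJ.2.2.2.1

lemma cv_int {J : ℝ → ℝ} (hJ : IsKernel J) {u : ℝ → ℝ} (hm : Measurable u) (hb : ∀ x, |u x| ≤ 1) :
    Integrable (fun y => J y * u y) := by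
  refine Integrable.mono' hJ.int ?_ ?_
  · exact (hJ.1.measurable.mul hm).aestronglyMeasurable
  · refine Eventually.of_forall fun s => ?_
    rw [Real.norm_eq_abs, abs_mul, abs_of_nonneg (hJ.2.1 s)]
    exact mul_le_of_le_one_right (hJ.2.1 s) (hb _)

lemma cv_int' {J : ℝ → ℝ} (hJ : IsKernel J) {u : ℝ → ℝ} (hu : Adm u) (x : ℝ) :
    Integrable (fun y => J y * u (x - y)) :=
  cv_int hJ (u := fun y => u (x - y)) (hu.meas.comp (by fun_prop)) (fun y => hu.abs _)

lemma cv_le_of {J : ℝ → ℝ} (hJ : IsKernel J) {u v : ℝ → ℝ} (hu : Adm u) (hv : Adm v) {x x' b : ℝ}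
    (h : ∀ y, u (x - y) - v (x' - y) ≤ b) : cv J u x - cv J v x' ≤ b := by
  have h1 := cv_int' hJ hu x
  have h2 := cv_int' hJ hv x'
  have : cv J u x - cv J v x' = ∫ y, (J y * u (x - y) - J y * v (x' - y)) := by
    rw [integral_sub h1 h2]; rfl
  rw [this]
  calc _ ≤ ∫ y, J y * b := by
        refine integral_mono (h1.sub h2) (hJ.int.mul_const _) fun y => ?_
        simp only []
        rw [← mul_sub]
        exact mul_le_mul_of_nonneg_left (h y) (hJ.2.1 y)
    _ = b := by rw [integral_mul_const, hJ.2.2.2.2, one_mul]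

lemma cv_const {J : ℝ → ℝ} (hJ : IsKernel J) (b x : ℝ) : cv J (fun _ => b) x = b := by
  unfold cv; rw [integral_mul_const, hJ.2.2.2.2, one_mul]

lemma cv_tendsto {J : ℝ → ℝ} (hJ : IsKernel J) {ι : Type*} {l : Filter ι} [l.IsCountablyGenerated]
    {u : ι → ℝ → ℝ} {v : ℝ → ℝ} {x : ι → ℝ} {x' : ℝ}
    (hm : ∀ i, Adm (u i)) (hl : ∀ y, Tendsto (fun i => u i (x i - y)) l (nhds (v (x' - y)))) :
    Tendsto (fun i => cv J (u i) (x i)) l (nhds (cv J v x')) := by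
  unfold cv
  refine tendsto_integral_filter_of_dominated_convergence J ?_ ?_ hJ.int ?_
  · exact Eventually.of_forall fun i => (cv_int' hJ (hm i) _).aestronglyMeasurable
  · refine Eventually.of_forall fun i => Eventually.of_forall fun s => ?_
    rw [Real.norm_eq_abs, abs_mul, abs_of_nonneg (hJ.2.1 s)]
    exact mul_le_of_le_one_right (hJ.2.1 s) ((hm i).abs _)
  · exact Eventually.of_forall fun y => (hl y).const_mul _

lemma cv_adm {J : ℝ → ℝ} (hJ : IsKernel J) {u : ℝ → ℝ} (hu : Adm u) : Adm (cv J u) := by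
  refine ⟨fun x y hxy => ?_, fun x => ⟨?_, ?_⟩⟩
  · have := cv_le_of hJ hu hu (x := y) (x' := x) (b := 0) (fun z => by
      have := hu.1 (by linarith : x - z ≤ y - z); linarith)
    linarith
  · exact integral_nonneg fun y => mul_nonneg (hJ.2.1 y) (hu.2 _).1
  · have := cv_le_of hJ hu (Adm.one) (x := x) (x' := x) (b := 0) (fun z => by
      have := (hu.2 (x - z)).2; linarith)
    rw [cv_const hJ] at this
    linarith

section
variable {J g : ℝ → ℝ} {K : ℝ}

lemma NN_adm (hJ : IsKernel J) (hg : Nice g K) {U : ℝ → ℝ} (hU : Adm U) : Adm (NN J g K U) := by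
  have hK := hg.K1
  have h0 : (0:ℝ) ∈ Icc (0:ℝ) 1 := by simp
  have h1 : (1:ℝ) ∈ Icc (0:ℝ) 1 := by simp
  have hc := cv_adm hJ hU
  refine ⟨fun x y hxy => ?_, fun x => ⟨?_, ?_⟩⟩
  · unfold NN
    have := hg.mono _ (hU.mem y) _ (hU.mem x) (hU.1 hxy)
    have := hc.1 hxy
    gcongr
  · unfold NN
    have := hg.mono _ h0 _ (hU.mem x) (hU.mem x).1
    rw [hg.g0] at this
    have := (hc.2 x).1
    apply div_nonneg <;> linarith
  · unfold NN
    have := hg.mono _ (hU.mem x) _ h1 (hU.mem x).2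
    rw [hg.g1] at this
    have := (hc.2 x).2
    rw [div_le_one (by linarith)]
    linarith

lemma NN_mono (hJ : IsKernel J) (hg : Nice g K) {U V : ℝ → ℝ} (hU : Adm U) (hV : Adm V)
    (h : ∀ x, U x ≤ V x) (x : ℝ) : NN J g K U x ≤ NN J g K V x := by
  have hK := hg.K1
  unfold NN
  have h1 := hg.mono _ (hU.mem x) _ (hV.mem x) (h x)
  have h2 := cv_le_of hJ hU hV (x := x) (x' := x) (b := 0) (fun z => by
      have := h (x - z); linarith)
  have : cv J U x ≤ cv J V x := by linarith
  gcongr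

lemma g_tendsto (hg : Nice g K) {ι : Type*} {l : Filter ι} {u : ι → ℝ} {v : ℝ}
    (hu : ∀ i, u i ∈ Icc (0:ℝ) 1) (hv : v ∈ Icc (0:ℝ) 1) (h : Tendsto u l (nhds v)) :
    Tendsto (fun i => g (u i)) l (nhds (g v)) := by
  have h1 := hg.cont v hv
  exact h1.tendsto.comp (tendsto_nhdsWithin_iff.2 ⟨h, Eventually.of_forall hu⟩)

lemma NN_tendsto (hJ : IsKernel J) (hg : Nice g K) {ι : Type*} {l : Filter ι} [l.IsCountablyGenerated]
    {u : ι → ℝ → ℝ} {v : ℝ → ℝ} {x : ι → ℝ} {x' : ℝ}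
    (hm : ∀ i, Adm (u i)) (hv : v x' ∈ Icc (0:ℝ) 1)
    (hl : ∀ y, Tendsto (fun i => u i (x i - y)) l (nhds (v (x' - y)))) :
    Tendsto (fun i => NN J g K (u i) (x i)) l (nhds (NN J g K v x')) := by
  unfold NN
  have h0 := hl 0
  simp only [sub_zero] at h0
  exact ((cv_tendsto hJ hm hl).add ((h0.const_mul _).add
    (g_tendsto hg (fun i => (hm i).mem _) hv h0))).div_const _

lemma TT_hadm (hJ : IsKernel J) (hg : Nice g K) {χ U : ℝ → ℝ} (hχ : Adm χ) (hU : Adm U) :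
    Adm (fun z => χ z * NN J g K U z) := hχ.mul (NN_adm hJ hg hU)

lemma TT_adm (hJ : IsKernel J) (hg : Nice g K) {α : ℝ} (hα : 0 < α) {χ U : ℝ → ℝ} (hχ : Adm χ) (hU : Adm U) :
    Adm (TT J g K α χ U) := PP_adm hα (TT_hadm hJ hg hχ hU)

lemma TT_cont (hJ : IsKernel J) (hg : Nice g K) {α : ℝ} (hα : 0 < α) {χ U : ℝ → ℝ} (hχ : Adm χ) (hU : Adm U) :
    Continuous (TT J g K α χ U) := PP_cont hα (TT_hadm hJ hg hχ hU)

lemma TT_mono (hJ : IsKernel J) (hg : Nice g K) {α : ℝ} (hα : 0 < α) {χ χ' U V : ℝ → ℝ} (hχ : Adm χ)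
    (hχ' : Adm χ') (hχχ : ∀ x, χ x ≤ χ' x) (hU : Adm U) (hV : Adm V)
    (h : ∀ x, U x ≤ V x) (x : ℝ) : TT J g K α χ U x ≤ TT J g K α χ' V x :=
  PP_mono hα (TT_hadm hJ hg hχ hU) (TT_hadm hJ hg hχ' hV) fun y _ =>
    mul_le_mul (hχχ y) (NN_mono hJ hg hU hV h y) ((NN_adm hJ hg hU).2 y).1 (hχ'.2 y).1

lemma TT_tendsto (hJ : IsKernel J) (hg : Nice g K) {α : ℝ} {ι : Type*} {l : Filter ι} [l.IsCountablyGenerated]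
    {χ u : ι → ℝ → ℝ} {χ' v : ℝ → ℝ} (x : ℝ) (hχ : ∀ i, Adm (χ i))
    (hm : ∀ i, Adm (u i)) (hv : Adm v)
    (hl : ∀ y, Tendsto (fun i => u i y) l (nhds (v y)))
    (hlχ : ∀ y, Tendsto (fun i => χ i y) l (nhds (χ' y))) :
    Tendsto (fun i => TT J g K α (χ i) (u i) x) l (nhds (TT J g K α χ' v x)) := by
  unfold TT
  refine PP_tendsto (fun i => (TT_hadm hJ hg (hχ i) (hm i)).meas) (fun i => (TT_hadm hJ hg (hχ i) (hm i)).abs) ?_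
  intro s hs
  exact (hlχ _).mul (NN_tendsto hJ hg (x := fun _ => x + α * s) hm (hv.mem _) (fun y => hl _))

/-- limit at `+∞` -/
lemma TT_top (hJ : IsKernel J) (hg : Nice g K) {α : ℝ} (hα : 0 < α) {χ U : ℝ → ℝ} (hχ : Adm χ) (hU : Adm U)
    {a b : ℝ} (hb : b ∈ Icc (0:ℝ) 1)
    (h1 : Tendsto χ atTop (nhds a)) (h2 : Tendsto U atTop (nhds b)) :
    Tendsto (TT J g K α χ U) atTop (nhds (a * ((b + ((K - 1) * b + g b)) / K))) := by
  have := PP_tendsto (α := α) (l := atTop) (h := fun _ : ℝ => fun z => χ z * NN J g K U z) (x := fun x => x) (y := 0)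
    (k := fun _ => a * ((b + ((K - 1) * b + g b)) / K))
    (fun i => (TT_hadm hJ hg hχ hU).meas) (fun i => (TT_hadm hJ hg hχ hU).abs) (fun s hs => ?_)
  · rw [PP_const] at this; exact this
  · have ht : Tendsto (fun x => x + α * s) atTop atTop := tendsto_atTop_add_const_right _ _ tendsto_id
    refine (h1.comp ht).mul ?_
    have := NN_tendsto hJ hg (l := atTop) (u := fun _ : ℝ => U) (v := fun _ => b) (x := fun x => x + α * s) (x' := 0)
      (fun _ => hU) hb (fun y => h2.comp (tendsto_atTop_add_const_right _ _ ht))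
    simp only [NN, cv_const hJ] at this ⊢
    exact this

lemma TT_bot (hJ : IsKernel J) (hg : Nice g K) {α : ℝ} (hα : 0 < α) {χ U : ℝ → ℝ} (hχ : Adm χ) (hU : Adm U)
    {a b : ℝ} (hb : b ∈ Icc (0:ℝ) 1)
    (h1 : Tendsto χ atBot (nhds a)) (h2 : Tendsto U atBot (nhds b)) :
    Tendsto (TT J g K α χ U) atBot (nhds (a * ((b + ((K - 1) * b + g b)) / K))) := by
  have := PP_tendsto (α := α) (l := atBot) (h := fun _ : ℝ => fun z => χ z * NN J g K U z) (x := fun x => x) (y := 0)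
    (k := fun _ => a * ((b + ((K - 1) * b + g b)) / K))
    (fun i => (TT_hadm hJ hg hχ hU).meas) (fun i => (TT_hadm hJ hg hχ hU).abs) (fun s hs => ?_)
  · rw [PP_const] at this; exact this
  · have ht : Tendsto (fun x => x + α * s) atBot atBot := tendsto_atBot_add_const_right _ _ tendsto_id
    refine (h1.comp ht).mul ?_
    have := NN_tendsto hJ hg (l := atBot) (u := fun _ : ℝ => U) (v := fun _ => b) (x := fun x => x + α * s) (x' := 0)
      (fun _ => hU) hb (fun y => h2.comp (tendsto_atBot_add_const_right _ _ ht))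
    simp only [NN, cv_const hJ] at this ⊢
    exact this

lemma NN_shift (U : ℝ → ℝ) (s x : ℝ) : NN J g K (fun z => U (z + s)) x = NN J g K U (x + s) := by
  unfold NN cv
  congr 2
  congr 1; ext y; congr 2; ring

lemma TT_shift (α : ℝ) (χ U : ℝ → ℝ) (s x : ℝ) :
    TT J g K α (fun z => χ (z + s)) (fun z => U (z + s)) x = TT J g K α χ U (x + s) := by
  unfold TT
  rw [← PP_shift]
  congr 1; ext z; rw [NN_shift]

lemma Nice.zero_or_one (hg : Nice g K) {l : ℝ} (hl : l ∈ Icc (0:ℝ) 1) (h : g l ≤ 0) : l = 0 ∨ l = 1 := by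
  by_contra hc
  push Not at hc
  have := hg.pos l ⟨lt_of_le_of_ne hl.1 (Ne.symm hc.1), lt_of_le_of_ne hl.2 hc.2⟩
  linarith

lemma Nice.fix (hg : Nice g K) {l : ℝ} (hl : l ∈ Icc (0:ℝ) 1) (h : (l + ((K - 1) * l + g l)) / K ≤ l) :
    l = 0 ∨ l = 1 := by
  have hK := hg.K1
  rw [div_le_iff₀ (by linarith)] at h
  exact hg.zero_or_one hl (by linarith)

lemma TT_close (hJ : IsKernel J) {g' : ℝ → ℝ} (hg : Nice g K) (hg' : Nice g' K) {α : ℝ} (hα : 0 < α)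
    {χ U : ℝ → ℝ} (hχ : Adm χ) (hU : Adm U) {ε : ℝ} (he : ∀ w ∈ Icc (0:ℝ) 1, |g w - g' w| ≤ ε) (x : ℝ) :
    |TT J g K α χ U x - TT J g' K α χ U x| ≤ ε := by
  have hK := hg.K1
  have hε : 0 ≤ ε := (abs_nonneg _).trans (he 0 (by simp))
  have aux : ∀ g g' : ℝ → ℝ, Nice g K → Nice g' K → (∀ w ∈ Icc (0:ℝ) 1, |g w - g' w| ≤ ε) →
      TT J g K α χ U x - TT J g' K α χ U x ≤ ε := by
    intro g g' hg hg' he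
    refine PP_le_of hα (TT_hadm hJ hg hχ hU) (TT_hadm hJ hg' hχ hU) fun y _ => ?_
    rw [← mul_sub]
    have : NN J g K U y - NN J g' K U y = (g (U y) - g' (U y)) / K := by unfold NN; ring
    rw [this]
    have h1 := (abs_le.1 (he _ (hU.mem y))).2
    have h2 : (g (U y) - g' (U y)) / K ≤ ε := by
      rw [div_le_iff₀ (by linarith)]; nlinarith
    have := hχ.2 y
    nlinarith
  rw [abs_le]
  constructor
  · have := aux g' g hg' hg (fun w hw => by rw [abs_sub_comm]; exact he w hw)
    linarith
  · exact aux g g' hg hg' he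

lemma NN_cont (hJ : IsKernel J) (hg : Nice g K) {U : ℝ → ℝ} (hU : Adm U) (hc : Continuous U) :
    Continuous (NN J g K U) := by
  rw [continuous_iff_continuousAt]
  intro x
  have := NN_tendsto hJ hg (l := nhds x) (u := fun _ : ℝ => U) (v := U) (x := fun x => x) (x' := x)
    (fun _ => hU) (hU.mem _) (fun y => by
      exact (hc.tendsto _).comp ((continuous_sub_right y).tendsto x))
  exact this

/-- J charges some positive point -/
lemma IsKernel.pt (hJ : IsKernel J) : ∃ y > 0, 0 < J y := by
  by_contra hcon
  push Not at hcon
  have h0 : ∀ y, y ≠ 0 → J y = 0 := by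
    intro y hy
    rcases lt_or_gt_of_ne hy with h | h
    · have := hcon (-y) (by linarith)
      rw [hJ.2.2.1] at this
      exact le_antisymm this (hJ.2.1 _)
    · exact le_antisymm (hcon y h) (hJ.2.1 _)
  have : (∫ x, J x) = 0 := by
    apply integral_eq_zero_of_ae
    have : ∀ᵐ x : ℝ, x ≠ 0 := by simp [ae_iff, measure_singleton]
    filter_upwards [this] with x hx using h0 x hx
  rw [hJ.2.2.2.2] at this
  norm_num at this

lemma conv_eq_cv (U : ℝ → ℝ) (x : ℝ) : (∫ y, J (x - y) * U y) = cv J U x := by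
  unfold cv
  rw [← integral_sub_left_eq_self _ volume x]
  congr 1; ext y; simp

/-- the differential equation on the region where `χ = 1` -/
lemma TT_ode (hJ : IsKernel J) (hg : Nice g K) {c : ℝ} (hc : 0 < c) {χ U : ℝ → ℝ} (hχ : Adm χ) (hU : Adm U)
    (hfix : ∀ x, U x = TT J g K (c / K) χ U x) {x : ℝ} (hx : ∀ᶠ y in nhds x, χ y = 1) :
    HasDerivAt U ((U x - cv J U x - g (U x)) / c) x := by
  have hK := hg.K1
  have hα : 0 < c / K := by apply div_pos <;> linarith
  have hUc : Continuous U := by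
    have := TT_cont hJ hg hα hχ hU
    rwa [← funext hfix] at this
  have hcA : ContinuousAt (fun z => χ z * NN J g K U z) x := by
    have : ContinuousAt χ x := by
      have h1 : ContinuousAt (fun _ : ℝ => (1:ℝ)) x := continuousAt_const
      exact h1.congr (hx.mono fun y hy => hy.symm)
    exact this.mul (NN_cont hJ hg hU hUc).continuousAt
  have := PP_hasDeriv hα (TT_hadm hJ hg hχ hU) x hcA
  have e : PP (c / K) (fun z => χ z * NN J g K U z) = U := (funext hfix).symm
  rw [e, hx.self_of_nhds, one_mul] at this
  refine this.congr_deriv ?_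
  unfold NN
  have : K ≠ 0 := by linarith
  field_simp
  ring

/-- nontrivial fixed points are fronts -/
lemma front_of_fix (hJ : IsKernel J) (hg : Nice g K) {c : ℝ} (hc : 0 < c) {U : ℝ → ℝ} (hU : Adm U)
    (hfix : ∀ x, U x = TT J g K (c / K) (fun _ => 1) U x) {x₀ : ℝ} (h0 : 0 < U x₀) (h1 : U x₀ < 1) :
    IsNLFront J g c U := by
  have hK := hg.K1
  have hα : 0 < c / K := by apply div_pos <;> linarith
  have hUc : Continuous U := by
    have := TT_cont hJ hg hα Adm.one hU
    rwa [← funext hfix] at this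
  have hNc := NN_cont hJ hg hU hUc
  have hNa := NN_adm hJ hg hU
  have e : (fun z => (1:ℝ) * NN J g K U z) = NN J g K U := by ext z; simp
  have hfix' : ∀ x, U x = PP (c/K) (NN J g K U) x := by
    intro x; rw [← e]; exact hfix x
  have hd : ∀ x, HasDerivAt U ((U x - cv J U x - g (U x)) / c) x := fun x =>
    TT_ode hJ hg hc Adm.one hU hfix (by simp)
  have hd' : ∀ x, HasDerivAt U ((U x - NN J g K U x) / (c/K)) x := by
    intro x
    have := PP_hasDeriv hα hNa x hNc.continuousAt
    rwa [← funext hfix'] at this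
  have hbot : Tendsto U atBot (nhds 1) := by
    obtain ⟨l, hl, ht, hle⟩ := hU.limBot
    have h2 := TT_bot hJ hg hα Adm.one hU hl tendsto_const_nhds ht
    rw [← funext hfix] at h2
    have := tendsto_nhds_unique h2 ht
    rw [one_mul] at this
    rcases hg.fix hl this.le with h | h
    · have := hle x₀; linarith
    · rwa [h] at ht
  have htop : Tendsto U atTop (nhds 0) := by
    obtain ⟨l, hl, ht, hle⟩ := hU.limTop
    have h2 := TT_top hJ hg hα Adm.one hU hl tendsto_const_nhds ht
    rw [← funext hfix] at h2
    have := tendsto_nhds_unique h2 ht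
    rw [one_mul] at this
    rcases hg.fix hl this.le with h | h
    · rwa [h] at ht
    · have := hle x₀; linarith
  have hNtop : Tendsto (NN J g K U) atTop (nhds 0) := by
    have := NN_tendsto hJ hg (l := atTop) (u := fun _ : ℝ => U) (v := fun _ => 0) (x := fun x => x) (x' := 0)
      (fun _ => hU) (by simp) (fun y => htop.comp (tendsto_atTop_add_const_right _ _ tendsto_id))
    simp only [NN, cv_const hJ, hg.g0] at this
    rw [show NN J g K U = fun i => (cv J U i + ((K - 1) * U i + g (U i))) / K from rfl]
    simpa using this
  -- if `N U` vanishes somewhere we get a contradiction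
  have hstep : ∀ x, U x = 0 → NN J g K U x = 0 := by
    intro x hx
    refine tendsto_nhds_unique (f := fun _ : ℕ => NN J g K U x) (l := atTop) tendsto_const_nhds ?_
    have h2 : ∀ y, x < y → NN J g K U y = 0 := by
      intro y hy
      have : U y = 0 := le_antisymm (hx ▸ hU.1 hy.le) (hU.2 y).1
      have hdx := hd' x
      have hU0 : PP (c/K) (fun _ => 0) x = PP (c/K) (NN J g K U) x := by
        rw [PP_const, ← hfix', hx]
      by_contra hne
      have hpos : 0 < NN J g K U y := lt_of_le_of_ne (hNa.2 y).1 (Ne.symm hne)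
      -- derivative at y
      have hmin : IsLocalMin U y := by
        apply Eventually.of_forall
        intro z; rw [this]; exact (hU.2 z).1
      have := hmin.hasDerivAt_eq_zero (hd' y)
      rw [div_eq_zero_iff] at this
      rcases this with h | h <;> linarith
    have h3 : Tendsto (fun n : ℕ => x + 1 / ((n:ℝ) + 1)) atTop (nhds (x + 0)) :=
      tendsto_const_nhds.add tendsto_one_div_add_atTop_nhds_zero_nat
    rw [add_zero] at h3
    have h4 := (hNc.tendsto x).comp h3
    have h5 : (NN J g K U ∘ fun n : ℕ => x + 1 / ((n:ℝ) + 1)) = fun _ => 0 := by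
      ext n
      exact h2 _ (by have : 0 < 1 / ((n:ℝ) + 1) := by positivity
                     linarith)
    rw [h5] at h4
    have h6 := tendsto_nhds_unique h4 tendsto_const_nhds
    rw [h6]; exact tendsto_const_nhds
  obtain ⟨y₀, hy₀, hJy⟩ := hJ.pt
  have hstep2 : ∀ x, U x = 0 → U (x - y₀) = 0 := by
    intro x hx
    have h2 := hstep x hx
    have h3 : cv J U x = 0 := by
      unfold NN at h2
      rw [hx, hg.g0] at h2
      have : K ≠ 0 := by linarith
      simpa [this] using h2
    unfold cv at h3
    have hcont : Continuous fun y => J y * U (x - y) := hJ.1.mul (hUc.comp (by fun_prop))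
    rw [integral_eq_zero_iff_of_nonneg (fun y => mul_nonneg (hJ.2.1 y) (hU.2 _).1) (cv_int' hJ hU x)] at h3
    have h4 := (Continuous.ae_eq_iff_eq volume hcont continuous_zero).1 h3
    have h5 := congrFun h4 y₀
    simp only [Pi.zero_apply, mul_eq_zero] at h5
    rcases h5 with h | h
    · linarith
    · exact h
  have hpos : ∀ x, 0 < U x := by
    intro x
    by_contra hcon
    have hx : U x = 0 := le_antisymm (not_lt.1 hcon) (hU.2 x).1
    have hn : ∀ n : ℕ, U (x - n * y₀) = 0 := by
      intro n
      induction n with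
      | zero => simpa using hx
      | succ n ih =>
        have := hstep2 _ ih
        rw [← this]; congr 1; push_cast; ring
    obtain ⟨n, hn2⟩ := exists_nat_ge ((x - x₀) / y₀)
    rw [div_le_iff₀ hy₀] at hn2
    have := hU.1 (by linarith : x - n * y₀ ≤ x₀)
    rw [hn n] at this
    linarith
  refine ⟨?_, ?_, hbot, htop, ?_⟩
  · rw [contDiff_one_iff_deriv]
    refine ⟨fun x => (hd x).differentiableAt, ?_⟩
    have : deriv U = fun x => (U x - NN J g K U x) / (c/K) := funext fun x => (hd' x).deriv
    rw [this]
    exact (hUc.sub hNc).div_const _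
  · intro x
    rw [conv_eq_cv, (hd x).deriv]
    field_simp
    ring
  · intro x
    rw [(hd' x).deriv]
    apply div_neg_of_neg_of_pos _ hα
    have hle : U x ≤ NN J g K U x := by
      have h2 : PP (c/K) (NN J g K U) x ≤ PP (c/K) (fun _ => NN J g K U x) x :=
        PP_mono hα hNa ⟨fun _ _ _ => le_rfl, fun _ => hNa.2 x⟩ (fun y hy => hNa.1 hy)
      rwa [PP_const, ← hfix'] at h2
    rcases hle.lt_or_eq with h | h
    · linarith
    exfalso
    have h2 := PP_eq hα hNa (k := fun _ => NN J g K U x) ⟨fun _ _ _ => le_rfl, fun _ => hNa.2 x⟩ (x := x)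
      (fun y hy => hNa.1 hy) (by rw [PP_const, ← hfix', h])
    have h3 : NN J g K U x = 0 := by
      apply le_antisymm _ (hNa.2 x).1
      refine ge_of_tendsto hNtop (eventually_atTop.2 ⟨x, fun y hy => ?_⟩)
      obtain ⟨z, hz, _, hz2⟩ := h2 y
      rw [← hz2]
      exact hNa.1 hz
    have := hpos x
    linarith

lemma front_range {J g : ℝ → ℝ} {c : ℝ} {W : ℝ → ℝ} (hW : IsNLFront J g c W) : ∀ x, 0 < W x ∧ W x < 1 := by
  obtain ⟨h1, h2, h3, h4, h5⟩ := hW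
  have hs : StrictAnti W := strictAnti_of_deriv_neg h5
  intro x
  constructor
  · have : 0 ≤ W (x+1) := hs.antitone.le_of_tendsto h4 _
    have := hs (by linarith : x < x + 1); linarith
  · have : W (x-1) ≤ 1 := hs.antitone.ge_of_tendsto h3 _
    have := hs (by linarith : x - 1 < x); linarith

lemma front_adm {J g : ℝ → ℝ} {c : ℝ} {W : ℝ → ℝ} (hW : IsNLFront J g c W) : Adm W :=
  ⟨(strictAnti_of_deriv_neg hW.2.2.2.2).antitone, fun x => ⟨(front_range hW x).1.le, (front_range hW x).2.le⟩⟩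

lemma front_deriv {J g : ℝ → ℝ} {c : ℝ} (hc : 0 < c) {W : ℝ → ℝ} (hW : IsNLFront J g c W) (x : ℝ) :
    HasDerivAt W ((W x - cv J W x - g (W x)) / c) x := by
  have h1 : DifferentiableAt ℝ W x := (hW.1.differentiable (by norm_num)) x
  refine h1.hasDerivAt.congr_deriv ?_
  have := hW.2.1 x
  rw [conv_eq_cv] at this
  rw [eq_div_iff hc.ne']
  linarith

lemma fix_of_front (hJ : IsKernel J) (hg : Nice g K) {c : ℝ} (hc : 0 < c) {W : ℝ → ℝ}
    (hW : IsNLFront J g c W) : ∀ x, W x = TT J g K (c / K) (fun _ => 1) W x := by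
  have hK := hg.K1
  have hα : 0 < c / K := by apply div_pos <;> linarith
  have ha := front_adm hW
  intro x
  have hder : ∀ s ∈ Ici (0:ℝ), HasDerivAt (fun s => -(Real.exp (-s) * W (x + c/K * s)))
      (Real.exp (-s) * (1 * NN J g K W (x + c/K*s))) s := by
    intro s _
    have h1 := front_deriv hc hW (x + c/K*s)
    have h2 : HasDerivAt (fun s => x + c/K*s) (c/K) s := by
      simpa using ((hasDerivAt_id s).const_mul (c/K)).const_add x
    have h3 := h1.comp s h2
    have h4 : HasDerivAt (fun s => Real.exp (-s)) (Real.exp (-s) * (-1)) s := (hasDerivAt_neg s).exp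
    refine (h4.mul h3).neg.congr_deriv ?_
    unfold NN
    simp only [Function.comp]
    have : K ≠ 0 := by linarith
    field_simp
    ring
  have hlim : Tendsto (fun s => -(Real.exp (-s) * W (x + c/K * s))) atTop (nhds 0) := by
    have : Tendsto (fun s => Real.exp (-s)) atTop (nhds 0) := Real.tendsto_exp_neg_atTop_nhds_zero
    have h2 := squeeze_zero_norm (a := fun s => Real.exp (-s)) (f := fun s => -(Real.exp (-s) * W (x + c/K * s))) (fun s => by
      rw [norm_neg, Real.norm_eq_abs, abs_mul, abs_of_pos (Real.exp_pos _)]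
      exact mul_le_of_le_one_right (Real.exp_pos _).le (ha.abs _)) this
    exact h2
  have h := integral_Ioi_of_hasDerivAt_of_tendsto' hder
    (PP_int (TT_hadm hJ hg Adm.one ha).meas (TT_hadm hJ hg Adm.one ha).abs (c/K) x) hlim
  unfold TT PP
  rw [h]; simp
end

section part3
variable {J g : ℝ → ℝ} {K : ℝ}

lemma extract {L : ℝ} (hL0 : 0 < L) (u : ℕ → ℝ → ℝ) (hu : ∀ n, Adm (u n))
    (hL : ∀ n x y, |u n x - u n y| ≤ L * |x - y|) :
    ∃ φ : ℕ → ℕ, StrictMono φ ∧ ∃ W : ℝ → ℝ, Adm W ∧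
      ∀ x, Tendsto (fun n => u (φ n) x) atTop (nhds (W x)) := by
  have hK : IsCompact (Set.pi univ (fun _ : ℚ => Icc (0:ℝ) 1)) := isCompact_univ_pi fun _ => isCompact_Icc
  obtain ⟨w, hw, φ, hφ, ht⟩ := hK.isSeqCompact (x := fun n (r : ℚ) => u n (r : ℝ))
    (fun n => fun r _ => (hu n).2 r)
  rw [tendsto_pi_nhds] at ht
  have hcauchy : ∀ x : ℝ, ∃ l, Tendsto (fun n => u (φ n) x) atTop (nhds l) := by
    intro x
    apply cauchySeq_tendsto_of_complete
    rw [Metric.cauchySeq_iff]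
    intro ε hε
    obtain ⟨r, hr1, hr2⟩ := exists_rat_btwn (show x < x + ε / (4 * L) by
      have : 0 < ε / (4 * L) := by positivity
      linarith)
    have hxr : L * |x - r| ≤ ε / 4 := by
      rw [abs_of_neg (by linarith)]
      calc L * -(x - r) ≤ L * (ε / (4 * L)) := by gcongr; linarith
        _ = ε / 4 := by field_simp
    obtain ⟨N, hN⟩ := (Metric.cauchySeq_iff.1 (ht r).cauchySeq) (ε / 4) (by linarith)
    refine ⟨N, fun m hm n hn => ?_⟩
    have h1 := hN m hm n hn
    have h2 := hL (φ m) x r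
    have h3 := hL (φ n) x r
    simp only [Function.comp, Real.dist_eq] at h1 ⊢
    rw [abs_lt] at *
    rw [abs_le] at *
    constructor <;> linarith
  choose W hW using hcauchy
  refine ⟨φ, hφ, W, ⟨?_, ?_⟩, hW⟩
  · intro x y hxy
    exact le_of_tendsto_of_tendsto' (hW y) (hW x) (fun n => (hu _).1 hxy)
  · intro x
    exact ⟨ge_of_tendsto' (hW x) (fun n => ((hu _).2 x).1), le_of_tendsto' (hW x) (fun n => ((hu _).2 x).2)⟩

lemma limit_fix (hJ : IsKernel J) (hg : Nice g K) {α : ℝ} (hα : 0 < α) (χ : ℕ → ℝ → ℝ) (hχ : ∀ k, Adm (χ k))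
    (χ' : ℝ → ℝ) (hlχ : ∀ y, Tendsto (fun i => χ i y) atTop (nhds (χ' y)))
    (U : ℕ → ℝ → ℝ) (hU : ∀ k, Adm (U k)) (ε : ℕ → ℝ) (hε : Tendsto ε atTop (nhds 0))
    (h : ∀ k x, |U k x - TT J g K α (χ k) (U k) x| ≤ ε k) :
    ∃ φ : ℕ → ℕ, StrictMono φ ∧ ∃ W : ℝ → ℝ, Adm W ∧ (∀ x, W x = TT J g K α χ' W x) ∧
      ∀ x, Tendsto (fun n => U (φ n) x) atTop (nhds (W x)) := by
  obtain ⟨φ, hφ, W, hW, hl⟩ := extract (L := α⁻¹) (by positivity) (fun k => TT J g K α (χ k) (U k))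
    (fun k => TT_adm hJ hg hα (hχ k) (hU k)) (fun k x y => PP_lip hα (TT_hadm hJ hg (hχ k) (hU k)) x y)
  have hUl : ∀ x, Tendsto (fun n => U (φ n) x) atTop (nhds (W x)) := by
    intro x
    have h0 : Tendsto (fun n => U (φ n) x - TT J g K α (χ (φ n)) (U (φ n)) x) atTop (nhds 0) :=
      squeeze_zero_norm (fun n => h (φ n) x) (hε.comp hφ.tendsto_atTop)
    have := h0.add (hl x)
    simpa using this
  refine ⟨φ, hφ, W, hW, ?_, hUl⟩
  intro x
  refine tendsto_nhds_unique (hl x) ?_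
  exact TT_tendsto hJ hg x (fun n => hχ (φ n)) (fun n => hU (φ n)) hW hUl
    (fun y => (hlχ y).comp hφ.tendsto_atTop)

lemma exists_half {U : ℝ → ℝ} (hc : Continuous U) (hb : Tendsto U atBot (nhds 1)) (ht : Tendsto U atTop (nhds 0)) :
    ∃ x, U x = 1 / 2 := by
  obtain ⟨a, ha⟩ := (hb.eventually (lt_mem_nhds (show (1/2:ℝ) < 1 by norm_num))).exists
  obtain ⟨b, hb⟩ := (ht.eventually (gt_mem_nhds (show (0:ℝ) < 1/2 by norm_num))).exists
  exact mem_range_of_exists_le_of_exists_ge hc ⟨b, hb.le⟩ ⟨a, ha.le⟩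

lemma front_of_approx (hJ : IsKernel J) (hg : Nice g K) {c : ℝ} (hc : 0 < c)
    (U : ℕ → ℝ → ℝ) (hU : ∀ k, Adm (U k)) (hb : ∀ k, Tendsto (U k) atBot (nhds 1))
    (ht : ∀ k, Tendsto (U k) atTop (nhds 0)) (ε : ℕ → ℝ) (hε : Tendsto ε atTop (nhds 0))
    (h : ∀ k x, |U k x - TT J g K (c / K) (fun _ => 1) (U k) x| ≤ ε k) :
    ∃ W, IsNLFront J g c W := by
  have hK : 0 < K := by linarith [hg.K1]
  have hα : 0 < c / K := by positivity
  have hx : ∀ k, ∃ x, TT J g K (c / K) (fun _ => 1) (U k) x = 1 / 2 := by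
    intro k
    refine exists_half (TT_cont hJ hg hα Adm.one (hU k)) ?_ ?_
    · have := TT_bot hJ hg hα Adm.one (hU k) (a := 1) (b := 1) (by simp) tendsto_const_nhds (hb k)
      convert this using 2
      rw [hg.g1]; field_simp; ring
    · have := TT_top hJ hg hα Adm.one (hU k) (a := 1) (b := 0) (by simp) tendsto_const_nhds (ht k)
      convert this using 2
      rw [hg.g0]; simp
  choose X hX using hx
  have hTs : ∀ k x, TT J g K (c / K) (fun _ => 1) (fun z => U k (z + X k)) x
      = TT J g K (c / K) (fun _ => 1) (U k) (x + X k) := fun k x => TT_shift (c / K) (fun _ => 1) (U k) (X k) x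
  obtain ⟨φ, hφ, W, hW, hfix, hl⟩ := limit_fix hJ hg hα (fun _ _ => 1) (fun _ => Adm.one) (fun _ => 1)
    (fun _ => tendsto_const_nhds) (fun k x => U k (x + X k)) (fun k => (hU k).shift _) ε hε
    (fun k x => by rw [hTs]; exact h k _)
  have hW0 : W 0 = 1 / 2 := by
    refine tendsto_nhds_unique (hl 0) ?_
    have h0 : Tendsto (fun n => U (φ n) (0 + X (φ n)) - 1 / 2) atTop (nhds 0) := by
      refine squeeze_zero_norm (fun n => ?_) (hε.comp hφ.tendsto_atTop)
      have := h (φ n) (0 + X (φ n))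
      rw [zero_add, hX] at this
      rw [zero_add]; exact this
    have := h0.add_const (1 / 2)
    simpa using this
  exact ⟨W, front_of_fix hJ hg hc hW hfix (x₀ := 0) (by rw [hW0]; norm_num) (by rw [hW0]; norm_num)⟩

def itr (J g : ℝ → ℝ) (K α : ℝ) (χ φ : ℝ → ℝ) : ℕ → ℝ → ℝ
  | 0 => φ
  | n + 1 => fun x => max (TT J g K α χ (itr J g K α χ φ n) x) (φ x)

lemma itr_adm (hJ : IsKernel J) (hg : Nice g K) {α : ℝ} (hα : 0 < α) {χ φ : ℝ → ℝ} (hχ : Adm χ) (hφ : Adm φ) (n : ℕ) :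
    Adm (itr J g K α χ φ n) := by
  induction n with
  | zero => exact hφ
  | succ n ih => exact (TT_adm hJ hg hα hχ ih).max hφ

lemma minimal (hJ : IsKernel J) (hg : Nice g K) {α : ℝ} (hα : 0 < α) {χ φ : ℝ → ℝ} (hχ : Adm χ) (hφ : Adm φ) :
    ∃ U, Adm U ∧ (∀ x, U x = max (TT J g K α χ U x) (φ x)) ∧
      (∀ x, Tendsto (fun n => itr J g K α χ φ n x) atTop (nhds (U x))) ∧
      (∀ n x, itr J g K α χ φ n x ≤ U x) ∧
      ∀ V, Adm V → (∀ x, TT J g K α χ V x ≤ V x) → (∀ x, φ x ≤ V x) → ∀ x, U x ≤ V x := by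
  have ha := fun n => itr_adm hJ hg hα hχ hφ n
  have hstep : ∀ n x, itr J g K α χ φ n x ≤ itr J g K α χ φ (n + 1) x := by
    intro n
    induction n with
    | zero => intro x; exact le_max_right _ _
    | succ n ih =>
      intro x
      exact max_le_max (TT_mono hJ hg hα hχ hχ (fun _ => le_rfl) (ha n) (ha (n+1)) ih x) le_rfl
  have hmono : ∀ x, Monotone fun n => itr J g K α χ φ n x := fun x => monotone_nat_of_le_succ (fun n => hstep n x)
  have hbdd : ∀ x, BddAbove (range fun n => itr J g K α χ φ n x) := by
    intro x; refine ⟨1, ?_⟩; rintro _ ⟨n, rfl⟩; exact ((ha n).2 x).2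
  have hl : ∀ x, Tendsto (fun n => itr J g K α χ φ n x) atTop (nhds (⨆ n, itr J g K α χ φ n x)) :=
    fun x => tendsto_atTop_ciSup (hmono x) (hbdd x)
  have hadm : Adm fun x => ⨆ n, itr J g K α χ φ n x := by
    refine ⟨fun x y hxy => le_of_tendsto_of_tendsto' (hl y) (hl x) (fun n => (ha n).1 hxy), fun x => ⟨?_, ?_⟩⟩
    · exact ge_of_tendsto' (hl x) (fun n => ((ha n).2 x).1)
    · exact le_of_tendsto' (hl x) (fun n => ((ha n).2 x).2)
  refine ⟨fun x => ⨆ n, itr J g K α χ φ n x, hadm, ?_, hl, fun n x => le_ciSup (hbdd x) n, ?_⟩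
  · intro x
    refine tendsto_nhds_unique ((tendsto_add_atTop_iff_nat 1).2 (hl x)) ?_
    refine Tendsto.max ?_ tendsto_const_nhds
    exact TT_tendsto hJ hg x (fun _ => hχ) ha hadm hl (fun _ => tendsto_const_nhds)
  · intro V hV hT hle x
    refine le_of_tendsto' (hl x) (fun n => ?_)
    revert x
    induction n with
    | zero => exact hle
    | succ n ih =>
      intro x
      exact max_le ((TT_mono hJ hg hα hχ hχ (fun _ => le_rfl) (ha n) hV ih x).trans (hT x)) (hle x)

lemma step_adm {δ : ℝ} (m : ℝ) (h0 : 0 ≤ δ) (h1 : δ ≤ 1) : Adm (fun x : ℝ => if x ≤ m then δ else 0) := by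
  refine ⟨fun x y hxy => ?_, fun x => ?_⟩
  · dsimp only
    split_ifs with h1 h2 <;> linarith
  · dsimp only
    split_ifs <;> constructor <;> linarith

lemma front_of_super (hJ : IsKernel J) (hg : Nice g K) {c : ℝ} (hc : 0 < c) {V : ℝ → ℝ} (hV : Adm V)
    (hT : ∀ x, TT J g K (c / K) (fun _ => 1) V x ≤ V x) (ht : Tendsto V atTop (nhds 0)) {x₀ : ℝ} (h0 : 0 < V x₀) :
    ∃ W, IsNLFront J g c W := by
  have hK : 0 < K := by linarith [hg.K1]
  have hα : 0 < c / K := by positivity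
  have hδ : ∀ k : ℕ, 0 < V x₀ / (k + 1) ∧ V x₀ / (k + 1) ≤ V x₀ := fun k =>
    ⟨by positivity, div_le_self h0.le (by simp)⟩
  have hφ : ∀ k : ℕ, Adm (fun x : ℝ => if x ≤ 0 then V x₀ / (k + 1) else 0) := fun k =>
    step_adm 0 (hδ k).1.le ((hδ k).2.trans (hV.2 x₀).2)
  choose U hU hfix hl hitr hmin using fun k : ℕ => minimal hJ hg hα Adm.one (hφ k)
  refine front_of_approx hJ hg hc U hU ?_ ?_ (fun k : ℕ => V x₀ / (k + 1)) ?_ ?_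
  · intro k
    obtain ⟨l, hl, ht, hle⟩ := (hU k).limBot
    have h2 := TT_bot hJ hg hα Adm.one (hU k) hl tendsto_const_nhds ht
    have h3 := le_of_tendsto_of_tendsto' h2 ht (fun x => (le_max_left _ _).trans (hfix k x).ge)
    rw [one_mul] at h3
    have h4 : V x₀ / (k + 1) ≤ U k 0 := by
      have := hfix k 0
      simp only [le_refl, if_true] at this
      rw [this]; exact le_max_right _ _
    rcases hg.fix hl h3 with h | h
    · have := hle 0; have := (hδ k).1; linarith
    · rwa [h] at ht
  · intro k
    have h1 : ∀ x, U k x ≤ V (x + x₀) := by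
      refine hmin k (fun x => V (x + x₀)) (hV.shift _) (fun x => ?_) (fun x => ?_)
      · rw [TT_shift (c / K) (fun _ => 1) V x₀ x]; exact hT _
      · split_ifs with h
        · exact (hδ k).2.trans (hV.1 (by linarith))
        · exact (hV.2 _).1
    exact squeeze_zero (fun x => ((hU k).2 x).1) h1 (ht.comp (tendsto_atTop_add_const_right _ _ tendsto_id))
  · have := (tendsto_const_nhds (x := V x₀) (f := atTop)).mul tendsto_one_div_add_atTop_nhds_zero_nat
    simpa [div_eq_mul_inv] using this
  · intro k x
    have h1 := hfix k x
    have h2 : (if x ≤ 0 then V x₀ / ((k:ℝ) + 1) else 0) ≤ V x₀ / (k + 1) := by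
      split_ifs
      · exact le_rfl
      · exact (hδ k).1.le
    have h3 := ((TT_adm hJ hg hα Adm.one (hU k)).2 x).1
    rw [abs_le]
    rcases max_cases (TT J g K (c / K) (fun _ => 1) (U k) x) (if x ≤ 0 then V x₀ / ((k:ℝ) + 1) else 0) with h | h <;>
    constructor <;> linarith [(hδ k).1]

def chi (m x : ℝ) : ℝ := if x ≤ m then 1 else 0

lemma chi_adm (m : ℝ) : Adm (chi m) := step_adm m zero_le_one le_rfl

lemma chi_bot (m : ℝ) : Tendsto (chi m) atBot (nhds 1) := by
  apply tendsto_const_nhds.congr'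
  filter_upwards [eventually_le_atBot m] with x hx
  simp [chi, hx]

lemma halfline (hJ : IsKernel J) (hg : Nice g K) {c : ℝ} (hc : 0 < c) (hno : ¬ ∃ W, IsNLFront J g c W) :
    ∃ U, Adm U ∧ (∀ x, U x = TT J g K (c / K) (chi 0) U x) ∧ Tendsto U atBot (nhds 1) := by
  have hK : 0 < K := by linarith [hg.K1]
  have hα : 0 < c / K := by positivity
  have hφ : Adm (fun x : ℝ => if x ≤ 0 then (1/2 : ℝ) else 0) := step_adm 0 (by norm_num) (by norm_num)
  obtain ⟨U, hU, hfix, hlim, hitr, -⟩ := minimal hJ hg hα Adm.one hφ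
  have hU1 : 1 ≤ U 1 := by
    obtain ⟨l, hl, ht, hle⟩ := hU.limTop
    have h2 := TT_top hJ hg hα Adm.one hU hl tendsto_const_nhds ht
    have h3 := le_of_tendsto_of_tendsto' h2 ht (fun x => (le_max_left _ _).trans (hfix x).ge)
    rw [one_mul] at h3
    rcases hg.fix hl h3 with h | h
    · exfalso; apply hno
      rw [h] at ht
      refine front_of_super hJ hg hc hU (fun x => (le_max_left _ _).trans (hfix x).ge) ht (x₀ := 0) ?_
      have := hfix 0
      simp only [le_refl, if_true] at this
      have h5 := le_max_right (TT J g K (c / K) (fun x => 1) U 0) (1 / 2)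
      linarith
    · have := hle 1; linarith
  obtain ⟨n, hn⟩ := ((hlim 1).eventually (lt_mem_nhds (show 1/2 < U 1 by linarith))).exists
  have hconv : ∀ n x, Tendsto (fun m : ℕ => itr J g K (c / K) (chi m) (fun x : ℝ => if x ≤ 0 then (1/2 : ℝ) else 0) n x)
      atTop (nhds (itr J g K (c / K) (fun _ => 1) (fun x : ℝ => if x ≤ 0 then (1/2 : ℝ) else 0) n x)) := by
    intro n
    induction n with
    | zero => intro x; exact tendsto_const_nhds
    | succ n ih =>
      intro x
      refine Tendsto.max ?_ tendsto_const_nhds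
      refine TT_tendsto hJ hg x (fun m => chi_adm m) (fun m => itr_adm hJ hg hα (chi_adm m) hφ n)
        (itr_adm hJ hg hα Adm.one hφ n) ih (fun y => ?_)
      apply tendsto_const_nhds.congr'
      obtain ⟨N, hN⟩ := exists_nat_ge y
      filter_upwards [eventually_ge_atTop N] with m hm
      have : (N:ℝ) ≤ m := by exact_mod_cast hm
      simp [chi, hN.trans this]
  obtain ⟨m, hm⟩ := ((hconv n 1).eventually (lt_mem_nhds hn)).exists
  obtain ⟨b, hb, hbfix, -, hbitr, -⟩ := minimal hJ hg hα (chi_adm m) hφ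
  have hb1 : 1 / 2 < b 1 := hm.trans_le (hbitr n 1)
  have hbT : ∀ x, b x = TT J g K (c / K) (chi m) b x := by
    intro x
    have h1 := hbfix x
    have h2 := ((TT_adm hJ hg hα (chi_adm m) hb).2 x).1
    rcases le_or_gt x 0 with h | h
    · rw [if_pos h] at h1
      have h3 := hb.1 (show x ≤ 1 by linarith)
      rcases max_cases (TT J g K (c / K) (chi m) b x) (1 / 2) with h | h <;> linarith
    · rw [if_neg (by linarith), max_eq_left h2] at h1
      exact h1
  have hbot : Tendsto b atBot (nhds 1) := by
    obtain ⟨l, hl, ht, hle⟩ := hb.limBot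
    have h2 := TT_bot hJ hg hα (chi_adm m) hb hl (chi_bot m) ht
    rw [← funext hbT] at h2
    have := tendsto_nhds_unique h2 ht
    rw [one_mul] at this
    rcases hg.fix hl this.le with h | h
    · have := hle 1; linarith
    · rwa [h] at ht
  refine ⟨fun x => b (x + m), hb.shift _, fun x => ?_, ?_⟩
  · change b (x + m) = _
    rw [hbT (x + m), ← TT_shift]
    congr 1
    ext z; simp [chi]
  · exact hbot.comp (tendsto_atBot_add_const_right _ _ tendsto_id)

lemma TT_chi_zero {α : ℝ} (hα : 0 < α) {m x : ℝ} (U : ℝ → ℝ) (hx : m ≤ x) : TT J g K α (chi m) U x = 0 := by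
  unfold TT PP
  refine setIntegral_eq_zero_of_forall_eq_zero (fun s hs => ?_)
  have h : 0 < α * s := mul_pos hα (mem_Ioi.1 hs)
  have : ¬ (x + α * s ≤ m) := by linarith
  simp [chi, this]

lemma comp_left (hJ : IsKernel J) (hg : Nice g K) {α : ℝ} (hα : 0 < α) {η β : ℝ} (hβ : 0 < β)
    (hd : ∀ x y, 1 - η ≤ y → y ≤ x → x ≤ 1 → g x - g y ≤ -β * (x - y))
    {U V : ℝ → ℝ} (hU : Adm U) (hV : Adm V)
    (hUT : ∀ x, U x ≤ TT J g K α (fun _ => 1) U x) (hVT : ∀ x, TT J g K α (fun _ => 1) V x ≤ V x)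
    {x₀ : ℝ} (hVη : ∀ x ≤ x₀, 1 - η ≤ V x) (hle : ∀ x, x₀ ≤ x → U x ≤ V x) :
    ∀ x, U x ≤ V x := by
  have hK := hg.K1
  have hK0 : 0 < K := by linarith
  set β' := min β (K - 1) with hβ'
  have hb1 : β' ≤ β := min_le_left _ _
  have hb2 : β' ≤ K - 1 := min_le_right _ _
  have hb0 : 0 < β' := lt_min hβ (by linarith)
  set θ := (K - β') / K with hθ
  have hθ0 : 0 ≤ θ := by apply div_nonneg <;> linarith
  have hθ1 : θ < 1 := by rw [hθ, div_lt_one hK0]; linarith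
  have key : ∀ n : ℕ, ∀ x, U x - V x ≤ θ ^ n := by
    intro n
    induction n with
    | zero => intro x; have := hU.2 x; have := hV.2 x; simp; linarith
    | succ n ih =>
      intro x
      have hD : 0 ≤ θ ^ n := by positivity
      have h1 : TT J g K α (fun _ => 1) U x - TT J g K α (fun _ => 1) V x ≤ θ ^ (n + 1) := by
        refine PP_le_of hα (TT_hadm hJ hg Adm.one hU) (TT_hadm hJ hg Adm.one hV) (fun y _ => ?_)
        simp only [one_mul]
        have hcv := cv_le_of hJ hU hV (x := y) (x' := y) (fun z => ih (y - z))
        have hF : ((K - 1) * U y + g (U y)) - ((K - 1) * V y + g (V y)) ≤ (K - 1 - β') * θ ^ n := by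
          rcases le_or_gt (U y) (V y) with h | h
          · have := hg.mono (U y) (hU.2 y) (V y) (hV.2 y) h
            have h3 : 0 ≤ (K - 1 - β') * θ ^ n := mul_nonneg (by linarith) hD
            linarith
          · have hy : y ≤ x₀ := by
              by_contra hcon
              have := hle y (by linarith); linarith
            have h4 := hd (U y) (V y) (hVη y hy) h.le (hU.2 y).2
            have h5 : (K - 1 - β') * (U y - V y) ≤ (K - 1 - β') * θ ^ n :=
              mul_le_mul_of_nonneg_left (ih y) (by linarith)
            have h6 : β' * (U y - V y) ≤ β * (U y - V y) := by gcongr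
            linarith
        unfold NN
        rw [← sub_div, div_le_iff₀ hK0, hθ, pow_succ, ← hθ]
        have : θ ^ n * θ * K = θ ^ n * (K - β') := by
          rw [hθ]; field_simp
        rw [this]
        nlinarith
      have := hUT x; have := hVT x; linarith
  intro x
  have := ge_of_tendsto' (tendsto_pow_atTop_nhds_zero_of_lt_one hθ0 hθ1) (fun n => key n x)
  linarith

lemma slide (hJ : IsKernel J) (hg : Nice g K) {α : ℝ} (hα : 0 < α) {η β : ℝ} (hβ : 0 < β) (hη : 0 < η)
    (hd : ∀ x y, 1 - η ≤ y → y ≤ x → x ≤ 1 → g x - g y ≤ -β * (x - y))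
    {U V : ℝ → ℝ} (hU : Adm U) (hV : Adm V) (hUc : Continuous U) {L : ℝ} (hL : ∀ x y, |V x - V y| ≤ L * |x - y|)
    (hUT : ∀ x, U x ≤ TT J g K α (fun _ => 1) U x) (hVT : ∀ x, TT J g K α (fun _ => 1) V x ≤ V x)
    (hUb : Tendsto U atBot (nhds 1)) (hVb : Tendsto V atBot (nhds 1)) (hVt : Tendsto V atTop (nhds 0))
    (hU0 : ∃ x, 0 < U x) (hU1 : ∀ x, U x < 1)
    (hb1 : ∃ s X, ∀ ξ, X ≤ ξ → U ξ ≤ V (ξ - s))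
    (hb2 : ∀ s, (∀ ξ, U ξ ≤ V (ξ - s)) → ∃ X, ∃ ε > 0, ∀ ξ, X ≤ ξ → U ξ ≤ V (ξ - (s - ε)))
    (hc : ∀ s, (∀ ξ, U ξ ≤ V (ξ - s)) → ∀ ξ, U ξ < V (ξ - s)) : False := by
  have hL0 : 0 ≤ L := by
    have := (abs_nonneg _).trans (hL 1 0); simpa using this
  have hVc : Continuous V := by
    have : LipschitzWith L.toNNReal V := LipschitzWith.of_dist_le_mul (fun x y => by
      rw [Real.dist_eq, Real.dist_eq, Real.coe_toNNReal _ hL0]; exact hL x y)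
    exact this.continuous
  have hVs : ∀ s, Adm (fun x => V (x - s)) := fun s => by simpa [sub_eq_add_neg] using hV.shift (-s)
  have hVTs : ∀ s x, TT J g K α (fun _ => 1) (fun x => V (x - s)) x ≤ V (x - s) := by
    intro s x
    have := TT_shift (J := J) (g := g) (K := K) α (fun _ => 1) V (-s) x
    simp only [← sub_eq_add_neg] at this
    rw [this]; exact hVT _
  obtain ⟨x₁, hx₁⟩ : ∃ x, ∀ z ≤ x, 1 - η ≤ V z := by
    have := hVb.eventually (lt_mem_nhds (show 1 - η < 1 by linarith))
    obtain ⟨a, ha⟩ := eventually_atBot.1 this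
    exact ⟨a, fun z hz => (ha z hz).le⟩
  set S : Set ℝ := {s | ∀ ξ, U ξ ≤ V (ξ - s)} with hS
  have hne : S.Nonempty := by
    obtain ⟨s, X, hX⟩ := hb1
    obtain ⟨z, hz⟩ := eventually_atBot.1 (hVb.eventually (lt_mem_nhds (hU1 0)))
    refine ⟨max s (max (X - z) (0 - x₁)), ?_⟩
    refine comp_left hJ hg hα hβ hd hU (hVs _) hUT (hVTs _) (x₀ := 0) ?_ ?_
    · intro x hx
      apply hx₁
      have := (le_max_right (X - z) (0 - x₁)).trans (le_max_right s _)
      linarith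
    · intro x hx
      rcases le_total X x with h | h
      · exact (hX x h).trans (hV.1 (by have := le_max_left s (max (X - z) (0 - x₁)); linarith))
      · have h3 : x - max s (max (X - z) (0 - x₁)) ≤ z := by
          have := (le_max_left (X - z) (0 - x₁)).trans (le_max_right s _)
          linarith
        exact (hU.1 hx).trans (hz _ h3).le
  have hbdd : BddBelow S := by
    obtain ⟨x, hx⟩ := hU0
    obtain ⟨Y, hY⟩ := eventually_atTop.1 (hVt.eventually (gt_mem_nhds hx))
    refine ⟨x - Y, fun s hs => ?_⟩
    by_contra hcon
    have := hY (x - s) (by linarith)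
    have := hs x
    linarith
  have hcl : IsClosed S := by
    rw [hS, Set.ofPred_forall]
    refine isClosed_iInter fun ξ => isClosed_le continuous_const (hVc.comp (by fun_prop))
  have hmem := hcl.csInf_mem hne hbdd
  set s := sInf S with hs
  obtain ⟨X, ε, hε, hX⟩ := hb2 s hmem
  have hstrict := hc s hmem
  set x₀ := x₁ + s - 1 with hx₀
  have hm : ∃ m > 0, ∀ ξ ∈ Icc x₀ X, U ξ + m ≤ V (ξ - s) := by
    rcases (Icc x₀ X).eq_empty_or_nonempty with h | h
    · exact ⟨1, one_pos, by simp [h]⟩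
    · obtain ⟨z, hz, hmin⟩ := isCompact_Icc.exists_isMinOn h
        (f := fun ξ => V (ξ - s) - U ξ) (((hVc.comp (by fun_prop)).sub hUc).continuousOn)
      refine ⟨V (z - s) - U z, by linarith [hstrict z], fun ξ hξ => ?_⟩
      have : V (z - s) - U z ≤ V (ξ - s) - U ξ := hmin hξ
      linarith
  obtain ⟨m, hm0, hm⟩ := hm
  set e := min ε (min 1 (m / (L + 1))) with he
  have he0 : 0 < e := lt_min hε (lt_min one_pos (by positivity))
  have he1 : e ≤ ε := min_le_left _ _
  have he2 : e ≤ 1 := (min_le_right _ _).trans (min_le_left _ _)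
  have he3 : e ≤ m / (L + 1) := (min_le_right _ _).trans (min_le_right _ _)
  have hin : s - e ∈ S := by
    refine comp_left hJ hg hα hβ hd hU (hVs _) hUT (hVTs _) (x₀ := x₀) ?_ ?_
    · intro x hx; apply hx₁; linarith
    · intro x hx
      rcases le_total X x with h | h
      · exact (hX x h).trans (hV.1 (by linarith))
      · have h1 := hm x ⟨hx, h⟩
        have h2 := hL (x - s) (x - (s - e))
        have h3 : |x - s - (x - (s - e))| = e := by
          rw [show x - s - (x - (s - e)) = -e by ring, abs_neg, abs_of_pos he0]
        rw [h3] at h2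
        have h4 := (abs_le.1 h2).2
        have h5 : L * e ≤ m := by
          rw [le_div_iff₀ (by linarith)] at he3
          nlinarith
        linarith
  have := csInf_le hbdd hin
  linarith

end part3

section part4

structure Ker (ρ : ℝ → ℝ) (R : ℝ) : Prop where
  cont : Continuous ρ
  nn : ∀ y, 0 ≤ ρ y
  R0 : 0 < R
  supp : ∀ y, R ≤ |y| → ρ y = 0
  pt : ∃ y > 0, 0 < ρ y

variable {ρ : ℝ → ℝ} {R : ℝ}

lemma Ker.cs (hρ : Ker ρ R) : HasCompactSupport ρ := by
  refine HasCompactSupport.intro (isCompact_Icc (a := -R) (b := R)) (fun y hy => hρ.supp y ?_)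
  by_contra h
  apply hy
  rw [not_le, abs_lt] at h
  exact ⟨h.1.le, h.2.le⟩

lemma Ker.intg (hρ : Ker ρ R) {F : ℝ → ℝ} (hF : Continuous F) : Integrable (fun y => ρ y * F y) :=
  (hρ.cont.mul hF).integrable_of_hasCompactSupport hρ.cs.mul_right

lemma Ker.mono (hρ : Ker ρ R) {F G : ℝ → ℝ} (hF : Continuous F) (hG : Continuous G)
    (h : ∀ y, |y| < R → F y ≤ G y) : ∫ y, ρ y * F y ≤ ∫ y, ρ y * G y := by
  refine integral_mono (hρ.intg hF) (hρ.intg hG) (fun y => ?_)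
  rcases lt_or_ge |y| R with hy | hy
  · exact mul_le_mul_of_nonneg_left (h y hy) (hρ.nn y)
  · simp [hρ.supp y hy]

lemma Ker.pos (hρ : Ker ρ R) {F : ℝ → ℝ} (hF : Continuous F) (hF0 : ∀ y, 0 ≤ F y) (hF1 : ∀ y, 0 < y → 0 < F y) :
    0 < ∫ y, ρ y * F y := by
  obtain ⟨y, hy, hp⟩ := hρ.pt
  exact integral_pos_of_integrable_nonneg_nonzero (x := y) (hρ.cont.mul hF) (hρ.intg hF)
    (fun y => mul_nonneg (hρ.nn y) (hF0 y)) (mul_pos hp (hF1 y hy)).ne'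

lemma Ker.deriv (hρ : Ker ρ R) {G G' : ℝ → ℝ → ℝ} (hG : ∀ x y, HasDerivAt (fun x => G x y) (G' x y) x)
    (hc : ∀ x, Continuous (G x)) (hc' : Continuous (fun p : ℝ × ℝ => G' p.1 p.2)) (x₀ : ℝ) :
    HasDerivAt (fun x => ∫ y, ρ y * G x y) (∫ y, ρ y * G' x₀ y) x₀ := by
  obtain ⟨C, hC⟩ := ((isCompact_closedBall x₀ 1).prod (isCompact_Icc (a := -R) (b := R))).exists_bound_of_continuousOn
    hc'.continuousOn
  have hGc : ∀ x, Continuous (G' x) := fun x => hc'.comp (by fun_prop : Continuous fun y : ℝ => (x, y))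
  refine (hasDerivAt_integral_of_dominated_loc_of_deriv_le (μ := volume) (F := fun x y => ρ y * G x y)
    (F' := fun x y => ρ y * G' x y) (bound := fun y => ρ y * C) (s := Metric.ball x₀ 1) (Metric.ball_mem_nhds _ one_pos)
    (Eventually.of_forall fun x => (hρ.cont.mul (hc x)).aestronglyMeasurable) (hρ.intg (hc x₀))
    (hρ.cont.mul (hGc x₀)).aestronglyMeasurable ?_ (hρ.intg continuous_const) ?_).2
  · refine Eventually.of_forall fun y x hx => ?_
    rcases lt_or_ge |y| R with hy | hy
    · rw [norm_mul, Real.norm_of_nonneg (hρ.nn y)]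
      refine mul_le_mul_of_nonneg_left (hC (x, y) ⟨Metric.ball_subset_closedBall hx, ?_⟩) (hρ.nn y)
      rw [abs_lt] at hy; exact ⟨hy.1.le, hy.2.le⟩
    · simp [hρ.supp y hy]
  · exact Eventually.of_forall fun y x hx => (hG x y).const_mul _

def Z1 (Z : ℝ → ℝ) (x : ℝ) : ℝ := ∫ t in (0:ℝ)..x, Z t

def Ph (ρ Z : ℝ → ℝ) (ξ : ℝ) : ℝ := ∫ y, ρ y * (Z1 (Z1 Z) (ξ - y) - Z1 (Z1 Z) ξ + y * Z1 Z ξ)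

def II (ρ Z : ℝ → ℝ) (ξ : ℝ) : ℝ := ∫ y, ρ y * (Z1 Z (ξ - y) - Z1 Z ξ + y * Z ξ)

lemma Z1_deriv {Z : ℝ → ℝ} (hZ : Continuous Z) (x : ℝ) : HasDerivAt (Z1 Z) (Z x) x :=
  intervalIntegral.integral_hasDerivAt_right (hZ.intervalIntegrable _ _) (hZ.stronglyMeasurableAtFilter _ _) hZ.continuousAt

lemma Z1_cont {Z : ℝ → ℝ} (hZ : Continuous Z) : Continuous (Z1 Z) :=
  continuous_iff_continuousAt.2 fun x => (Z1_deriv hZ x).continuousAt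

lemma Z1_neg (Z : ℝ → ℝ) : Z1 (fun x => - Z x) = fun x => - Z1 Z x := by
  ext x; simp [Z1]

lemma Ph_neg (Z : ℝ → ℝ) (x : ℝ) : Ph ρ (fun x => - Z x) x = - Ph ρ Z x := by
  unfold Ph
  rw [Z1_neg, Z1_neg, ← integral_neg]
  congr 1; ext y; ring

lemma Ph_deriv (hρ : Ker ρ R) {Z : ℝ → ℝ} (hZ : Continuous Z) (x : ℝ) : HasDerivAt (Ph ρ Z) (II ρ Z x) x := by
  have h1 := Z1_cont hZ
  have h2 := Z1_cont h1
  refine hρ.deriv (G := fun ξ y => Z1 (Z1 Z) (ξ - y) - Z1 (Z1 Z) ξ + y * Z1 Z ξ)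
    (G' := fun ξ y => Z1 Z (ξ - y) - Z1 Z ξ + y * Z ξ) (fun x y => ?_) (fun x => by fun_prop) (by fun_prop) x
  refine HasDerivAt.add (HasDerivAt.sub ?_ (Z1_deriv h1 x)) ((Z1_deriv hZ x).const_mul y)
  exact HasDerivAt.comp_sub_const x y (Z1_deriv h1 (x - y))

lemma II_eq (hρ : Ker ρ R) {Z : ℝ → ℝ} (hZ : Continuous Z) (x : ℝ) :
    II ρ Z x = cv ρ (Z1 Z) x - (∫ y, ρ y) * Z1 Z x + (∫ y, ρ y * y) * Z x := by
  have h1 := Z1_cont hZ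
  unfold II cv
  have i1 : Integrable (fun y => ρ y * Z1 Z (x - y)) := hρ.intg (by fun_prop)
  have i2 : Integrable (fun y => ρ y * Z1 Z x) := hρ.intg (by fun_prop)
  have i3 : Integrable (fun y => ρ y * y * Z x) := (hρ.intg continuous_id).mul_const _
  have e : ∀ y, ρ y * (Z1 Z (x - y) - Z1 Z x + y * Z x) = ρ y * Z1 Z (x - y) - ρ y * Z1 Z x + ρ y * y * Z x := by
    intro y; ring
  have i4 : Integrable (fun y => ρ y * Z1 Z (x - y) - ρ y * Z1 Z x) := i1.sub i2
  rw [integral_congr_ae (Eventually.of_forall e), integral_add i4 i3, integral_sub i1 i2,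
    integral_mul_const, integral_mul_const]

lemma cv_Z1_deriv (hρ : Ker ρ R) {Z : ℝ → ℝ} (hZ : Continuous Z) (x : ℝ) :
    HasDerivAt (cv ρ (Z1 Z)) (cv ρ Z x) x := by
  have h1 := Z1_cont hZ
  refine hρ.deriv (G := fun ξ y => Z1 Z (ξ - y)) (G' := fun ξ y => Z (ξ - y)) (fun x y => ?_) (fun x => by fun_prop)
    (by fun_prop) x
  exact HasDerivAt.comp_sub_const x y (Z1_deriv hZ (x - y))

lemma II_deriv (hρ : Ker ρ R) {Z : ℝ → ℝ} (hZ : Continuous Z) {x Z' : ℝ} (hd : HasDerivAt Z Z' x) :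
    HasDerivAt (II ρ Z) (cv ρ Z x - (∫ y, ρ y) * Z x + (∫ y, ρ y * y) * Z') x := by
  rw [funext (II_eq hρ hZ)]
  exact ((cv_Z1_deriv hρ hZ x).sub ((Z1_deriv hZ x).const_mul _)).add (hd.const_mul _)

lemma II_cont (hρ : Ker ρ R) {Z : ℝ → ℝ} (hZ : Continuous Z) : Continuous (II ρ Z) := by
  rw [funext (II_eq hρ hZ)]
  have h1 := Z1_cont hZ
  have : Continuous (cv ρ (Z1 Z)) := continuous_iff_continuousAt.2 fun x => (cv_Z1_deriv hρ hZ x).continuousAt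
  fun_prop

lemma Z1_sub_ge {Z : ℝ → ℝ} (hZ : Continuous Z) {b s t : ℝ} (hst : s ≤ t) (h : ∀ u ∈ Icc s t, b ≤ Z u) :
    b * (t - s) ≤ Z1 Z t - Z1 Z s := by
  unfold Z1
  rw [intervalIntegral.integral_interval_sub_left (hZ.intervalIntegrable _ _) (hZ.intervalIntegrable _ _)]
  have := intervalIntegral.integral_mono_on hst (f := fun _ => b) (g := Z) (μ := volume) (by simp)
    (hZ.intervalIntegrable _ _) h
  simp at this; linarith

lemma AA_ge {Z : ℝ → ℝ} (hZ : Continuous Z) {b ξ y : ℝ} (h : ∀ u ∈ uIcc (ξ - y) ξ, b ≤ Z u) :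
    b * y ^ 2 / 2 ≤ Z1 (Z1 Z) (ξ - y) - Z1 (Z1 Z) ξ + y * Z1 Z ξ := by
  have h1 := Z1_cont hZ
  have hd : ∀ t, HasDerivAt (fun t => Z1 (Z1 Z) t - b * t ^ 2 / 2) (Z1 Z t - b * t) t := by
    intro t
    have := (Z1_deriv h1 t).sub (((hasDerivAt_pow 2 t).const_mul b).div_const 2)
    refine this.congr_deriv ?_
    push_cast
    ring
  have hc : ∀ s : Set ℝ, ContinuousOn (fun t => Z1 (Z1 Z) t - b * t ^ 2 / 2) s := fun s t _ =>
    (hd t).continuousAt.continuousWithinAt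
  rcases lt_trichotomy y 0 with hy | hy | hy
  · obtain ⟨τ, hτ, he⟩ := exists_hasDerivAt_eq_slope (fun t => Z1 (Z1 Z) t - b * t ^ 2 / 2) (fun t => Z1 Z t - b * t)
      (show ξ < ξ - y by linarith) (hc _) (fun t _ => hd t)
    rw [uIcc_of_ge (by linarith)] at h
    have h3 := Z1_sub_ge hZ hτ.1.le (fun u hu => h u ⟨hu.1, hu.2.trans hτ.2.le⟩)
    rw [eq_div_iff (by linarith)] at he
    nlinarith
  · subst hy; simp
  · obtain ⟨τ, hτ, he⟩ := exists_hasDerivAt_eq_slope (fun t => Z1 (Z1 Z) t - b * t ^ 2 / 2) (fun t => Z1 Z t - b * t)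
      (show ξ - y < ξ by linarith) (hc _) (fun t _ => hd t)
    rw [uIcc_of_le (by linarith)] at h
    have h3 := Z1_sub_ge hZ hτ.2.le (fun u hu => h u ⟨hτ.1.le.trans hu.1, hu.2⟩)
    rw [eq_div_iff (by linarith)] at he
    nlinarith

lemma uIcc_sub_mem {ξ y R u : ℝ} (hy : |y| < R) (hu : u ∈ uIcc (ξ - y) ξ) : ξ - R ≤ u ∧ u ≤ ξ + R := by
  rw [abs_lt] at hy
  rcases le_total (ξ - y) ξ with h | h
  · rw [uIcc_of_le h] at hu; constructor <;> linarith [hu.1, hu.2]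
  · rw [uIcc_of_ge h] at hu; constructor <;> linarith [hu.1, hu.2]

lemma Ph_ge (hρ : Ker ρ R) {Z : ℝ → ℝ} (hZ : Continuous Z) {b ξ : ℝ} (h : ∀ u, ξ - R ≤ u → u ≤ ξ + R → b ≤ Z u) :
    b * ((∫ y, ρ y * y ^ 2) / 2) ≤ Ph ρ Z ξ := by
  have h1 := Z1_cont hZ
  have h2 := Z1_cont h1
  have e : b * ((∫ y, ρ y * y ^ 2) / 2) = ∫ y, ρ y * (b * y ^ 2 / 2) := by
    rw [mul_div_assoc', ← integral_const_mul, ← integral_div]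
    congr 1; ext y; ring
  rw [e]
  refine hρ.mono (by fun_prop) (by fun_prop) (fun y hy => AA_ge hZ (fun u hu => ?_))
  have := uIcc_sub_mem hy hu
  exact h u this.1 this.2

lemma Ph_le (hρ : Ker ρ R) {Z : ℝ → ℝ} (hZ : Continuous Z) {b ξ : ℝ} (h : ∀ u, ξ - R ≤ u → u ≤ ξ + R → Z u ≤ b) :
    Ph ρ Z ξ ≤ b * ((∫ y, ρ y * y ^ 2) / 2) := by
  have := Ph_ge hρ (Z := fun x => - Z x) hZ.neg (b := -b) (ξ := ξ) (fun u h1 h2 => neg_le_neg (h u h1 h2))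
  rw [Ph_neg] at this
  linarith

lemma Ph_ge' (hρ : Ker ρ R) {Z : ℝ → ℝ} (hZ : Continuous Z) {b ξ : ℝ} (h0 : ∀ u, 0 ≤ Z u)
    (h : ∀ u, ξ - R ≤ u → u ≤ ξ → b ≤ Z u) :
    b * ((∫ y, ρ y * (max y 0) ^ 2) / 2) ≤ Ph ρ Z ξ := by
  have h1 := Z1_cont hZ
  have h2 := Z1_cont h1
  have e : b * ((∫ y, ρ y * (max y 0) ^ 2) / 2) = ∫ y, ρ y * (b * (max y 0) ^ 2 / 2) := by
    rw [mul_div_assoc', ← integral_const_mul, ← integral_div]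
    congr 1; ext y; ring
  rw [e]
  refine hρ.mono (by fun_prop) (by fun_prop) (fun y hy => ?_)
  rcases le_total y 0 with h5 | h5
  · have := AA_ge hZ (b := 0) (ξ := ξ) (y := y) (fun u _ => h0 u)
    rw [max_eq_right h5]; simpa using this
  · rw [max_eq_left h5]
    refine AA_ge hZ (fun u hu => ?_)
    have := uIcc_sub_mem hy hu
    rw [uIcc_of_le (by linarith)] at hu
    exact h u this.1 hu.2

/-- growth estimate -/
lemma growth {Φ I r : ℝ → ℝ} {ε x₀ m P D : ℝ} (hε : 0 < ε) (hΦ : ∀ x, HasDerivAt Φ (I x) x) (hIc : Continuous I)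
    (hI : ∀ x ∈ Ioo x₀ m, HasDerivAt I (-r x) x) (hr : ∀ x ∈ Ioo x₀ m, |r x| ≤ ε ^ 2 * Φ x)
    (hP : I x₀ + ε * Φ x₀ ≤ P) (hP0 : 0 ≤ P) (hD : Φ x₀ ≤ D) (hD0 : 0 ≤ D) :
    ∀ x ∈ Icc x₀ m, Φ x ≤ (D + P / (2 * ε)) * Real.exp (ε * (x - x₀)) := by
  have hΦc : Continuous Φ := continuous_iff_continuousAt.2 fun x => (hΦ x).continuousAt
  have he : ∀ k x : ℝ, HasDerivAt (fun x => Real.exp (k * (x - x₀))) (Real.exp (k * (x - x₀)) * k) x := by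
    intro k x
    have := (((hasDerivAt_id x).sub_const x₀).const_mul k).exp
    simpa using this
  have hp : ∀ x ∈ Icc x₀ m, I x + ε * Φ x ≤ P * Real.exp (ε * (x - x₀)) := by
    have hanti : AntitoneOn (fun x => (I x + ε * Φ x) * Real.exp (-ε * (x - x₀))) (Icc x₀ m) := by
      refine antitoneOn_of_hasDerivWithinAt_nonpos (f' := fun x => (-r x + ε * I x) * Real.exp (-ε * (x - x₀)) +
        (I x + ε * Φ x) * (Real.exp (-ε * (x - x₀)) * -ε)) (convex_Icc _ _) (by fun_prop) (fun x hx => ?_) (fun x hx => ?_)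
      · rw [interior_Icc] at hx
        exact (((hI x hx).add ((hΦ x).const_mul ε)).mul (he (-ε) x)).hasDerivWithinAt
      · rw [interior_Icc] at hx
        have h1 := hr x hx
        have h2 := neg_abs_le (r x)
        have : (-r x + ε * I x) * Real.exp (-ε * (x - x₀)) + (I x + ε * Φ x) * (Real.exp (-ε * (x - x₀)) * -ε)
          = (-r x - ε ^ 2 * Φ x) * Real.exp (-ε * (x - x₀)) := by ring
        rw [this]
        exact mul_nonpos_of_nonpos_of_nonneg (by linarith) (Real.exp_pos _).le
    intro x hx
    have := hanti ⟨le_rfl, hx.1.trans hx.2⟩ hx hx.1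
    simp only [sub_self, mul_zero, Real.exp_zero, mul_one] at this
    have h2 : (I x + ε * Φ x) * Real.exp (-ε * (x - x₀)) ≤ P := this.trans hP
    rw [show -ε * (x - x₀) = -(ε * (x - x₀)) by ring, Real.exp_neg, ← div_eq_mul_inv, div_le_iff₀ (Real.exp_pos _)] at h2
    exact h2
  have hanti : AntitoneOn (fun x => Φ x * Real.exp (ε * (x - x₀)) - P / (2 * ε) * Real.exp ((2 * ε) * (x - x₀))) (Icc x₀ m) := by
    refine antitoneOn_of_hasDerivWithinAt_nonpos (f' := fun x => (I x * Real.exp (ε * (x - x₀)) +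
        Φ x * (Real.exp (ε * (x - x₀)) * ε)) - P / (2 * ε) * (Real.exp ((2 * ε) * (x - x₀)) * (2 * ε)))
        (convex_Icc _ _) (by fun_prop) (fun x hx => ?_) (fun x hx => ?_)
    · exact (((hΦ x).mul (he ε x)).sub ((he (2 * ε) x).const_mul _)).hasDerivWithinAt
    · rw [interior_Icc] at hx
      have h1 := mul_le_mul_of_nonneg_right (hp x ⟨hx.1.le, hx.2.le⟩) (Real.exp_pos (ε * (x - x₀))).le
      have h2 : Real.exp ((2 * ε) * (x - x₀)) = Real.exp (ε * (x - x₀)) * Real.exp (ε * (x - x₀)) := by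
        rw [← Real.exp_add]; ring_nf
      have h3 : P / (2 * ε) * (Real.exp ((2 * ε) * (x - x₀)) * (2 * ε)) = P * Real.exp (ε * (x - x₀)) * Real.exp (ε * (x - x₀)) := by
        rw [h2]; field_simp
      rw [h3]; linarith
  intro x hx
  have h1 := hanti ⟨le_rfl, hx.1.trans hx.2⟩ hx hx.1
  simp only [sub_self, mul_zero, Real.exp_zero, mul_one] at h1
  have h2 : Real.exp ((2 * ε) * (x - x₀)) = Real.exp (ε * (x - x₀)) * Real.exp (ε * (x - x₀)) := by
    rw [← Real.exp_add]; ring_nf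
  rw [h2] at h1
  set E := Real.exp (ε * (x - x₀)) with hE
  have hE1 : 1 ≤ E := Real.one_le_exp (mul_nonneg hε.le (by linarith [hx.1]))
  have hq : 0 ≤ P / (2 * ε) := by positivity
  have h4 : Φ x * E ≤ ((D + P / (2 * ε)) * E) * E := by
    nlinarith [mul_nonneg hD0 (show 0 ≤ E * E - 1 by nlinarith)]
  exact le_of_mul_le_mul_right h4 (by linarith)

end part4

section part5

lemma int_decay {I r : ℝ → ℝ} {k C x₀ m : ℝ} (hk : 0 < k) (hIc : Continuous I)
    (hI : ∀ x ∈ Ioo x₀ m, HasDerivAt I (-r x) x) (hr : ∀ x ∈ Ioo x₀ m, |r x| ≤ C * Real.exp (-k * x))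
    (hC : 0 ≤ C) {ξ ξ' : ℝ} (h1 : x₀ ≤ ξ) (h2 : ξ ≤ ξ') (h3 : ξ' ≤ m) :
    |I ξ - I ξ'| ≤ C / k * Real.exp (-k * ξ) := by
  have he : ∀ x : ℝ, HasDerivAt (fun x => C / k * Real.exp (-k * x)) (-(C * Real.exp (-k * x))) x := by
    intro x
    have := (((hasDerivAt_id x).const_mul (-k)).exp).const_mul (C / k)
    refine this.congr_deriv ?_
    simp only [id]
    field_simp
  have hsub : Ioo ξ ξ' ⊆ Ioo x₀ m := Ioo_subset_Ioo h1 h3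
  have hpos : 0 ≤ C / k * Real.exp (-k * ξ') := by positivity
  have ha : AntitoneOn (fun x => I x + C / k * Real.exp (-k * x)) (Icc ξ ξ') := by
    refine antitoneOn_of_hasDerivWithinAt_nonpos (f' := fun x => -r x + -(C * Real.exp (-k * x))) (convex_Icc _ _)
      (by fun_prop) (fun x hx => ?_) (fun x hx => ?_)
    · rw [interior_Icc] at hx
      exact ((hI x (hsub hx)).add (he x)).hasDerivWithinAt
    · rw [interior_Icc] at hx
      have := hr x (hsub hx)
      have h5 := neg_abs_le (r x)
      linarith
  have hb : MonotoneOn (fun x => I x - C / k * Real.exp (-k * x)) (Icc ξ ξ') := by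
    refine monotoneOn_of_hasDerivWithinAt_nonneg (f' := fun x => -r x - -(C * Real.exp (-k * x))) (convex_Icc _ _)
      (by fun_prop) (fun x hx => ?_) (fun x hx => ?_)
    · rw [interior_Icc] at hx
      exact ((hI x (hsub hx)).sub (he x)).hasDerivWithinAt
    · rw [interior_Icc] at hx
      have := hr x (hsub hx)
      have h5 := le_abs_self (r x)
      linarith
  have h4 := ha ⟨le_rfl, h2⟩ ⟨h2, le_rfl⟩ h2
  have h5 := hb ⟨le_rfl, h2⟩ ⟨h2, le_rfl⟩ h2
  simp only at h4 h5
  rw [abs_le]; constructor <;> linarith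

lemma cv_lim {ρ : ℝ → ℝ} {R : ℝ} (hρ : Ker ρ R) {Z : ℝ → ℝ} (hZ : Continuous Z) {B : ℝ}
    (h : Tendsto Z atTop (nhds B)) : Tendsto (cv ρ Z) atTop (nhds ((∫ y, ρ y) * B)) := by
  have ha : 0 ≤ ∫ y, ρ y := integral_nonneg hρ.nn
  rw [Metric.tendsto_atTop]
  intro ε hε
  obtain ⟨X, hX⟩ := Metric.tendsto_atTop.1 h (ε / ((∫ y, ρ y) + 1)) (by positivity)
  refine ⟨X + R, fun x hx => ?_⟩
  have hb : ∀ b, ∫ y, ρ y * b = (∫ y, ρ y) * b := fun b => integral_mul_const _ _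
  have h1 : cv ρ Z x ≤ (∫ y, ρ y) * (B + ε / ((∫ y, ρ y) + 1)) := by
    rw [← hb]
    refine hρ.mono (by fun_prop) (by fun_prop) (fun y hy => ?_)
    have := hX (x - y) (by have := (abs_lt.1 hy).2; linarith)
    rw [Real.dist_eq, abs_lt] at this; linarith
  have h2 : (∫ y, ρ y) * (B - ε / ((∫ y, ρ y) + 1)) ≤ cv ρ Z x := by
    rw [← hb]
    refine hρ.mono (by fun_prop) (by fun_prop) (fun y hy => ?_)
    have := hX (x - y) (by have := (abs_lt.1 hy).2; linarith)
    rw [Real.dist_eq, abs_lt] at this; linarith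
  have h3 : (∫ y, ρ y) * (ε / ((∫ y, ρ y) + 1)) < ε := by
    rw [mul_div_assoc', div_lt_iff₀ (by positivity)]; nlinarith
  rw [Real.dist_eq, abs_lt]
  constructor <;> linarith

lemma limsup_bound {ρ : ℝ → ℝ} {R : ℝ} (hρ : Ker ρ R) {Z r : ℝ → ℝ} (hZ : Continuous Z) {c : ℝ} (hc : 0 < c)
    (ha : 0 < ∫ y, ρ y) (hr : Tendsto r atTop (nhds 0))
    (hd : ∀ᶠ x in atTop, HasDerivAt Z (((∫ y, ρ y) * Z x - cv ρ Z x - r x) / c) x)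
    {Bd : ℝ} (hBd : ∀ᶠ x in atTop, |Z x| ≤ Bd) {Φ : ℝ} (hΦ : Tendsto (Ph ρ Z) atTop (nhds Φ)) :
    ∀ ε > 0, ∀ᶠ x in atTop, Z x ≤ Φ / ((∫ y, ρ y * y ^ 2) / 2) + ε := by
  set a := ∫ y, ρ y with hadef
  set σ := (∫ y, ρ y * y ^ 2) / 2 with hσ
  have hσ0 : 0 < σ := by
    have := hρ.pos (F := fun y => y ^ 2) (by fun_prop) (fun y => by positivity) (fun y hy => by positivity)
    positivity
  set S : Set ℝ := {b | ∀ᶠ x in atTop, Z x ≤ b} with hS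
  have hne : S.Nonempty := ⟨Bd, hBd.mono fun x hx => (le_abs_self _).trans hx⟩
  have hbb : BddBelow S := by
    refine ⟨-Bd, fun b hb => ?_⟩
    obtain ⟨x, h1, h2⟩ := (Eventually.and hb hBd).exists
    have := neg_abs_le (Z x); linarith
  set M := sInf S with hM
  set E := Real.exp (a / c * (2 * R)) with hE
  have hE0 : 0 < E := Real.exp_pos _
  have hR0 := hρ.R0
  have key : ∀ e > 0, (M - 3 * e * E) * σ ≤ Φ := by
    intro e he
    have hup : ∀ᶠ x in atTop, Z x ≤ M + e := by
      obtain ⟨b, hb, hb2⟩ := exists_lt_of_csInf_lt hne (show sInf S < M + e by linarith)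
      exact Eventually.mono hb fun x hx => hx.trans hb2.le
    have hrs : ∀ᶠ x in atTop, |r x| ≤ a * e := by
      have := hr.eventually (Metric.closedBall_mem_nhds 0 (mul_pos ha he))
      exact this.mono fun x hx => by simpa using hx
    obtain ⟨X, hX⟩ := eventually_atTop.1 (hup.and (hrs.and hd))
    have hfreq : ∃ᶠ x in atTop, ¬ (Z x ≤ M - e) := by
      intro hcon
      have : M - e ∈ S := by
        refine hcon.mono fun x hx => ?_
        simpa using hx
      have := csInf_le hbb this
      linarith
    have hΦ' : Tendsto (fun x => Ph ρ Z (x + R)) atTop (nhds Φ) :=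
      hΦ.comp (tendsto_atTop_add_const_right _ _ tendsto_id)
    refine ge_of_tendsto_of_frequently hΦ' ?_
    refine (hfreq.and_eventually (eventually_ge_atTop (X + R))).mono ?_
    rintro ξ ⟨h1, h2⟩
    rw [not_le] at h1
    have hanti : AntitoneOn (fun x => (M + 2 * e - Z x) * Real.exp (-(a / c) * (x - ξ))) (Icc ξ (ξ + 2 * R)) := by
      refine antitoneOn_of_hasDerivWithinAt_nonpos (f' := fun x => (0 - (a * Z x - cv ρ Z x - r x) / c) *
          Real.exp (-(a / c) * (x - ξ)) + (M + 2 * e - Z x) * (Real.exp (-(a / c) * (x - ξ)) * -(a / c)))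
        (convex_Icc _ _) (by fun_prop) (fun x hx => ?_) (fun x hx => ?_)
      · rw [interior_Icc] at hx
        have hh := (hX x (by linarith [hx.1])).2.2
        have he : HasDerivAt (fun x => Real.exp (-(a / c) * (x - ξ))) (Real.exp (-(a / c) * (x - ξ)) * -(a / c)) x := by
          have := (((hasDerivAt_id x).sub_const ξ).const_mul (-(a / c))).exp
          simpa using this
        exact (((hasDerivAt_const x (M + 2 * e)).sub hh).mul he).hasDerivWithinAt
      · rw [interior_Icc] at hx
        have h5 := (abs_le.1 (hX x (by linarith [hx.1])).2.1).2
        have h6 : cv ρ Z x ≤ a * (M + e) := by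
          rw [hadef, ← integral_mul_const]
          refine hρ.mono (by fun_prop) (by fun_prop) (fun y hy => ?_)
          exact (hX (x - y) (by have := (abs_lt.1 hy).2; linarith [hx.1])).1
        have e1 : (0 - (a * Z x - cv ρ Z x - r x) / c) *
          Real.exp (-(a / c) * (x - ξ)) + (M + 2 * e - Z x) * (Real.exp (-(a / c) * (x - ξ)) * -(a / c))
          = ((cv ρ Z x + r x - a * (M + 2 * e)) / c) * Real.exp (-(a / c) * (x - ξ)) := by
          field_simp; ring
        rw [e1]
        refine mul_nonpos_of_nonpos_of_nonneg (div_nonpos_of_nonpos_of_nonneg ?_ hc.le) (Real.exp_pos _).le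
        nlinarith
    refine Ph_ge hρ hZ (fun u hu1 hu2 => ?_)
    have hu : u ∈ Icc ξ (ξ + 2 * R) := ⟨by linarith, by linarith⟩
    have h7 := hanti ⟨le_rfl, by linarith⟩ hu hu.1
    simp only [sub_self, mul_zero, Real.exp_zero, mul_one] at h7
    have h8 : (M + 2 * e - Z u) * Real.exp (-(a / c) * (u - ξ)) ≤ 3 * e := by linarith
    rw [neg_mul, Real.exp_neg, ← div_eq_mul_inv, div_le_iff₀ (Real.exp_pos _)] at h8
    have h9 : Real.exp (a / c * (u - ξ)) ≤ E := by
      apply Real.exp_le_exp.2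
      gcongr
      linarith [hu.2]
    have h10 : 3 * e * Real.exp (a / c * (u - ξ)) ≤ 3 * e * E := by gcongr
    linarith
  have hMle : M * σ ≤ Φ := by
    apply le_of_forall_pos_le_add
    intro d hd
    have := key (d / (3 * E * σ)) (by positivity)
    have e1 : (M - 3 * (d / (3 * E * σ)) * E) * σ = M * σ - d := by field_simp
    linarith
  intro ε hε
  obtain ⟨b, hb, hb2⟩ := exists_lt_of_csInf_lt hne (show sInf S < M + ε by linarith)
  have : M ≤ Φ / σ := by rw [le_div_iff₀ hσ0]; exact hMle
  exact Eventually.mono hb fun x hx => by linarith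

lemma Z_conv {ρ : ℝ → ℝ} {R : ℝ} (hρ : Ker ρ R) {Z r : ℝ → ℝ} (hZ : Continuous Z) {c : ℝ} (hc : 0 < c)
    (ha : 0 < ∫ y, ρ y) (hr : Tendsto r atTop (nhds 0))
    (hd : ∀ᶠ x in atTop, HasDerivAt Z (((∫ y, ρ y) * Z x - cv ρ Z x - r x) / c) x)
    {Bd : ℝ} (hBd : ∀ᶠ x in atTop, |Z x| ≤ Bd) {Φ : ℝ} (hΦ : Tendsto (Ph ρ Z) atTop (nhds Φ)) :
    Tendsto Z atTop (nhds (Φ / ((∫ y, ρ y * y ^ 2) / 2))) := by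
  have h1 := limsup_bound hρ hZ hc ha hr hd hBd hΦ
  have h2 := limsup_bound hρ (Z := fun x => - Z x) (r := fun x => - r x) hZ.neg hc ha (by simpa using hr.neg)
    (hd.mono fun x hx => by
      refine hx.neg.congr_deriv ?_
      have : cv ρ (fun x => - Z x) x = - cv ρ Z x := by
        unfold cv; rw [← integral_neg]; congr 1; ext y; ring
      rw [this]; ring)
    (Bd := Bd) (by simpa using hBd) (Φ := -Φ) (by
      have : Ph ρ (fun x => - Z x) = fun x => - Ph ρ Z x := funext fun x => Ph_neg Z x
      rw [this]; exact hΦ.neg)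
  rw [Metric.tendsto_nhds]
  intro ε hε
  filter_upwards [h1 (ε / 2) (by linarith), h2 (ε / 2) (by linarith)] with x h3 h4
  rw [neg_div] at h4
  rw [Real.dist_eq, abs_lt]; constructor <;> linarith

/-- concavity contradiction -/
lemma no_touch {ρ : ℝ → ℝ} {R : ℝ} (hρ : Ker ρ R) {Z r : ℝ → ℝ} (hZ : Continuous Z) {c : ℝ} (hc : 0 < c)
    (hcc : (∫ y, ρ y * y) = c) (h0 : ∀ x, 0 ≤ Z x) (hlim : Tendsto Z atTop (nhds 0))
    (hd : ∀ᶠ x in atTop, HasDerivAt Z (((∫ y, ρ y) * Z x - cv ρ Z x - r x) / c) x)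
    (hr : ∀ᶠ x in atTop, 0 < r x) : False := by
  obtain ⟨X, hX⟩ := eventually_atTop.1 (hd.and hr)
  have hI : ∀ x, X ≤ x → HasDerivAt (II ρ Z) (-r x) x := by
    intro x hx
    refine (II_deriv hρ hZ (hX x hx).1).congr_deriv ?_
    rw [hcc]; field_simp; ring
  have hanti : StrictAntiOn (II ρ Z) (Ici X) := by
    refine strictAntiOn_of_deriv_neg (convex_Ici _) (II_cont hρ hZ).continuousOn (fun x hx => ?_)
    rw [interior_Ici] at hx
    rw [(hI x (le_of_lt hx)).deriv]
    have := (hX x (le_of_lt hx)).2; linarith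
  have hPc : Continuous (Ph ρ Z) := continuous_iff_continuousAt.2 fun x => (Ph_deriv hρ hZ x).continuousAt
  have hP0 : ∀ x, 0 ≤ Ph ρ Z x := fun x => by
    have := Ph_ge hρ hZ (b := 0) (ξ := x) (fun u _ _ => h0 u)
    simpa using this
  have hI0 : ∀ x, X ≤ x → 0 ≤ II ρ Z x := by
    intro x hx
    by_contra hcon
    rw [not_le] at hcon
    set d := - II ρ Z x with hdd
    have hd0 : 0 < d := by linarith
    have ha : AntitoneOn (fun t => Ph ρ Z t + d * t) (Ici x) := by
      refine antitoneOn_of_hasDerivWithinAt_nonpos (f' := fun t => II ρ Z t + d * 1) (convex_Ici _) (by fun_prop)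
        (fun t ht => ((Ph_deriv hρ hZ t).add ((hasDerivAt_id t).const_mul d)).hasDerivWithinAt) (fun t ht => ?_)
      rw [interior_Ici] at ht
      have := hanti.antitoneOn (mem_Ici.2 hx) (mem_Ici.2 (hx.trans (le_of_lt ht))) (le_of_lt ht)
      linarith
    have h1 := ha (mem_Ici.2 le_rfl) (mem_Ici.2 (show x ≤ x + (Ph ρ Z x + 1) / d by
      have : 0 ≤ (Ph ρ Z x + 1) / d := div_nonneg (by linarith [hP0 x]) hd0.le
      linarith)) (by
      have : 0 ≤ (Ph ρ Z x + 1) / d := div_nonneg (by linarith [hP0 x]) hd0.le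
      linarith)
    simp only at h1
    have h2 : d * (x + (Ph ρ Z x + 1) / d) = d * x + (Ph ρ Z x + 1) := by field_simp
    have := hP0 (x + (Ph ρ Z x + 1) / d)
    linarith
  have hmono : MonotoneOn (Ph ρ Z) (Ici X) := by
    refine monotoneOn_of_hasDerivWithinAt_nonneg (f' := II ρ Z) (convex_Ici _) hPc.continuousOn
      (fun t ht => (Ph_deriv hρ hZ t).hasDerivWithinAt) (fun t ht => ?_)
    rw [interior_Ici] at ht
    exact hI0 t (le_of_lt ht)
  have hP : Tendsto (Ph ρ Z) atTop (nhds 0) := by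
    have hσ : 0 ≤ (∫ y, ρ y * y ^ 2) / 2 := by
      have : 0 ≤ ∫ y, ρ y * y ^ 2 := integral_nonneg fun y => mul_nonneg (hρ.nn y) (by positivity)
      linarith
    rw [Metric.tendsto_atTop]
    intro ε hε
    obtain ⟨Y, hY⟩ := Metric.tendsto_atTop.1 hlim (ε / ((∫ y, ρ y * y ^ 2) / 2 + 1)) (by positivity)
    refine ⟨Y + R, fun x hx => ?_⟩
    have := Ph_le hρ hZ (b := ε / ((∫ y, ρ y * y ^ 2) / 2 + 1)) (ξ := x) (fun u h1 h2 => by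
      have := hY u (by linarith)
      rw [Real.dist_eq, sub_zero] at this
      exact (le_abs_self _).trans this.le)
    have h3 : ε / ((∫ y, ρ y * y ^ 2) / 2 + 1) * ((∫ y, ρ y * y ^ 2) / 2) < ε := by
      rw [div_mul_eq_mul_div, div_lt_iff₀ (by positivity)]; nlinarith
    rw [Real.dist_eq, sub_zero, abs_of_nonneg (hP0 x)]
    linarith
  have hPz : ∀ x, X ≤ x → Ph ρ Z x = 0 := by
    intro x hx
    apply le_antisymm _ (hP0 x)
    refine ge_of_tendsto hP (eventually_atTop.2 ⟨x, fun y hy => hmono (mem_Ici.2 hx) (mem_Ici.2 (hx.trans hy)) hy⟩)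
  have hIz : ∀ x, X < x → II ρ Z x = 0 := by
    intro x hx
    refine (Ph_deriv hρ hZ x).unique ?_
    refine (hasDerivAt_const x (0:ℝ)).congr_of_eventuallyEq ?_
    filter_upwards [lt_mem_nhds hx] with y hy
    exact hPz y hy.le
  have := hanti (mem_Ici.2 (show X ≤ X + 1 by linarith)) (mem_Ici.2 (show X ≤ X + 2 by linarith)) (by linarith)
  rw [hIz _ (by linarith), hIz _ (by linarith)] at this
  exact lt_irrefl _ this

end part5

section part6

def rho (J : ℝ → ℝ) (lam y : ℝ) : ℝ := J y * Real.exp (lam * y)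

def Zf (lam : ℝ) (U : ℝ → ℝ) (x : ℝ) : ℝ := Real.exp (lam * x) * U x

structure Lin (J : ℝ → ℝ) (lam c γ R : ℝ) : Prop where
  ker : Ker (rho J lam) R
  lam0 : 0 < lam
  c0 : 0 < c
  hb : (∫ y, rho J lam y * y) = c
  ha : (∫ y, rho J lam y) = c * lam + 1 - γ
  ha0 : 0 < ∫ y, rho J lam y

variable {J : ℝ → ℝ} {lam c γ R : ℝ}

lemma Zf_cont {U : ℝ → ℝ} (hU : Continuous U) : Continuous (Zf lam U) := by
  unfold Zf; fun_prop

lemma Zf_nn {U : ℝ → ℝ} (hU : Adm U) (x : ℝ) : 0 ≤ Zf lam U x := mul_nonneg (Real.exp_pos _).le (hU.2 x).1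

lemma cv_rho (U : ℝ → ℝ) (x : ℝ) : cv (rho J lam) (Zf lam U) x = Real.exp (lam * x) * cv J U x := by
  unfold cv rho Zf
  rw [← integral_const_mul]
  congr 1; ext y
  have : Real.exp (lam * x) = Real.exp (lam * y) * Real.exp (lam * (x - y)) := by
    rw [← Real.exp_add]; ring_nf
  rw [this]; ring

lemma Zf_deriv' {U : ℝ → ℝ} {s : ℝ} (hs : s ≠ 0) {x G : ℝ} (h : HasDerivAt U ((U x - cv J U x - G) / s) x) :
    HasDerivAt (Zf lam U) ((s * lam * Zf lam U x + Zf lam U x - cv (rho J lam) (Zf lam U) x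
      - Real.exp (lam * x) * G) / s) x := by
  have he : HasDerivAt (fun x => Real.exp (lam * x)) (Real.exp (lam * x) * lam) x := by
    have := ((hasDerivAt_id x).const_mul lam).exp
    simpa using this
  refine (he.mul h).congr_deriv ?_
  rw [cv_rho]; unfold Zf; field_simp; ring

lemma Zf_deriv (H : Lin J lam c γ R) {U : ℝ → ℝ} {x G : ℝ} (h : HasDerivAt U ((U x - cv J U x - G) / c) x) :
    HasDerivAt (Zf lam U) (((∫ y, rho J lam y) * Zf lam U x - cv (rho J lam) (Zf lam U) x
      - Real.exp (lam * x) * (G - γ * U x)) / c) x := by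
  refine (Zf_deriv' H.c0.ne' h).congr_deriv ?_
  rw [H.ha]; unfold Zf; ring

lemma Lin.II_deriv (H : Lin J lam c γ R) {U : ℝ → ℝ} (hU : Continuous U) {x G : ℝ}
    (h : HasDerivAt U ((U x - cv J U x - G) / c) x) :
    HasDerivAt (II (rho J lam) (Zf lam U)) (-(Real.exp (lam * x) * (G - γ * U x))) x := by
  refine (_root_.II_deriv H.ker (Zf_cont hU) (Zf_deriv H h)).congr_deriv ?_
  have := H.c0
  rw [H.hb]; field_simp; ring

def kap (J : ℝ → ℝ) (lam R : ℝ) : ℝ := Real.exp (-(lam * R)) * ((∫ y, rho J lam y * (max y 0) ^ 2) / 2)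

lemma kap_pos (H : Lin J lam c γ R) : 0 < kap J lam R := by
  have := H.ker.pos (F := fun y => (max y 0) ^ 2) (by fun_prop) (fun y => by positivity)
    (fun y hy => by rw [max_eq_left hy.le]; positivity)
  unfold kap; positivity

lemma kap_le (H : Lin J lam c γ R) {U : ℝ → ℝ} (hU : Adm U) (hUc : Continuous U) (x : ℝ) :
    kap J lam R * Zf lam U x ≤ Ph (rho J lam) (Zf lam U) x := by
  have := Ph_ge' H.ker (Zf_cont hUc) (b := Real.exp (-(lam * R)) * Zf lam U x) (ξ := x) (fun u => Zf_nn hU u)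
    (fun u h1 h2 => by
      unfold Zf
      rw [← mul_assoc, ← Real.exp_add]
      refine mul_le_mul (Real.exp_le_exp.2 ?_) (hU.1 h2) (hU.2 x).1 (Real.exp_pos _).le
      have := H.lam0
      nlinarith)
  unfold kap; linarith

lemma Ph_nn (H : Lin J lam c γ R) {U : ℝ → ℝ} (hU : Adm U) (hUc : Continuous U) (x : ℝ) :
    0 ≤ Ph (rho J lam) (Zf lam U) x :=
  (mul_nonneg (kap_pos H).le (Zf_nn hU x)).trans (kap_le H hU hUc x)

/-- bound of the nonlinear remainder -/
lemma r_bound {C : ℝ} {g U : ℝ → ℝ} (hU : Adm U)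
    (hg : ∀ w ∈ Icc (0:ℝ) 1, |g w - γ * w| ≤ C * w ^ 2) (x : ℝ) :
    |Real.exp (lam * x) * (g (U x) - γ * U x)| ≤ C * U x * Zf lam U x := by
  rw [abs_mul, abs_of_pos (Real.exp_pos _)]
  have := mul_le_mul_of_nonneg_left (hg (U x) (hU.2 x)) (Real.exp_pos (lam * x)).le
  unfold Zf; linarith

lemma U_eq {U : ℝ → ℝ} (x : ℝ) : U x = Real.exp (-(lam * x)) * Zf lam U x := by
  unfold Zf; rw [← mul_assoc, ← Real.exp_add]; simp

lemma r_bound2 (H : Lin J lam c γ R) {C : ℝ} (hC : 0 < C) {g U : ℝ → ℝ} (hU : Adm U) (hUc : Continuous U)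
    (hg : ∀ w ∈ Icc (0:ℝ) 1, |g w - γ * w| ≤ C * w ^ 2) {x Q : ℝ} (hQ : Ph (rho J lam) (Zf lam U) x ≤ Q) :
    |Real.exp (lam * x) * (g (U x) - γ * U x)| ≤ C / (kap J lam R) ^ 2 * Q ^ 2 * Real.exp (-lam * x) := by
  refine (r_bound hU hg x).trans ?_
  rw [U_eq (lam := lam) (U := U) x]
  have hk := kap_pos H
  have h1 : kap J lam R * Zf lam U x ≤ Q := (kap_le H hU hUc x).trans hQ
  have h2 : Zf lam U x ≤ Q / kap J lam R := by rw [le_div_iff₀ hk]; linarith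
  have h3 : Zf lam U x ^ 2 ≤ (Q / kap J lam R) ^ 2 := pow_le_pow_left₀ (Zf_nn hU x) h2 2
  have e1 : C * (Real.exp (-(lam * x)) * Zf lam U x) * Zf lam U x = C * Real.exp (-(lam * x)) * Zf lam U x ^ 2 := by ring
  rw [e1]
  calc C * Real.exp (-(lam * x)) * Zf lam U x ^ 2 ≤ C * Real.exp (-(lam * x)) * (Q / kap J lam R) ^ 2 := by gcongr
    _ = _ := by rw [div_pow, neg_mul]; field_simp

lemma main_est (H : Lin J lam c γ R) {C : ℝ} (hC : 0 < C) : ∃ η > 0, ∀ x₀ : ℝ, ∃ C2 > 0, ∀ (g U : ℝ → ℝ) (m : ℝ),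
    Adm U → Continuous U → (∀ w ∈ Icc (0:ℝ) 1, |g w - γ * w| ≤ C * w ^ 2) →
    (∀ x ∈ Ioo x₀ m, HasDerivAt U ((U x - cv J U x - g (U x)) / c) x) → (∀ x, x₀ ≤ x → U x ≤ η) →
    ∀ ξ ξ', x₀ ≤ ξ → ξ ≤ ξ' → ξ' ≤ m →
      |II (rho J lam) (Zf lam U) ξ - II (rho J lam) (Zf lam U) ξ'| ≤ C2 * Real.exp (-(lam / 2) * ξ) := by
  have hk := kap_pos H
  have hl := H.lam0
  set κ := kap J lam R with hκ
  set ε := lam / 4 with hε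
  have hε0 : 0 < ε := by positivity
  refine ⟨ε ^ 2 * κ / C, by positivity, fun x₀ => ?_⟩
  set E := Real.exp (lam * (x₀ + R)) with hE
  have hE0 : 0 < E := Real.exp_pos _
  set σ := (∫ y, rho J lam y * y ^ 2) / 2 with hσ
  have hσ0 : 0 ≤ σ := by
    have : 0 ≤ ∫ y, rho J lam y * y ^ 2 := integral_nonneg fun y => mul_nonneg (H.ker.nn y) (by positivity)
    positivity
  set D := E * σ with hD
  have hD0 : 0 ≤ D := by positivity
  set P0 := ∫ y, rho J lam y * (2 * E * |y|) with hP0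
  have hP00 : 0 ≤ P0 := integral_nonneg fun y => mul_nonneg (H.ker.nn y) (by positivity)
  set P := P0 + ε * D with hP
  have hPn : 0 ≤ P := by positivity
  set Q := D + P / (2 * ε) with hQ
  set C' := C / κ ^ 2 * Q ^ 2 * Real.exp (-(lam / 2) * x₀) with hC'
  have hC'0 : 0 ≤ C' := by positivity
  refine ⟨C' / (lam / 2) + 1, by positivity, ?_⟩
  intro g U m hU hUc hg hode hη ξ ξ' h1 h2 h3
  have hZc := Zf_cont (lam := lam) hUc
  have hZE : ∀ u, u ≤ x₀ + R → Zf lam U u ≤ E := by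
    intro u hu
    unfold Zf
    calc Real.exp (lam * u) * U u ≤ Real.exp (lam * (x₀ + R)) * 1 :=
          mul_le_mul (Real.exp_le_exp.2 (by gcongr)) (hU.2 u).2 (hU.2 u).1 (Real.exp_pos _).le
      _ = E := by rw [mul_one]
  have hΦD : Ph (rho J lam) (Zf lam U) x₀ ≤ D := Ph_le H.ker hZc (fun u _ hu => hZE u hu)
  have hIP : II (rho J lam) (Zf lam U) x₀ ≤ P0 := by
    have hz1 := Z1_cont hZc
    refine H.ker.mono (by fun_prop) (by fun_prop) (fun y hy => ?_)
    have hR := H.ker.R0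
    have a1 : Z1 (Zf lam U) (x₀ - y) - Z1 (Zf lam U) x₀ ≤ E * |y| := by
      rcases le_total 0 y with h | h
      · have := Z1_sub_ge hZc (b := 0) (show x₀ - y ≤ x₀ by linarith) (fun u _ => Zf_nn hU u)
        have : 0 ≤ E * |y| := by positivity
        linarith
      · have := Z1_sub_ge (Z := fun x => - Zf lam U x) hZc.neg (b := -E) (show x₀ ≤ x₀ - y by linarith)
          (fun u hu => neg_le_neg (hZE u (by have := (abs_lt.1 hy).1; linarith [hu.2])))
        rw [Z1_neg] at this
        rw [abs_of_nonpos h]; linarith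
    have a2 : y * Zf lam U x₀ ≤ |y| * E :=
      mul_le_mul (le_abs_self y) (hZE x₀ (by linarith)) (Zf_nn hU _) (abs_nonneg _)
    linarith
  have hgr := growth (Φ := Ph (rho J lam) (Zf lam U)) (I := II (rho J lam) (Zf lam U))
    (r := fun x => Real.exp (lam * x) * (g (U x) - γ * U x)) (x₀ := x₀) (m := m) (P := P) (D := D) hε0
    (fun x => Ph_deriv H.ker hZc x) (II_cont H.ker hZc) (fun x hx => H.II_deriv hUc (hode x hx))
    (fun x hx => by
      refine (r_bound hU hg x).trans ?_
      have b1 := hη x hx.1.le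
      have b2 := kap_le H hU hUc x
      have b3 : C * U x ≤ ε ^ 2 * κ := by
        rw [le_div_iff₀ hC] at b1; linarith
      calc C * U x * Zf lam U x ≤ ε ^ 2 * κ * Zf lam U x := by gcongr; exact Zf_nn hU x
        _ = ε ^ 2 * (κ * Zf lam U x) := by ring
        _ ≤ _ := by gcongr)
    (by
      have : ε * Ph (rho J lam) (Zf lam U) x₀ ≤ ε * D := by gcongr
      linarith) hPn hΦD hD0
  have hdec := int_decay (I := II (rho J lam) (Zf lam U)) (r := fun x => Real.exp (lam * x) * (g (U x) - γ * U x))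
    (k := lam / 2) (C := C') (x₀ := x₀) (m := m) (by positivity) (II_cont H.ker hZc)
    (fun x hx => H.II_deriv hUc (hode x hx))
    (fun x hx => by
      refine (r_bound2 H hC hU hUc hg (hgr x ⟨hx.1.le, hx.2.le⟩)).trans (le_of_eq ?_)
      rw [hC', mul_pow, ← Real.exp_nat_mul]
      have : Real.exp (-lam * x) * Real.exp (((2:ℕ):ℝ) * (ε * (x - x₀))) = Real.exp (-(lam / 2) * x₀) * Real.exp (-(lam / 2) * x) := by
        rw [← Real.exp_add, ← Real.exp_add]
        congr 1
        rw [hε]; push_cast; ring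
      calc _ = C / κ ^ 2 * Q ^ 2 * (Real.exp (-lam * x) * Real.exp (((2:ℕ):ℝ) * (ε * (x - x₀)))) := by ring
        _ = _ := by rw [this]; ring) hC'0 h1 h2 h3
  refine hdec.trans ?_
  have := Real.exp_pos (-(lam / 2) * ξ)
  nlinarith

lemma front_asym (H : Lin J lam c γ R) {C : ℝ} (hC : 0 < C) {g U : ℝ → ℝ} (hU : Adm U) (hUc : Continuous U)
    (hU0 : ∀ x, 0 < U x) (hUt : Tendsto U atTop (nhds 0))
    (hg : ∀ w ∈ Icc (0:ℝ) 1, |g w - γ * w| ≤ C * w ^ 2)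
    (hode : ∀ x, HasDerivAt U ((U x - cv J U x - g (U x)) / c) x)
    (hup : ∃ C2 x₀, ∀ ξ, x₀ ≤ ξ → II (rho J lam) (Zf lam U) ξ ≤ C2 * Real.exp (-(lam / 2) * ξ)) :
    ∃ B > 0, Tendsto (Zf lam U) atTop (nhds B) := by
  have hl := H.lam0
  have hkap := kap_pos H
  have hZc := Zf_cont (lam := lam) hUc
  obtain ⟨η, hη, hest⟩ := main_est H hC
  obtain ⟨C2, x₁, hup⟩ := hup
  obtain ⟨x₂, hx₂⟩ := eventually_atTop.1 (hUt.eventually (gt_mem_nhds hη))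
  set x₀ := max x₁ x₂ with hx₀
  obtain ⟨C4, hC4, hest⟩ := hest x₀
  set C3 := max C2 C4 with hC3
  have hC30 : 0 < C3 := hC4.trans_le (le_max_right _ _)
  set Φ := Ph (rho J lam) (Zf lam U) with hΦ
  set I := II (rho J lam) (Zf lam U) with hI
  have hΦd : ∀ x, HasDerivAt Φ (I x) x := fun x => Ph_deriv H.ker hZc x
  have hΦc : Continuous Φ := continuous_iff_continuousAt.2 fun x => (hΦd x).continuousAt
  have hIc : Continuous I := II_cont H.ker hZc
  have hId : ∀ x, HasDerivAt I (-(Real.exp (lam * x) * (g (U x) - γ * U x))) x := fun x => H.II_deriv hUc (hode x)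
  have hΦ0 : ∀ x, 0 ≤ Φ x := Ph_nn H hU hUc
  have hI1 : ∀ ξ, x₀ ≤ ξ → I ξ ≤ C3 * Real.exp (-(lam / 2) * ξ) := by
    intro ξ hξ
    refine (hup ξ ((le_max_left _ _).trans hξ)).trans ?_
    gcongr; exact le_max_left _ _
  have hI2 : ∀ ξ ξ', x₀ ≤ ξ → ξ ≤ ξ' → |I ξ - I ξ'| ≤ C3 * Real.exp (-(lam / 2) * ξ) := by
    intro ξ ξ' h1 h2
    refine (hest g U ξ' hU hUc hg (fun x _ => hode x) (fun x hx => (hx₂ x ((le_max_right _ _).trans hx)).le)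
      ξ ξ' h1 h2 le_rfl).trans ?_
    gcongr; exact le_max_right _ _
  have hI3 : ∀ ξ, x₀ ≤ ξ → -(C3 * Real.exp (-(lam / 2) * ξ)) ≤ I ξ := by
    intro ξ hξ
    by_contra hcon
    rw [not_le] at hcon
    set d := -(C3 * Real.exp (-(lam / 2) * ξ)) - I ξ with hd
    have hd0 : 0 < d := by linarith
    have ha : AntitoneOn (fun t => Φ t + d * t) (Ici ξ) := by
      refine antitoneOn_of_hasDerivWithinAt_nonpos (f' := fun t => I t + d * 1) (convex_Ici _) (by fun_prop)
        (fun t ht => ((hΦd t).add ((hasDerivAt_id t).const_mul d)).hasDerivWithinAt) (fun t ht => ?_)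
      rw [interior_Ici] at ht
      have := (abs_le.1 (hI2 ξ t hξ (le_of_lt ht))).1
      linarith
    have hq : 0 ≤ (Φ ξ + 1) / d := div_nonneg (by linarith [hΦ0 ξ]) hd0.le
    have h1 := ha (mem_Ici.2 le_rfl) (mem_Ici.2 (show ξ ≤ ξ + (Φ ξ + 1) / d by linarith)) (by linarith)
    simp only at h1
    have h2 : d * (ξ + (Φ ξ + 1) / d) = d * ξ + (Φ ξ + 1) := by field_simp
    have := hΦ0 (ξ + (Φ ξ + 1) / d)
    linarith
  have hexp : ∀ k : ℝ, 0 < k → Tendsto (fun x => Real.exp (-k * x)) atTop (nhds 0) := by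
    intro k hk
    exact Real.tendsto_exp_atBot.comp (tendsto_id.const_mul_atTop_of_neg (by linarith))
  have hIlim : Tendsto I atTop (nhds 0) := by
    have h1 : Tendsto (fun x => C3 * Real.exp (-(lam / 2) * x)) atTop (nhds 0) := by
      simpa using (hexp (lam / 2) (by positivity)).const_mul C3
    refine squeeze_zero_norm' ?_ h1
    filter_upwards [eventually_ge_atTop x₀] with x hx
    rw [Real.norm_eq_abs, abs_le]
    exact ⟨hI3 x hx, hI1 x hx⟩
  -- convergence of Φ
  obtain ⟨L, hL⟩ : ∃ L, Tendsto Φ atTop (nhds L) := by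
    set h : ℝ → ℝ := fun x => Φ x + C3 / (lam / 2) * Real.exp (-(lam / 2) * x) with hh
    have he : ∀ x : ℝ, HasDerivAt (fun x => C3 / (lam / 2) * Real.exp (-(lam / 2) * x)) (-(C3 * Real.exp (-(lam / 2) * x))) x := by
      intro x
      have := (((hasDerivAt_id x).const_mul (-(lam / 2))).exp).const_mul (C3 / (lam / 2))
      refine this.congr_deriv ?_
      simp only [id]
      field_simp
    have ha : AntitoneOn h (Ici x₀) := by
      refine antitoneOn_of_hasDerivWithinAt_nonpos (f' := fun t => I t + -(C3 * Real.exp (-(lam / 2) * t))) (convex_Ici _)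
        (by fun_prop) (fun t ht => ((hΦd t).add (he t)).hasDerivWithinAt) (fun t ht => ?_)
      rw [interior_Ici] at ht
      have := hI1 t (le_of_lt ht)
      linarith
    have ha2 : Antitone (fun x => h (max x x₀)) := fun x y hxy =>
      ha (mem_Ici.2 (le_max_right _ _)) (mem_Ici.2 (le_max_right _ _)) (max_le_max hxy le_rfl)
    have hbd : BddBelow (range fun x => h (max x x₀)) := by
      refine ⟨0, ?_⟩; rintro _ ⟨x, rfl⟩
      have := hΦ0 (max x x₀)
      positivity
    have h1 := tendsto_atTop_ciInf ha2 hbd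
    have h2 : Tendsto h atTop (nhds (⨅ x, h (max x x₀))) := by
      refine h1.congr' ?_
      filter_upwards [eventually_ge_atTop x₀] with x hx
      rw [max_eq_left hx]
    have h3 := h2.sub ((hexp (lam / 2) (by positivity)).const_mul (C3 / (lam / 2)))
    refine ⟨_, h3.congr fun x => ?_⟩
    simp [hh]
  have hΦpos : ∀ x, 0 < Φ x := fun x =>
    lt_of_lt_of_le (mul_pos hkap (mul_pos (Real.exp_pos _) (hU0 x))) (kap_le H hU hUc x)
  have hL0 : 0 < L := by
    refine lt_of_le_of_ne (ge_of_tendsto' hL hΦ0) (fun hcon => ?_)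
    rw [← hcon] at hL
    have e1 : ∀ᶠ x in atTop, Φ x ≤ 1 := (hL.eventually (gt_mem_nhds one_pos)).mono fun x hx => hx.le
    have e2 : ∀ᶠ x in atTop, C / (kap J lam R) ^ 2 / lam / lam * Real.exp (-lam * x) ≤ 1 / 2 := by
      have := (hexp lam hl).const_mul (C / (kap J lam R) ^ 2 / lam / lam)
      rw [mul_zero] at this
      exact (this.eventually (gt_mem_nhds (show (0:ℝ) < 1 / 2 by norm_num))).mono fun x hx => hx.le
    obtain ⟨X, hX⟩ := eventually_atTop.1 (e1.and e2)
    have key : ∀ n : ℕ, ∀ x, X ≤ x → Φ x ≤ (1 / 2) ^ n := by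
      intro n
      induction n with
      | zero => intro x hx; simpa using (hX x hx).1
      | succ n ih =>
        set D : ℝ := (1 / 2) ^ n with hD
        have hD0 : 0 < D := by positivity
        have hD1 : D ≤ 1 := pow_le_one₀ (by norm_num) (by norm_num)
        have hIb : ∀ x, X ≤ x → |I x| ≤ C / (kap J lam R) ^ 2 * D ^ 2 / lam * Real.exp (-lam * x) := by
          intro x hx
          have h1 : ∀ y, x ≤ y → |I x - I y| ≤ C / (kap J lam R) ^ 2 * D ^ 2 / lam * Real.exp (-lam * x) := by
            intro y hy
            exact int_decay hl hIc (m := y) (x₀ := x) (fun t _ => hId t)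
              (fun t ht => r_bound2 H hC hU hUc hg (ih t (hx.trans ht.1.le))) (by positivity) le_rfl hy le_rfl
          have h2 : Tendsto (fun y => |I x - I y|) atTop (nhds |I x - 0|) := (tendsto_const_nhds.sub hIlim).abs
          rw [sub_zero] at h2
          exact le_of_tendsto h2 (eventually_atTop.2 ⟨x, h1⟩)
        intro x hx
        have h1 : ∀ y, x ≤ y → |Φ x - Φ y| ≤ C / (kap J lam R) ^ 2 * D ^ 2 / lam / lam * Real.exp (-lam * x) := by
          intro y hy
          refine int_decay (r := fun t => - I t) hl hΦc (m := y) (x₀ := x) (fun t _ => by rw [neg_neg]; exact hΦd t)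
            (fun t ht => ?_) (by positivity) le_rfl hy le_rfl
          rw [abs_neg]
          exact hIb t (hx.trans ht.1.le)
        have h2 : Tendsto (fun y => |Φ x - Φ y|) atTop (nhds |Φ x - 0|) := (tendsto_const_nhds.sub hL).abs
        rw [sub_zero] at h2
        have h3 := le_of_tendsto h2 (eventually_atTop.2 ⟨x, h1⟩)
        rw [abs_of_nonneg (hΦ0 x)] at h3
        have h4 := (hX x hx).2
        calc Φ x ≤ C / (kap J lam R) ^ 2 * D ^ 2 / lam / lam * Real.exp (-lam * x) := h3
          _ = D ^ 2 * (C / (kap J lam R) ^ 2 / lam / lam * Real.exp (-lam * x)) := by ring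
          _ ≤ D ^ 2 * (1 / 2) := by gcongr
          _ ≤ D * (1 / 2) := by nlinarith
          _ = (1 / 2) ^ (n + 1) := by rw [pow_succ]
    have h1 := ge_of_tendsto' (tendsto_pow_atTop_nhds_zero_of_lt_one (by norm_num : (0:ℝ) ≤ 1 / 2) (by norm_num))
      (fun n => key n X le_rfl)
    have := hΦpos X
    linarith
  -- boundedness of Z
  have hZb : ∀ᶠ x in atTop, |Zf lam U x| ≤ (L + 1) / kap J lam R := by
    filter_upwards [hL.eventually (gt_mem_nhds (show L < L + 1 by linarith))] with x hx
    rw [abs_of_nonneg (Zf_nn hU x), le_div_iff₀ hkap]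
    have := kap_le H hU hUc x
    linarith
  have hr : Tendsto (fun x => Real.exp (lam * x) * (g (U x) - γ * U x)) atTop (nhds 0) := by
    have h1 : Tendsto (fun x => C * U x * ((L + 1) / kap J lam R)) atTop (nhds 0) := by
      have := (hUt.const_mul C).mul_const ((L + 1) / kap J lam R)
      simpa using this
    refine squeeze_zero_norm' ?_ h1
    filter_upwards [hZb] with x hx
    refine (r_bound hU hg x).trans ?_
    have := (hU.2 x).1
    gcongr
    exact (le_abs_self _).trans hx
  have hfin := Z_conv H.ker hZc H.c0 H.ha0 hr (Eventually.of_forall fun x => Zf_deriv H (hode x)) hZb hL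
  refine ⟨_, ?_, hfin⟩
  have := H.ker.pos (F := fun y => y ^ 2) (by fun_prop) (fun y => by positivity) (fun y hy => by positivity)
  positivity

/-- no such asymptotics at faster speed -/
lemma no_asym (H : Lin J lam c γ R) {C s B : ℝ} (hC : 0 < C) (hs : c < s) (hB : 0 < B) {g U : ℝ → ℝ} (hU : Adm U) (hUc : Continuous U)
    (hUt : Tendsto U atTop (nhds 0))
    (hg : ∀ w ∈ Icc (0:ℝ) 1, |g w - γ * w| ≤ C * w ^ 2)
    (hode : ∀ x, HasDerivAt U ((U x - cv J U x - g (U x)) / s) x)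
    (hlim : Tendsto (Zf lam U) atTop (nhds B)) : False := by
  have hZc := Zf_cont (lam := lam) hUc
  have hs0 : 0 < s := H.c0.trans hs
  have hl := H.lam0
  have hr : Tendsto (fun x => Real.exp (lam * x) * (g (U x) - γ * U x)) atTop (nhds 0) := by
    have h1 : Tendsto (fun x => C * U x * Zf lam U x) atTop (nhds 0) := by
      have := (hUt.const_mul C).mul hlim
      simpa using this
    exact squeeze_zero_norm (fun x => r_bound hU hg x) h1
  have hd : ∀ x, HasDerivAt (Zf lam U) ((s * lam * Zf lam U x + Zf lam U x - cv (rho J lam) (Zf lam U) x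
      - (γ * Zf lam U x + Real.exp (lam * x) * (g (U x) - γ * U x))) / s) x := by
    intro x
    refine (Zf_deriv' hs0.ne' (hode x)).congr_deriv ?_
    unfold Zf; ring
  have hlim' := (((hlim.const_mul (s * lam)).add hlim).sub (cv_lim H.ker hZc hlim)).sub ((hlim.const_mul γ).add hr) |>.div_const s
  set d := (s * lam * B + B - (∫ y, rho J lam y) * B - (γ * B + 0)) / s with hdd
  have hd0 : 0 < d := by
    rw [hdd, H.ha]
    apply div_pos _ hs0
    have : 0 < (s - c) * lam * B := mul_pos (mul_pos (by linarith) hl) hB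
    linarith
  obtain ⟨X, hX⟩ := eventually_atTop.1 (hlim'.eventually (lt_mem_nhds (show d / 2 < d by linarith)))
  have hm : MonotoneOn (fun t => Zf lam U t - d / 2 * t) (Ici X) := by
    refine monotoneOn_of_hasDerivWithinAt_nonneg (f' := fun x => (s * lam * Zf lam U x + Zf lam U x - cv (rho J lam) (Zf lam U) x
      - (γ * Zf lam U x + Real.exp (lam * x) * (g (U x) - γ * U x))) / s - d / 2 * 1) (convex_Ici _) (by fun_prop)
        (fun t ht => ((hd t).sub ((hasDerivAt_id t).const_mul _)).hasDerivWithinAt) (fun t ht => ?_)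
    rw [interior_Ici] at ht
    have := hX t (le_of_lt ht)
    linarith
  refine not_tendsto_nhds_of_tendsto_atTop (?_ : Tendsto (Zf lam U) atTop atTop) B hlim
  have h1 : Tendsto (fun t => (Zf lam U X - d / 2 * X) + d / 2 * t) atTop atTop :=
    tendsto_atTop_add_const_left _ _ (tendsto_id.const_mul_atTop (by linarith))
  refine tendsto_atTop_mono' _ ?_ h1
  filter_upwards [eventually_ge_atTop X] with t ht
  have := hm (mem_Ici.2 le_rfl) (mem_Ici.2 ht) ht
  simp only at this
  linarith

lemma II_end (H : Lin J lam c γ R) {U : ℝ → ℝ} (hU : Adm U) (hUc : Continuous U) {m : ℝ} (hm : ∀ x, m ≤ x → U x = 0) :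
    II (rho J lam) (Zf lam U) m ≤ 0 := by
  have hZc := Zf_cont (lam := lam) hUc
  have h1 := Z1_cont hZc
  have : II (rho J lam) (Zf lam U) m ≤ ∫ y, rho J lam y * 0 := by
    refine H.ker.mono (by fun_prop) (by fun_prop) (fun y hy => ?_)
    have hz : Zf lam U m = 0 := by simp [Zf, hm m le_rfl]
    rw [hz, mul_zero, add_zero]
    rcases le_total 0 y with h | h
    · have := Z1_sub_ge hZc (b := 0) (show m - y ≤ m by linarith) (fun u _ => Zf_nn hU u)
      linarith
    · have := Z1_sub_ge (Z := fun x => - Zf lam U x) hZc.neg (b := 0) (show m ≤ m - y by linarith)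
          (fun u hu => by simp [Zf, hm u hu.1])
      rw [Z1_neg] at this
      linarith
  simpa using this

lemma II_tendsto (H : Lin J lam c γ R) {u : ℕ → ℝ → ℝ} {W : ℝ → ℝ} (hu : ∀ n, Adm (u n)) (hc : ∀ n, Continuous (u n))
    (hW : Adm W) (hWc : Continuous W) (hl : ∀ x, Tendsto (fun n => u n x) atTop (nhds (W x))) (x : ℝ) :
    Tendsto (fun n => II (rho J lam) (Zf lam (u n)) x) atTop (nhds (II (rho J lam) (Zf lam W) x)) := by
  have hlam := H.lam0
  have hZ : ∀ t, Tendsto (fun n => Zf lam (u n) t) atTop (nhds (Zf lam W t)) := fun t => (hl t).const_mul _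
  have hZb : ∀ V : ℝ → ℝ, Adm V → ∀ t, |Zf lam V t| ≤ Real.exp (lam * t) := by
    intro V hV t
    rw [abs_of_nonneg (Zf_nn hV t)]
    unfold Zf
    exact mul_le_of_le_one_right (Real.exp_pos _).le (hV.2 t).2
  have hec : Continuous fun t : ℝ => Real.exp (lam * t) := by fun_prop
  have hZ1 : ∀ t, Tendsto (fun n => Z1 (Zf lam (u n)) t) atTop (nhds (Z1 (Zf lam W) t)) := by
    intro t
    unfold Z1
    refine intervalIntegral.tendsto_integral_filter_of_dominated_convergence (fun t => Real.exp (lam * t))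
      (Eventually.of_forall fun n => (Zf_cont (hc n)).aestronglyMeasurable)
      (Eventually.of_forall fun n => Eventually.of_forall fun s _ => hZb _ (hu n) s)
      (hec.intervalIntegrable _ _) (Eventually.of_forall fun s _ => hZ s)
  have hZ1b : ∀ V : ℝ → ℝ, Adm V → ∀ t, |Z1 (Zf lam V) t| ≤ |Z1 (fun t => Real.exp (lam * t)) t| := by
    intro V hV t
    unfold Z1
    refine intervalIntegral.norm_integral_le_abs_of_norm_le (E := ℝ) (μ := volume) (f := Zf lam V) (g := fun t => Real.exp (lam * t)) ?_ (hec.intervalIntegrable _ _)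
    exact Eventually.of_forall fun s => hZb V hV s
  have hE1 := Z1_cont hec
  unfold II
  refine tendsto_integral_of_dominated_convergence (fun y => rho J lam y *
    (|Z1 (fun t => Real.exp (lam * t)) (x - y)| + |Z1 (fun t => Real.exp (lam * t)) x| + |y| * Real.exp (lam * x)))
    (fun n => ?_) (H.ker.intg (by fun_prop)) (fun n => ?_) ?_
  · have h0 := Zf_cont (lam := lam) (hc n)
    have h1 := Z1_cont h0
    exact (H.ker.cont.mul (by fun_prop)).aestronglyMeasurable
  · refine Eventually.of_forall fun y => ?_
    rw [norm_mul, Real.norm_of_nonneg (H.ker.nn y)]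
    refine mul_le_mul_of_nonneg_left ?_ (H.ker.nn y)
    rw [Real.norm_eq_abs]
    refine (abs_add_le _ _).trans (add_le_add ((abs_sub _ _).trans (add_le_add (hZ1b _ (hu n) _) (hZ1b _ (hu n) _))) ?_)
    rw [abs_mul]
    exact mul_le_mul_of_nonneg_left (hZb _ (hu n) _) (abs_nonneg _)
  · refine Eventually.of_forall fun y => ?_
    exact (((hZ1 _).sub (hZ1 _)).add ((hZ x).const_mul _)).const_mul _

end part6

section part7

/-- the kernel `J` has all properties needed from an integration weight -/
lemma IsKernel.ker {J : ℝ → ℝ} (hJ : IsKernel J) : ∃ R, Ker J R := by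
  obtain ⟨r, hr⟩ := hJ.2.2.2.1.isCompact.isBounded.subset_closedBall 0
  refine ⟨max r 0 + 1, hJ.1, hJ.2.1, by positivity, fun y hy => ?_, hJ.pt⟩
  by_contra h
  have h1 : y ∈ tsupport J := subset_tsupport J h
  have h2 := hr h1
  rw [mem_closedBall_zero_iff, Real.norm_eq_abs] at h2
  have := le_max_left r 0
  linarith

lemma lin_of {J : ℝ → ℝ} (hJ : IsKernel J) {γ₀ lam₀ : ℝ} (hγ₀ : 0 < γ₀) (hlam₀ : 0 < lam₀)
    (hroot : (∫ x, J x * Real.exp (lam₀ * x)) - 1 + γ₀ = c0star J γ₀ * lam₀) :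
    ∃ R, Lin J lam₀ (c0star J γ₀) γ₀ R := by
  obtain ⟨R, hK⟩ := hJ.ker
  have hI : ∀ l : ℝ, Integrable fun y => J y * Real.exp (l * y) := fun l => hK.intg (by fun_prop)
  have hodd : ∫ y, J y * y = 0 := by
    have h := integral_neg_eq_self (fun y => J y * y) volume
    have h2 : (∫ y, J (-y) * (-y)) = - ∫ y, J y * y := by
      rw [← integral_neg]; congr 1; ext y; rw [hJ.2.2.1]; ring
    linarith
  have hM : ∀ l : ℝ, 1 ≤ ∫ y, J y * Real.exp (l * y) := by
    intro l
    have h1 : ∫ y, J y * (1 + l * y) ≤ ∫ y, J y * Real.exp (l * y) :=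
      hK.mono (by fun_prop) (by fun_prop) (fun y _ => by linarith [Real.add_one_le_exp (l * y)])
    have h2 : ∫ y, J y * (1 + l * y) = 1 := by
      have : (fun y => J y * (1 + l * y)) = fun y => J y * 1 + l * (J y * y) := by ext y; ring
      rw [this, integral_add (hK.intg continuous_const) ((hK.intg (F := fun y => y) continuous_id).const_mul l), integral_const_mul]
      simp only [mul_one]
      rw [hodd, hJ.2.2.2.2]; ring
    linarith
  have hc0 : 0 < c0star J γ₀ := by
    have := hM lam₀
    by_contra h
    push Not at h
    have := mul_nonpos_of_nonpos_of_nonneg h hlam₀.le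
    linarith
  have hle : ∀ l : ℝ, 0 < l → c0star J γ₀ * l ≤ (∫ x, J x * Real.exp (l * x)) + γ₀ - 1 := by
    intro l hl
    rw [← le_div_iff₀ hl]
    refine csInf_le ⟨0, ?_⟩ ⟨l, hl, rfl⟩
    rintro _ ⟨l', hl', rfl⟩
    have := hM l'
    exact div_nonneg (by linarith) (le_of_lt hl')
  have hderM : HasDerivAt (fun l => ∫ y, J y * Real.exp (l * y)) (∫ y, J y * (Real.exp (lam₀ * y) * y)) lam₀ := by
    refine hK.deriv (G := fun l y => Real.exp (l * y)) (G' := fun l y => Real.exp (l * y) * y) (fun l y => ?_)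
      (fun l => by fun_prop) (by fun_prop) lam₀
    have := ((hasDerivAt_id l).mul_const y).exp
    simpa using this
  have hder : HasDerivAt (fun l => (∫ y, J y * Real.exp (l * y)) - c0star J γ₀ * l)
      ((∫ y, J y * (Real.exp (lam₀ * y) * y)) - c0star J γ₀) lam₀ := by
    have h2 := (hasDerivAt_id lam₀).const_mul (c0star J γ₀)
    exact (hderM.sub h2).congr_deriv (by simp)
  have hmin : IsLocalMin (fun l => (∫ y, J y * Real.exp (l * y)) - c0star J γ₀ * l) lam₀ := by
    filter_upwards [lt_mem_nhds hlam₀] with l hl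
    have := hle l hl
    show (∫ y, J y * Real.exp (lam₀ * y)) - c0star J γ₀ * lam₀ ≤ _
    linarith
  have hz := hmin.hasDerivAt_eq_zero hder
  refine ⟨R, ⟨?_, fun y => mul_nonneg (hJ.2.1 y) (Real.exp_pos _).le, hK.R0, fun y hy => ?_, ?_⟩, hlam₀, hc0, ?_, ?_, ?_⟩
  · have := hJ.1
    unfold rho; fun_prop
  · simp [rho, hK.supp y hy]
  · obtain ⟨y, hy, h⟩ := hJ.pt
    exact ⟨y, hy, mul_pos h (Real.exp_pos _)⟩
  · have : (fun y => rho J lam₀ y * y) = fun y => J y * (Real.exp (lam₀ * y) * y) := by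
      ext y; unfold rho; ring
    rw [this]; linarith
  · show (∫ y, J y * Real.exp (lam₀ * y)) = _
    linarith
  · have := hM lam₀
    show 0 < (∫ y, J y * Real.exp (lam₀ * y))
    linarith

/-- `g` is twice continuously differentiable on `[0,1]` with derivatives `g1`, `g2` -/
structure C2 (g g1 g2 : ℝ → ℝ) : Prop where
  d1 : ∀ x ∈ Icc (0:ℝ) 1, HasDerivWithinAt g (g1 x) (Icc 0 1) x
  d2 : ∀ x ∈ Icc (0:ℝ) 1, HasDerivWithinAt g1 (g2 x) (Icc 0 1) x
  c2 : ContinuousOn g2 (Icc 0 1)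

lemma C2.of {g : ℝ → ℝ} (h : ContDiffOn ℝ 2 g (Icc 0 1)) :
    C2 g (derivWithin g (Icc 0 1)) (iteratedDerivWithin 2 g (Icc 0 1)) := by
  have hu : UniqueDiffOn ℝ (Icc (0:ℝ) 1) := uniqueDiffOn_Icc zero_lt_one
  have h1 : iteratedDerivWithin 1 g (Icc 0 1) = derivWithin g (Icc 0 1) := by
    exact iteratedDerivWithin_one (f := g)
  have h2 : iteratedDerivWithin 2 g (Icc 0 1) = derivWithin (derivWithin g (Icc 0 1)) (Icc 0 1) := by
    ext x; rw [show (2:ℕ) = 1 + 1 from rfl, iteratedDerivWithin_succ, h1]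
  refine ⟨fun x hx => ((h.differentiableOn (by norm_num)) x hx).hasDerivWithinAt, fun x hx => ?_,
    h.continuousOn_iteratedDerivWithin (by norm_num) hu⟩
  have := h.differentiableOn_iteratedDerivWithin (m := 1) (by norm_num) hu
  rw [h1] at this
  rw [h2]
  exact (this x hx).hasDerivWithinAt

variable {g g1 g2 : ℝ → ℝ}

lemma C2.cont1 (h : C2 g g1 g2) : ContinuousOn g1 (Icc 0 1) := fun x hx => (h.d2 x hx).continuousWithinAt

lemma C2.cont (h : C2 g g1 g2) : ContinuousOn g (Icc 0 1) := fun x hx => (h.d1 x hx).continuousWithinAt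

lemma lip_I {h h' : ℝ → ℝ} (hd : ∀ x ∈ Icc (0:ℝ) 1, HasDerivWithinAt h (h' x) (Icc 0 1) x) {u v C : ℝ}
    (hu : 0 ≤ u) (huv : u ≤ v) (hv : v ≤ 1) (hb : ∀ x ∈ Icc u v, |h' x| ≤ C) : |h v - h u| ≤ C * (v - u) := by
  have hs : Icc u v ⊆ Icc 0 1 := Icc_subset_Icc hu hv
  have := (convex_Icc u v).norm_image_sub_le_of_norm_hasDerivWithin_le
    (fun x hx => (hd x (hs hx)).mono hs) hb (left_mem_Icc.2 huv) (right_mem_Icc.2 huv)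
  rwa [Real.norm_eq_abs, Real.norm_eq_abs, abs_of_nonneg (sub_nonneg.2 huv)] at this

lemma mono_I {h h' : ℝ → ℝ} (hd : ∀ x ∈ Icc (0:ℝ) 1, HasDerivWithinAt h (h' x) (Icc 0 1) x) {a b : ℝ}
    (ha : 0 ≤ a) (hb : b ≤ 1) (hp : ∀ x ∈ Icc a b, 0 ≤ h' x) : MonotoneOn h (Icc a b) := by
  have hs : Icc a b ⊆ Icc 0 1 := Icc_subset_Icc ha hb
  refine monotoneOn_of_hasDerivWithinAt_nonneg (f' := h') (convex_Icc a b)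
    (fun x hx => ((hd x (hs hx)).mono hs).continuousWithinAt)
    (fun x hx => (hd x (hs (interior_subset hx))).mono (interior_subset.trans hs))
    (fun x hx => hp x (interior_subset hx))

lemma bdd_I {h : ℝ → ℝ} (hc : ContinuousOn h (Icc 0 1)) : ∃ C > 0, ∀ x ∈ Icc (0:ℝ) 1, |h x| ≤ C := by
  obtain ⟨C, hC⟩ := isCompact_Icc.exists_bound_of_continuousOn hc
  exact ⟨max C 1, by positivity, fun x hx => (hC x hx).trans (le_max_left _ _)⟩

lemma C2.F2 (h : C2 g g1 g2) {γ : ℝ} (hγ : g1 0 = γ) : ∃ C > 0, ∀ u v, 0 ≤ u → u ≤ v → v ≤ 1 →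
    |(g v - γ * v) - (g u - γ * u)| ≤ C * v * (v - u) := by
  obtain ⟨C, hC, hb⟩ := bdd_I h.c2
  refine ⟨C, hC, fun u v hu huv hv => ?_⟩
  refine lip_I (h := fun w => g w - γ * w) (h' := fun w => g1 w - γ) (fun x hx => ?_) hu huv hv (fun x hx => ?_)
  · have := (h.d1 x hx).sub ((hasDerivWithinAt_id x (Icc 0 1)).const_mul γ)
    exact this.congr_deriv (by simp)
  · have := lip_I h.d2 le_rfl (hu.trans hx.1) (hx.2.trans hv) (fun y hy => hb y ⟨hy.1, hy.2.trans (hx.2.trans hv)⟩)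
    rw [hγ, sub_zero] at this
    exact this.trans (mul_le_mul_of_nonneg_left hx.2 hC.le)

lemma C2.F1 {γ C : ℝ} (h0 : g 0 = 0) (h : ∀ u v, 0 ≤ u → u ≤ v → v ≤ 1 →
    |(g v - γ * v) - (g u - γ * u)| ≤ C * v * (v - u)) : ∀ w ∈ Icc (0:ℝ) 1, |g w - γ * w| ≤ C * w ^ 2 := by
  intro w hw
  have := h 0 w le_rfl hw.1 hw.2
  rw [h0] at this
  simp only [mul_zero, sub_zero] at this
  linarith

lemma C2.near1 (h : C2 g g1 g2) (hn : g1 1 < 0) : ∃ η > 0, ∃ β > 0,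
    ∀ x y, 1 - η ≤ y → y ≤ x → x ≤ 1 → g x - g y ≤ -β * (x - y) := by
  have hc := h.cont1 1 (by norm_num)
  have he := hc.eventually (gt_mem_nhds (show g1 1 < g1 1 / 2 by linarith))
  obtain ⟨ε, hε, hb⟩ := Metric.mem_nhdsWithin_iff.1 he
  refine ⟨min (ε / 2) 1, by positivity, -(g1 1 / 2), by linarith, fun x y hy hyx hx => ?_⟩
  have hm1 := min_le_left (ε / 2) 1
  have hm2 := min_le_right (ε / 2) 1
  have hd : ∀ x ∈ Icc (0:ℝ) 1, HasDerivWithinAt (fun w => (g1 1 / 2) * w - g w) (g1 1 / 2 - g1 x) (Icc 0 1) x := by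
    intro x hx
    have := ((hasDerivWithinAt_id x (Icc 0 1)).const_mul (g1 1 / 2)).sub (h.d1 x hx)
    exact this.congr_deriv (by simp)
  have := mono_I hd (a := 1 - min (ε / 2) 1) (b := 1) (by linarith) le_rfl (fun z hz => by
    have hz' : z ∈ Metric.ball (1:ℝ) ε ∩ Icc 0 1 := by
      refine ⟨?_, by linarith [hz.1], hz.2⟩
      rw [Metric.mem_ball, Real.dist_eq, abs_lt]
      constructor <;> linarith [hz.1, hz.2]
    have h3 : g1 z < g1 1 / 2 := hb hz'
    linarith)
  have h2 := this ⟨hy, hyx.trans hx⟩ ⟨hy.trans hyx, hx⟩ hyx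
  simp only at h2
  linarith

lemma C2.quad (h : C2 g g1 g2) (h0 : g 0 = 0) (h1 : g1 0 = 0) (h2 : 0 < g2 0) :
    ∃ cD > 0, ∃ w0 > 0, ∀ w, 0 ≤ w → w ≤ w0 → cD * w ^ 2 ≤ g w := by
  have hc := h.c2 0 (by norm_num)
  have he := hc.eventually (lt_mem_nhds (show g2 0 / 2 < g2 0 by linarith))
  obtain ⟨ε, hε, hb⟩ := Metric.mem_nhdsWithin_iff.1 he
  set w0 := min (ε / 2) 1 with hw0
  have hm1 : w0 ≤ ε / 2 := min_le_left (ε / 2) 1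
  have hm2 : w0 ≤ 1 := min_le_right (ε / 2) 1
  have hw00 : 0 < w0 := by positivity
  refine ⟨g2 0 / 4, by linarith, w0, hw00, ?_⟩
  have hA : MonotoneOn (fun w => g1 w - (g2 0 / 2) * w) (Icc 0 w0) := by
    refine mono_I (h' := fun w => g2 w - g2 0 / 2) (fun x hx => ?_) le_rfl hm2 (fun z hz => ?_)
    · have := (h.d2 x hx).sub ((hasDerivWithinAt_id x (Icc 0 1)).const_mul (g2 0 / 2))
      exact this.congr_deriv (by simp)
    · have hz' : z ∈ Metric.ball (0:ℝ) ε ∩ Icc 0 1 := by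
        refine ⟨?_, hz.1, by linarith [hz.2]⟩
        rw [Metric.mem_ball, Real.dist_eq, abs_lt]
        constructor <;> linarith [hz.1, hz.2]
      have h3 : g2 0 / 2 < g2 z := hb hz'
      linarith
  have hB : MonotoneOn (fun w => g w - (g2 0 / 4) * w ^ 2) (Icc 0 w0) := by
    refine mono_I (h' := fun w => g1 w - (g2 0 / 2) * w) (fun x hx => ?_) le_rfl hm2 (fun z hz => ?_)
    · have := (h.d1 x hx).sub (((hasDerivWithinAt_id x (Icc 0 1)).pow 2).const_mul (g2 0 / 4))
      refine this.congr_deriv ?_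
      simp; ring
    · have := hA ⟨le_rfl, hw00.le⟩ hz hz.1
      simp only [h1] at this
      linarith
  intro w h1 h2
  have := hB ⟨le_rfl, hw00.le⟩ ⟨h1, h2⟩ h1
  simp only [h0] at this
  linarith

lemma C2.nice (h : C2 g g1 g2) {M K : ℝ} (hM : ∀ x ∈ Icc (0:ℝ) 1, |g1 x| ≤ M) (hK : M + 1 ≤ K) (hK1 : 1 < K)
    (h0 : g 0 = 0) (h1 : g 1 = 0) (hp : ∀ w ∈ Ioo (0:ℝ) 1, 0 < g w) : Nice g K := by
  refine ⟨hK1, h0, h1, hp, h.cont, fun x hx y hy hxy => ?_⟩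
  have := (abs_le.1 (lip_I h.d1 hx.1 hxy hy.2 (fun z hz => hM z ⟨hx.1.trans hz.1, hz.2.trans hy.2⟩))).1
  nlinarith

end part7

section part8

variable {J g g' : ℝ → ℝ} {K lam c γ R : ℝ}

lemma NN_gmono (hg : Nice g K) (hgg : ∀ w ∈ Icc (0:ℝ) 1, g w ≤ g' w) {V : ℝ → ℝ}
    (hV : Adm V) (x : ℝ) : NN J g K V x ≤ NN J g' K V x := by
  unfold NN
  have := hg.K1
  exact div_le_div_of_nonneg_right (by linarith [hgg _ (hV.2 x)]) (by linarith)

lemma TT_gmono (hJ : IsKernel J) (hg : Nice g K) (hg' : Nice g' K) {α : ℝ} (hα : 0 < α)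
    (hgg : ∀ w ∈ Icc (0:ℝ) 1, g w ≤ g' w) {V : ℝ → ℝ} (hV : Adm V) (x : ℝ) :
    TT J g K α (fun _ => 1) V x ≤ TT J g' K α (fun _ => 1) V x := by
  refine PP_mono hα (TT_hadm hJ hg Adm.one hV) (TT_hadm hJ hg' Adm.one hV) (fun y _ => ?_)
  simp only [one_mul]
  exact NN_gmono hg hgg hV y

lemma Zf_shift (V : ℝ → ℝ) (s x : ℝ) :
    Zf lam (fun x => V (x - s)) x = Real.exp (lam * s) * Zf lam V (x - s) := by
  unfold Zf
  rw [← mul_assoc, ← Real.exp_add]; ring_nf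

lemma Zf_shift_lim {V : ℝ → ℝ} {B : ℝ} (h : Tendsto (Zf lam V) atTop (nhds B)) (s : ℝ) :
    Tendsto (Zf lam (fun x => V (x - s))) atTop (nhds (Real.exp (lam * s) * B)) := by
  have : Zf lam (fun x => V (x - s)) = fun x => Real.exp (lam * s) * Zf lam V (x - s) := by
    ext x; exact Zf_shift V s x
  rw [this]
  refine (h.comp ?_).const_mul _
  exact tendsto_atTop_add_const_right _ (-s) tendsto_id

lemma Zf_ev {U V : ℝ → ℝ} {B B' : ℝ} (hU : Tendsto (Zf lam U) atTop (nhds B))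
    (hV : Tendsto (Zf lam V) atTop (nhds B')) (h : B < B') : ∃ X, ∀ ξ, X ≤ ξ → U ξ ≤ V ξ := by
  obtain ⟨X, hX⟩ := eventually_atTop.1 (hU.eventually_lt hV h)
  refine ⟨X, fun ξ hξ => ?_⟩
  have := hX ξ hξ
  unfold Zf at this
  exact (lt_of_mul_lt_mul_left this (Real.exp_pos _).le).le

lemma front_lip (hJ : IsKernel J) (hg : Nice g K) (hc : 0 < c) {V : ℝ → ℝ} (hV : IsNLFront J g c V) (x y : ℝ) :
    |V x - V y| ≤ (c / K)⁻¹ * |x - y| := by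
  have hf := fix_of_front hJ hg hc hV
  have hα : 0 < c / K := div_pos hc (by linarith [hg.K1])
  rw [hf x, hf y]
  exact PP_lip hα (TT_hadm hJ hg Adm.one (front_adm hV)) x y

lemma front_shift (hJ : IsKernel J) (hg : Nice g K) (hc : 0 < c) {V : ℝ → ℝ} (hV : IsNLFront J g c V) (s x : ℝ) :
    V (x - s) = TT J g K (c / K) (fun _ => 1) (fun z => V (z + -s)) x := by
  have := TT_shift (J := J) (g := g) (K := K) (c / K) (fun _ => 1) V (-s) x
  rw [this, ← fix_of_front hJ hg hc hV, sub_eq_add_neg]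

lemma front_shift_deriv (hc : 0 < c) {V : ℝ → ℝ} (hV : IsNLFront J g c V) (s x : ℝ) :
    HasDerivAt (fun z => V (z - s)) ((V (x - s) - cv J (fun z => V (z - s)) x - g (V (x - s))) / c) x := by
  have h1 := (front_deriv hc hV (x - s)).comp x ((hasDerivAt_id x).sub_const s)
  have h2 : cv J (fun z => V (z - s)) x = cv J V (x - s) := by
    unfold cv; congr 1; ext y; rw [sub_right_comm]
  rw [h2]
  exact h1.congr_deriv (by simp)

/-- Two fronts at the linear speed with ordered nonlinearities cannot both decay at the pure
exponential rate. -/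
lemma case1 (hJ : IsKernel J) (hg : Nice g K) (hg' : Nice g' K) (H : Lin J lam c γ R)
    {η β : ℝ} (hβ : 0 < β) (hη : 0 < η)
    (hd : ∀ x y, 1 - η ≤ y → y ≤ x → x ≤ 1 → g x - g y ≤ -β * (x - y))
    {C : ℝ} (hC : 0 < C) (hF : ∀ u v, 0 ≤ u → u ≤ v → v ≤ 1 →
      |(g' v - γ * v) - (g' u - γ * u)| ≤ C * v * (v - u))
    {cD w0 : ℝ} (hcD : 0 < cD) (hw0 : 0 < w0) (hD : ∀ w, 0 ≤ w → w ≤ w0 → cD * w ^ 2 ≤ g' w - g w)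
    (hgg : ∀ w ∈ Ioo (0:ℝ) 1, g w < g' w)
    {U V : ℝ → ℝ} (hU : IsNLFront J g c U) (hV : IsNLFront J g' c V) {B B' : ℝ} (hB : 0 < B) (hB' : 0 < B')
    (hUB : Tendsto (Zf lam U) atTop (nhds B)) (hVB : Tendsto (Zf lam V) atTop (nhds B')) : False := by
  have hc := H.c0
  have hl := H.lam0
  have hα : 0 < c / K := div_pos hc (by linarith [hg.K1])
  have hUa := front_adm hU
  have hVa := front_adm hV
  have hUr := front_range hU
  have hVr := front_range hV
  have hUc : Continuous U := hU.1.continuous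
  have hVc : Continuous V := hV.1.continuous
  have hgg' : ∀ w ∈ Icc (0:ℝ) 1, g w ≤ g' w := by
    intro w hw
    rcases eq_or_lt_of_le hw.1 with h | h
    · rw [← h, hg.g0, hg'.g0]
    rcases eq_or_lt_of_le hw.2 with h' | h'
    · rw [h', hg.g1, hg'.g1]
    exact (hgg w ⟨h, h'⟩).le
  obtain ⟨s0, hs0⟩ : ∃ s0, Real.exp (lam * s0) * B' = B := by
    refine ⟨Real.log (B / B') / lam, ?_⟩
    rw [mul_div_cancel₀ _ hl.ne', Real.exp_log (by positivity)]
    field_simp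
  have hlt : ∀ s, s0 < s → B < Real.exp (lam * s) * B' := by
    intro s hs
    rw [← hs0]
    exact mul_lt_mul_of_pos_right (Real.exp_lt_exp.2 (by nlinarith)) hB'
  refine slide hJ hg hα hβ hη hd hUa hVa hUc (front_lip hJ hg' hc hV) (fun x => (fix_of_front hJ hg hc hU x).le)
    (fun x => (TT_gmono hJ hg hg' hα hgg' hVa x).trans (fix_of_front hJ hg' hc hV x).ge)
    hU.2.2.1 hV.2.2.1 hV.2.2.2.1 ⟨0, (hUr 0).1⟩ (fun x => (hUr x).2) ?_ ?_ ?_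
  · exact ⟨s0 + 1, Zf_ev hUB (Zf_shift_lim hVB (s0 + 1)) (hlt _ (by linarith))⟩
  · intro s hs
    rcases lt_or_ge s0 s with h | h
    · obtain ⟨X, hX⟩ := Zf_ev hUB (Zf_shift_lim hVB (s - (s - s0) / 2)) (hlt _ (by linarith))
      exact ⟨X, (s - s0) / 2, by linarith, hX⟩
    · exfalso
      have hVs := Zf_shift_lim hVB s
      have hle : B ≤ Real.exp (lam * s) * B' := by
        refine le_of_tendsto_of_tendsto' hUB hVs (fun x => ?_)
        exact mul_le_mul_of_nonneg_left (hs x) (Real.exp_pos _).le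
      have hge : Real.exp (lam * s) * B' ≤ B := by
        rw [← hs0]
        exact mul_le_mul_of_nonneg_right (Real.exp_le_exp.2 (by nlinarith)) hB'.le
      rw [le_antisymm hge hle] at hVs
      have hVsc : Continuous fun x => V (x - s) := by fun_prop
      have hZc1 := Zf_cont (lam := lam) hVsc
      have hZc2 := Zf_cont (lam := lam) hUc
      refine no_touch H.ker (Z := fun x => Zf lam (fun x => V (x - s)) x - Zf lam U x)
        (r := fun x => Real.exp (lam * x) * (g' (V (x - s)) - γ * V (x - s)) - Real.exp (lam * x) * (g (U x) - γ * U x))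
        (by fun_prop) hc H.hb ?_ ?_ ?_ ?_
      · intro x
        exact sub_nonneg.2 (mul_le_mul_of_nonneg_left (hs x) (Real.exp_pos _).le)
      · simpa using hVs.sub hUB
      · refine Eventually.of_forall fun x => ?_
        have h1 := Zf_deriv H (front_shift_deriv hc hV s x)
        have h2 := Zf_deriv H (front_deriv hc hU x)
        refine (h1.sub h2).congr_deriv ?_
        have h3 : cv (rho J lam) (fun x => Zf lam (fun x => V (x - s)) x - Zf lam U x) x
            = cv (rho J lam) (Zf lam (fun x => V (x - s))) x - cv (rho J lam) (Zf lam U) x := by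
          unfold cv
          rw [← integral_sub (H.ker.intg (by fun_prop)) (H.ker.intg (by fun_prop))]
          congr 1; ext y; ring
        rw [h3]; ring
      · have hlim : Tendsto (fun x => cD * Zf lam U x ^ 2 - C * Zf lam (fun x => V (x - s)) x *
            (Zf lam (fun x => V (x - s)) x - Zf lam U x)) atTop (nhds (cD * B ^ 2 - C * B * (B - B))) :=
          ((hUB.pow 2).const_mul cD).sub ((hVs.const_mul C).mul (hVs.sub hUB))
        have hpos : 0 < cD * B ^ 2 - C * B * (B - B) := by
          have : 0 < cD * B ^ 2 := by positivity
          simpa using this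
        filter_upwards [hlim.eventually (lt_mem_nhds hpos), hU.2.2.2.1.eventually (gt_mem_nhds hw0)] with x hx1 hx2
        have h1 := (abs_le.1 (hF (U x) (V (x - s)) (hUr x).1.le (hs x) (hVr _).2.le)).1
        have h2 := hD (U x) (hUr x).1.le hx2.le
        have e := Real.exp_pos (lam * x)
        unfold Zf at hx1
        have h3 : 0 < cD * U x ^ 2 - C * V (x - s) * (V (x - s) - U x) := by
          have : 0 < Real.exp (lam * x) ^ 2 * (cD * U x ^ 2 - C * V (x - s) * (V (x - s) - U x)) := by
            refine hx1.trans_eq ?_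
            ring
          exact pos_of_mul_pos_right this (by positivity)
        rw [← mul_sub]
        refine mul_pos e ?_
        linarith
  · intro s hs ξ
    refine lt_of_le_of_ne (hs ξ) (fun he => ?_)
    have hVsa : Adm fun z => V (z + -s) := hVa.shift _
    rw [front_shift hJ hg' hc hV, fix_of_front hJ hg hc hU ξ] at he
    have hle : ∀ y, NN J g K U y ≤ NN J g K (fun z => V (z + -s)) y :=
      NN_mono hJ hg hUa hVsa (fun x => by have := hs x; rwa [sub_eq_add_neg] at this)
    have hlt' : ∀ y, NN J g K U y < NN J g' K (fun z => V (z + -s)) y := by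
      intro y
      refine (hle y).trans_lt ?_
      unfold NN
      have := hg.K1
      have h2 := hgg (V (y + -s)) (hVr _)
      exact div_lt_div_of_pos_right (by linarith) (by linarith)
    obtain ⟨y, _, _, hy⟩ := PP_eq hα (TT_hadm hJ hg Adm.one hUa) (TT_hadm hJ hg' Adm.one hVsa)
      (fun y _ => by simp only [one_mul]; exact (hlt' y).le) he 0
    simp only [one_mul] at hy
    exact (hlt' y).ne hy

/-- No half-line profile coexists with a front of the same speed. -/
lemma case3a (hJ : IsKernel J) (hg : Nice g K) (hc : 0 < c) {η β : ℝ} (hβ : 0 < β) (hη : 0 < η)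
    (hd : ∀ x y, 1 - η ≤ y → y ≤ x → x ≤ 1 → g x - g y ≤ -β * (x - y))
    {U V : ℝ → ℝ} (hV : IsNLFront J g c V) (hUa : Adm U) (hfix : ∀ x, U x = TT J g K (c / K) (chi 0) U x)
    (hUb : Tendsto U atBot (nhds 1)) : False := by
  have hα : 0 < c / K := div_pos hc (by linarith [hg.K1])
  have hVa := front_adm hV
  have hVr := front_range hV
  have hUc : Continuous U := by
    have : U = TT J g K (c / K) (chi 0) U := funext hfix
    rw [this]; exact TT_cont hJ hg hα (chi_adm 0) hUa
  have hz : ∀ x, 0 ≤ x → U x = 0 := fun x hx => by rw [hfix x, TT_chi_zero hα U hx]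
  have hchi : ∀ y, 1 ≤ y → chi 0 y = 0 := fun y hy => by unfold chi; rw [if_neg (by linarith)]
  refine slide hJ hg hα hβ hη hd hUa hVa hUc (front_lip hJ hg hc hV) (fun x => ?_)
    (fun x => (fix_of_front hJ hg hc hV x).ge) hUb hV.2.2.1 hV.2.2.2.1 ?_ ?_ ?_ ?_ ?_
  · conv_lhs => rw [hfix x]
    exact TT_mono hJ hg hα (chi_adm 0) Adm.one (fun x => ((chi_adm 0).2 x).2) hUa hUa (fun _ => le_rfl) x
  · exact (hUb.eventually (lt_mem_nhds zero_lt_one)).exists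
  · intro x
    refine lt_of_le_of_ne (hUa.2 x).2 (fun he => ?_)
    rw [hfix x] at he
    have he' : PP (c / K) (fun z => chi 0 z * NN J g K U z) x = PP (c / K) (fun _ => 1) x := by
      rw [PP_const]; exact he
    obtain ⟨y, hy1, _, hy⟩ := PP_eq hα (TT_hadm hJ hg (chi_adm 0) hUa) Adm.one
      (fun y _ => ((TT_hadm hJ hg (chi_adm 0) hUa).2 y).2) he' 1
    simp only [hchi y hy1, zero_mul] at hy
    exact zero_ne_one hy
  · exact ⟨0, 0, fun ξ hξ => by rw [hz ξ hξ]; exact (hVr _).1.le⟩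
  · exact fun s _ => ⟨0, 1, one_pos, fun ξ hξ => by rw [hz ξ hξ]; exact (hVr _).1.le⟩
  · intro s hs ξ
    refine lt_of_le_of_ne (hs ξ) (fun he => ?_)
    have hVsa : Adm fun z => V (z + -s) := hVa.shift _
    rw [front_shift hJ hg hc hV, hfix ξ] at he
    have hle : ∀ y, NN J g K U y ≤ NN J g K (fun z => V (z + -s)) y :=
      NN_mono hJ hg hUa hVsa (fun x => by have := hs x; rwa [sub_eq_add_neg] at this)
    obtain ⟨y, hy1, _, hy⟩ := PP_eq hα (TT_hadm hJ hg (chi_adm 0) hUa) (TT_hadm hJ hg Adm.one hVsa)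
      (fun y _ => mul_le_mul ((chi_adm 0).2 y).2 (hle y) ((NN_adm hJ hg hUa).2 y).1 zero_le_one) he 1
    simp only [hchi y hy1, zero_mul, one_mul] at hy
    have h1 := ((cv_adm hJ hVsa).2 y).1
    have h2 := hVr (y + -s)
    have h3 := hg.pos _ h2
    have h4 := hg.K1
    have : 0 < NN J g K (fun z => V (z + -s)) y := by
      unfold NN
      have := mul_pos (sub_pos.2 h4) h2.1
      exact div_pos (by linarith) (by linarith)
    linarith

end part8

section part9

variable {J g : ℝ → ℝ} {K lam c γ R : ℝ}

/-- At the threshold there is a front with pure exponential decay. -/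
lemma case3 (hJ : IsKernel J) (hg : Nice g K) (H : Lin J lam c γ R)
    {η β : ℝ} (hβ : 0 < β) (hη : 0 < η)
    (hd : ∀ x y, 1 - η ≤ y → y ≤ x → x ≤ 1 → g x - g y ≤ -β * (x - y))
    {C : ℝ} (hC : 0 < C) (hF : ∀ w ∈ Icc (0:ℝ) 1, |g w - γ * w| ≤ C * w ^ 2)
    (G : ℕ → ℝ → ℝ) (hG : ∀ k, Nice (G k) K) (hGF : ∀ k, ∀ w ∈ Icc (0:ℝ) 1, |G k w - γ * w| ≤ C * w ^ 2)
    (ε : ℕ → ℝ) (hε : Tendsto ε atTop (nhds 0)) (hGe : ∀ k, ∀ w ∈ Icc (0:ℝ) 1, |G k w - g w| ≤ ε k)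
    (hno : ∀ k, ¬ ∃ W, IsNLFront J (G k) c W) {V : ℝ → ℝ} (hV : IsNLFront J g c V) :
    ∃ W, IsNLFront J g c W ∧ ∃ B > 0, Tendsto (Zf lam W) atTop (nhds B) := by
  have hc := H.c0
  have hl := H.lam0
  have hα : 0 < c / K := div_pos hc (by linarith [hg.K1])
  choose U hU hfix hUb using fun k => halfline hJ (hG k) hc (hno k)
  have hz : ∀ k x, 0 ≤ x → U k x = 0 := fun k x hx => by rw [hfix k x, TT_chi_zero hα (U k) hx]
  have hUc : ∀ k, Continuous (U k) := by
    intro k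
    have : U k = TT J (G k) K (c / K) (chi 0) (U k) := funext (hfix k)
    rw [this]; exact TT_cont hJ (hG k) hα (chi_adm 0) (hU k)
  have hhalf : ∀ k, ∃ x, U k x = 1 / 2 := fun k => exists_half (hUc k) (hUb k)
    (tendsto_const_nhds.congr' ((eventually_ge_atTop 0).mono fun x hx => (hz k x hx).symm))
  choose x hx using hhalf
  have happrox : ∀ k z, |U k z - TT J g K (c / K) (chi 0) (U k) z| ≤ ε k := by
    intro k z
    conv_lhs => rw [hfix k z]
    exact TT_close hJ (hG k) hg hα (chi_adm 0) (hU k) (hGe k) z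
  by_cases hbot : Tendsto x atTop atBot
  · have hchi : ∀ k, (fun z => chi 0 (z + x k)) = chi (-x k) := by
      intro k; ext z; unfold chi
      congr 1
      simp only [eq_iff_iff]
      constructor <;> intro h <;> linarith
    have hua : ∀ k, Adm fun z => U k (z + x k) := fun k => (hU k).shift _
    have huc : ∀ k, Continuous fun z => U k (z + x k) := fun k => (hUc k).comp (by fun_prop)
    obtain ⟨φ, hφ, W, hWa, hWfix, hWl⟩ := limit_fix hJ hg hα (fun k => chi (-x k)) (fun k => chi_adm _)
      (fun _ => 1) (fun y => by
        refine tendsto_const_nhds.congr' ?_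
        filter_upwards [hbot.eventually (eventually_le_atBot (-y))] with k hk
        unfold chi; rw [if_pos (by linarith)])
      (fun k z => U k (z + x k)) hua ε hε (fun k z => by
        rw [← hchi k, TT_shift]
        exact happrox k (z + x k))
    have hW0 : W 0 = 1 / 2 := by
      refine tendsto_nhds_unique (hWl 0) (tendsto_const_nhds.congr fun n => ?_)
      rw [zero_add, hx]
    have hWF : IsNLFront J g c W := front_of_fix hJ hg hc hWa hWfix (x₀ := 0) (by rw [hW0]; norm_num) (by rw [hW0]; norm_num)
    refine ⟨W, hWF, ?_⟩
    have hWc : Continuous W := hWF.1.continuous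
    refine front_asym H hC hWa hWc (fun z => (front_range hWF z).1) hWF.2.2.2.1 hF (front_deriv hc hWF) ?_
    obtain ⟨η', hη', hest⟩ := main_est H hC
    obtain ⟨x₀, hx₀⟩ := (hWF.2.2.2.1.eventually (gt_mem_nhds hη')).exists
    obtain ⟨C2, hC2, hb⟩ := hest x₀
    refine ⟨C2, x₀, fun ξ hξ => ?_⟩
    have hlim := II_tendsto H (fun n => hua (φ n)) (fun n => huc (φ n)) hWa hWc hWl ξ
    refine le_of_tendsto hlim ?_
    filter_upwards [(hWl x₀).eventually (gt_mem_nhds hx₀),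
      (hbot.comp hφ.tendsto_atTop).eventually (eventually_le_atBot (-ξ))] with n h1 h2
    have h2' : x (φ n) ≤ -ξ := h2
    have hend := II_end H (hua (φ n)) (huc (φ n)) (m := -x (φ n)) (fun z hz' => hz _ _ (by linarith))
    have := hb (G (φ n)) _ (-x (φ n)) (hua (φ n)) (huc (φ n)) (hGF (φ n)) (fun z hz' => ?_)
      (fun z hz' => ((hua (φ n)).1 hz').trans h1.le) ξ (-x (φ n)) hξ (by linarith) le_rfl
    · have := (abs_le.1 this).2
      linarith
    · refine TT_ode hJ (hG (φ n)) hc (χ := chi (-x (φ n))) (chi_adm _) (hua (φ n)) (fun y => ?_) ?_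
      · rw [← hchi (φ n), TT_shift]; exact hfix _ _
      · filter_upwards [gt_mem_nhds hz'.2] with y hy
        unfold chi; rw [if_pos hy.le]
  · exfalso
    rw [tendsto_atBot] at hbot
    push Not at hbot
    obtain ⟨b, hb⟩ := hbot
    obtain ⟨ψ, hψ, hψb⟩ := extraction_of_frequently_atTop hb
    obtain ⟨φ, hφ, W, hWa, hWfix, hWl⟩ := limit_fix hJ hg hα (fun k => chi 0) (fun k => chi_adm _)
      (chi 0) (fun y => tendsto_const_nhds) (fun k => U (ψ k)) (fun k => hU _) (fun k => ε (ψ k))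
      (hε.comp hψ.tendsto_atTop) (fun k z => happrox _ z)
    have hWb : 1 / 2 ≤ W b := by
      refine ge_of_tendsto' (hWl b) (fun n => ?_)
      rw [← hx (ψ (φ n))]
      exact (hU _).1 (not_le.1 (by simpa using hψb (φ n))).le
    obtain ⟨l, hl1, hl2, hl3⟩ := hWa.limBot
    have h1 := TT_bot hJ hg hα (chi_adm 0) hWa hl1 (chi_bot 0) hl2
    rw [← funext hWfix] at h1
    have h2 := tendsto_nhds_unique h1 hl2
    rw [one_mul] at h2
    have h3 := hl3 b
    rcases hg.fix hl1 h2.le with h | h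
    · linarith
    · rw [h] at hl2
      exact case3a hJ hg hc hβ hη hd hV hWa hWfix hl2

lemma asym_iff {W : ℝ → ℝ} {B : ℝ} :
    ((fun ξ => W ξ - B * Real.exp (-(lam * ξ))) =o[atTop] fun ξ => Real.exp (-(lam * ξ))) ↔
      Tendsto (Zf lam W) atTop (nhds B) := by
  rw [isLittleO_iff_tendsto (fun x h => absurd h (Real.exp_pos _).ne')]
  have : (fun x => (W x - B * Real.exp (-(lam * x))) / Real.exp (-(lam * x))) = fun x => Zf lam W x - B := by
    ext x
    have h : Real.exp (lam * x) = (Real.exp (-(lam * x)))⁻¹ := by rw [Real.exp_neg, inv_inv]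
    unfold Zf
    rw [h]
    have := Real.exp_pos (-(lam * x))
    field_simp
  rw [this, tendsto_sub_nhds_zero_iff]

end part9

/-- Theorem: under (A1)-(A3) and (A6)-(A7) there is a threshold `q* ∈ [q₁, q₂)` for linear
vs. nonlinear speed selection of the nonlocal equation, and the minimal front decays like
`B e^{-λ₀ξ}` (with `B > 0`) iff `q = q*`. -/
theorem threshold_nonlocal_equation
    (J : ℝ → ℝ) (hJ : IsKernel J)
    (f : ℝ → ℝ → ℝ) (γ₀ : ℝ) (hγ₀ : 0 < γ₀)
    (cNL : ℝ → ℝ) (q₁ q₂ : ℝ)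
    -- (A1) monostable condition, with ∂_w f(0;q) = γ₀ for all q
    (hA1 : ∀ q, 0 ≤ q →
      ContDiffOn ℝ 2 (fun w => f w q) (Icc 0 1) ∧
      f 0 q = 0 ∧ f 1 q = 0 ∧
      derivWithin (fun w => f w q) (Icc 0 1) 0 = γ₀ ∧
      derivWithin (fun w => f w q) (Icc 0 1) 1 < 0 ∧
      (∀ w ∈ Ioo (0:ℝ) 1, 0 < f w q))
    -- (A2) Lipschitz continuity in the parameter, for f, f', f''
    (hA2 : ∃ L₀ > (0:ℝ), ∀ n : ℕ, n ≤ 2 → ∀ w ∈ Icc (0:ℝ) 1, ∀ qa qb : ℝ, 0 ≤ qa → 0 ≤ qb →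
      |iteratedDerivWithin n (fun w => f w qa) (Icc 0 1) w -
        iteratedDerivWithin n (fun w => f w qb) (Icc 0 1) w| ≤ L₀ * |qa - qb|)
    -- (A3) monotonicity condition
    (hA3 : ∀ q qh : ℝ, 0 ≤ q → q < qh →
      (∀ w ∈ Ioo (0:ℝ) 1, f w q < f w qh) ∧
      iteratedDerivWithin 2 (fun w => f w q) (Icc 0 1) 0 <
        iteratedDerivWithin 2 (fun w => f w qh) (Icc 0 1) 0)
    -- minimal-speed characterization: fronts exist exactly for speeds c ≥ c_NL*(q) ≥ c₀*
    (hmin : ∀ q, 0 ≤ q → c0star J γ₀ ≤ cNL q ∧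
      ∀ c, (∃ W : ℝ → ℝ, IsNLFront J (fun w => f w q) c W) ↔ cNL q ≤ c)
    -- the minimal front is unique up to translation
    (huniq : ∀ q, 0 ≤ q → ∀ W₁ W₂ : ℝ → ℝ, IsNLFront J (fun w => f w q) (cNL q) W₁ →
      IsNLFront J (fun w => f w q) (cNL q) W₂ → ∃ τ, ∀ ξ, W₂ ξ = W₁ (ξ + τ))
    -- λ₀ is the unique positive number with ∫ J e^{λ₀ x} dx - 1 + γ₀ = c₀* λ₀
    (lam₀ : ℝ) (hlam₀ : 0 < lam₀)
    (hroot : (∫ x, J x * Real.exp (lam₀ * x)) - 1 + γ₀ = c0star J γ₀ * lam₀)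
    (huniqroot : ∀ l, 0 < l →
      (∫ x, J x * Real.exp (l * x)) - 1 + γ₀ = c0star J γ₀ * l → l = lam₀)
    -- (A6) KPP condition at q₁, hence linear selection there
    (hq₁ : 0 < q₁) (hA6 : ∀ w ∈ Icc (0:ℝ) 1, f w q₁ ≤ γ₀ * w)
    (hc₁ : cNL q₁ = c0star J γ₀)
    -- (A7) nonlinear selection at some q₂ > q₁
    (hq₂ : q₁ < q₂) (hc₂ : c0star J γ₀ < cNL q₂) :
    ∃ qstar : ℝ, q₁ ≤ qstar ∧ qstar < q₂ ∧
      (∀ q, 0 ≤ q → q ≤ qstar → cNL q = c0star J γ₀) ∧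
      (∀ q, qstar < q → c0star J γ₀ < cNL q) ∧
      (∀ q, 0 ≤ q → ∀ W : ℝ → ℝ, IsNLFront J (fun w => f w q) (cNL q) W →
        ((∃ B > (0:ℝ),
            (fun ξ => W ξ - B * Real.exp (-(lam₀ * ξ))) =o[atTop]
              fun ξ => Real.exp (-(lam₀ * ξ))) ↔ q = qstar)) := by
  obtain ⟨R, H⟩ := lin_of hJ hγ₀ hlam₀ hroot
  set c0 := c0star J γ₀ with hc0def
  have hc0 : 0 < c0 := H.c0
  obtain ⟨L₀, hL₀, hA2⟩ := hA2
  have hC2 : ∀ q, 0 ≤ q → C2 (fun w => f w q) (derivWithin (fun w => f w q) (Icc 0 1))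
      (iteratedDerivWithin 2 (fun w => f w q) (Icc 0 1)) := fun q hq => C2.of (hA1 q hq).1
  have hnice : ∀ Q, 0 ≤ Q → ∃ K, ∀ q, 0 ≤ q → q ≤ Q → Nice (fun w => f w q) K := by
    intro Q hQ
    obtain ⟨M, hM, hb⟩ := bdd_I (hC2 0 le_rfl).cont1
    have hLQ : 0 ≤ L₀ * Q := by positivity
    refine ⟨M + L₀ * Q + 2, fun q hq hqQ => ?_⟩
    obtain ⟨_, h0, h1, _, _, hp⟩ := hA1 q hq
    refine (hC2 q hq).nice (M := M + L₀ * Q) (fun x hx => ?_) (by linarith) (by linarith) h0 h1 hp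
    have h := hA2 1 (by norm_num) x hx q 0 hq le_rfl
    rw [iteratedDerivWithin_one, iteratedDerivWithin_one, sub_zero, abs_of_nonneg hq] at h
    have h2 := hb x hx
    have h3 : L₀ * q ≤ L₀ * Q := mul_le_mul_of_nonneg_left hqQ hL₀.le
    rw [abs_le] at h h2 ⊢
    constructor <;> linarith [h.1, h.2, h2.1, h2.2]
  have hlip : ∀ w ∈ Icc (0:ℝ) 1, ∀ qa qb : ℝ, 0 ≤ qa → 0 ≤ qb → |f w qa - f w qb| ≤ L₀ * |qa - qb| := by
    intro w hw qa qb ha hb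
    have := hA2 0 (by norm_num) w hw qa qb ha hb
    simpa [iteratedDerivWithin_zero] using this
  have hle : ∀ q q', 0 ≤ q → q ≤ q' → ∀ w ∈ Icc (0:ℝ) 1, f w q ≤ f w q' := by
    intro q q' hq hqq w hw
    rcases eq_or_lt_of_le hqq with h | h
    · rw [h]
    have h1 := hA1 q hq
    have h2 := hA1 q' (hq.trans hqq)
    rcases eq_or_lt_of_le hw.1 with hw0 | hw0
    · rw [← hw0, h1.2.1, h2.2.1]
    rcases eq_or_lt_of_le hw.2 with hw1 | hw1
    · rw [hw1, h1.2.2.1, h2.2.2.1]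
    exact ((hA3 q q' hq h).1 w ⟨hw0, hw1⟩).le
  have hmono : ∀ q q', 0 ≤ q → q ≤ q' → cNL q ≤ cNL q' := by
    intro q q' hq hqq
    have hq' := hq.trans hqq
    obtain ⟨V, hV⟩ := ((hmin q' hq').2 (cNL q')).2 le_rfl
    obtain ⟨K, hK⟩ := hnice q' hq'
    have hs : 0 < cNL q' := hc0.trans_le (hmin q' hq').1
    have hα : 0 < cNL q' / K := div_pos hs (by linarith [(hK q hq hqq).K1])
    refine ((hmin q hq).2 _).1 (front_of_super hJ (hK q hq hqq) hs (front_adm hV) (fun x => ?_) hV.2.2.2.1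
      (front_range hV 0).1)
    exact (TT_gmono hJ (hK q hq hqq) (hK q' hq' le_rfl) hα (hle q q' hq hqq) (front_adm hV) x).trans
      (fix_of_front hJ (hK q' hq' le_rfl) hs hV x).ge
  set S : Set ℝ := {q | 0 ≤ q ∧ cNL q = c0} with hS
  have hq1S : q₁ ∈ S := ⟨hq₁.le, hc₁⟩
  have hSq2 : ∀ q ∈ S, q ≤ q₂ := by
    intro q hq
    by_contra h
    push Not at h
    have := hmono q₂ q (by linarith) h.le
    rw [hq.2] at this
    linarith
  have hSb : BddAbove S := ⟨q₂, hSq2⟩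
  obtain ⟨qs, hqs⟩ : ∃ qs, qs = sSup S := ⟨_, rfl⟩
  have hq1s : q₁ ≤ qs := hqs ▸ le_csSup hSb hq1S
  have hqs0 : 0 ≤ qs := by linarith
  have hqsq2 : qs ≤ q₂ := hqs ▸ csSup_le ⟨q₁, hq1S⟩ hSq2
  have hcs : cNL qs = c0 := by
    refine le_antisymm ?_ (hmin qs hqs0).1
    obtain ⟨u, hum, hul, huS⟩ := exists_seq_tendsto_sSup ⟨q₁, hq1S⟩ hSb
    rw [← hqs] at hul
    have huq : ∀ n, u n ≤ qs := fun n => hqs ▸ le_csSup hSb (huS n)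
    obtain ⟨K, hK⟩ := hnice qs hqs0
    have hex : ∀ n, ∃ W, IsNLFront J (fun w => f w (u n)) c0 W := fun n =>
      ((hmin (u n) (huS n).1).2 c0).2 (huS n).2.le
    choose W hW using hex
    have hα : 0 < c0 / K := div_pos hc0 (by linarith [(hK qs hqs0 le_rfl).K1])
    refine ((hmin qs hqs0).2 _).1 (front_of_approx hJ (hK qs hqs0 le_rfl) hc0 W (fun k => front_adm (hW k))
      (fun k => (hW k).2.2.1) (fun k => (hW k).2.2.2.1) (fun k => L₀ * |u k - qs|) ?_ (fun k x => ?_))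
    · have : Tendsto (fun k => L₀ * |u k - qs|) atTop (nhds (L₀ * |qs - qs|)) :=
        ((hul.sub_const qs).abs).const_mul L₀
      simpa using this
    · have hn := hK (u k) (huS k).1 (huq k)
      conv_lhs => rw [fix_of_front hJ hn hc0 (hW k) x]
      exact TT_close hJ hn (hK qs hqs0 le_rfl) hα Adm.one (front_adm (hW k))
        (fun w hw => hlip w hw _ _ (huS k).1 hqs0) x
  have hgt : ∀ q, qs < q → c0 < cNL q := by
    intro q hq
    have hq0 : 0 ≤ q := by linarith
    refine lt_of_le_of_ne (hmin q hq0).1 (fun h => ?_)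
    have := le_csSup hSb (show q ∈ S from ⟨hq0, h.symm⟩)
    rw [← hqs] at this
    linarith
  have hlow : ∀ q, 0 ≤ q → q ≤ qs → cNL q = c0 := fun q hq hqq =>
    le_antisymm ((hmono q qs hq hqq).trans hcs.le) (hmin q hq).1
  have hF2 : ∀ q, 0 ≤ q → ∃ C > 0, ∀ u v, 0 ≤ u → u ≤ v → v ≤ 1 →
      |(f v q - γ₀ * v) - (f u q - γ₀ * u)| ≤ C * v * (v - u) := fun q hq => (hC2 q hq).F2 (hA1 q hq).2.2.2.1
  -- the front at the threshold
  obtain ⟨W0, hW0, B0, hB0, hWB0⟩ : ∃ W, IsNLFront J (fun w => f w qs) c0 W ∧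
      ∃ B > 0, Tendsto (Zf lam₀ W) atTop (nhds B) := by
    obtain ⟨V, hV⟩ := ((hmin qs hqs0).2 c0).2 hcs.le
    obtain ⟨K, hK⟩ := hnice (qs + 1) (by linarith)
    obtain ⟨η, hη, β, hβ, hd⟩ := (hC2 qs hqs0).near1 (hA1 qs hqs0).2.2.2.2.1
    obtain ⟨Ca, hCa, hFa⟩ := hF2 qs hqs0
    obtain ⟨Cb, hCb, hFb⟩ := hF2 (qs + 1) (by linarith)
    have hFa1 := C2.F1 (g := fun w => f w qs) (hA1 qs hqs0).2.1 hFa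
    have hFb1 := C2.F1 (g := fun w => f w (qs + 1)) (hA1 (qs + 1) (by linarith)).2.1 hFb
    have hkp : ∀ k : ℕ, 0 < 1 / ((k : ℝ) + 1) := fun k => by positivity
    have hk1 : ∀ k : ℕ, 1 / ((k : ℝ) + 1) ≤ 1 := fun k => by
      rw [div_le_one (by positivity)]; linarith [Nat.cast_nonneg (α := ℝ) k]
    have hFq : ∀ q, qs ≤ q → q ≤ qs + 1 → ∀ w ∈ Icc (0:ℝ) 1, |f w q - γ₀ * w| ≤ (Ca + Cb) * w ^ 2 := by
      intro q h1 h2 w hw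
      have ha := hle qs q hqs0 h1 w hw
      have hb := hle q (qs + 1) (by linarith) h2 w hw
      have h3 := (abs_le.1 (hFa1 w hw)).1
      have h4 := (abs_le.1 (hFb1 w hw)).2
      have h5 : 0 ≤ Ca * w ^ 2 := by positivity
      have h6 : 0 ≤ Cb * w ^ 2 := by positivity
      rw [abs_le]
      constructor <;> linarith
    refine case3 hJ (hK qs hqs0 (by linarith)) H hβ hη hd (C := Ca + Cb) (by linarith) (hFq qs le_rfl (by linarith))
      (fun k w => f w (qs + 1 / ((k : ℝ) + 1))) (fun k => hK _ (by linarith [hkp k]) (by linarith [hk1 k]))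
      (fun k => hFq _ (by linarith [hkp k]) (by linarith [hk1 k])) (fun k => L₀ * |1 / ((k : ℝ) + 1)|) ?_
      (fun k w hw => ?_) (fun k hex => ?_) hV
    · have := (tendsto_one_div_add_atTop_nhds_zero_nat (𝕜 := ℝ)).abs.const_mul L₀
      simpa using this
    · have := hlip w hw (qs + 1 / ((k : ℝ) + 1)) qs (by linarith [hkp k]) hqs0
      rwa [add_sub_cancel_left] at this
    · have h1 := ((hmin (qs + 1 / ((k : ℝ) + 1)) (by linarith [hkp k])).2 c0).1 hex
      have h2 := hgt (qs + 1 / ((k : ℝ) + 1)) (by linarith [hkp k])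
      linarith
  refine ⟨qs, hq1s, lt_of_le_of_ne hqsq2 (fun h => ?_), hlow, hgt, fun q hq W hW => ⟨?_, ?_⟩⟩
  · rw [h] at hcs; linarith
  · rintro ⟨B, hB, hlo⟩
    rw [asym_iff] at hlo
    rcases lt_trichotomy q qs with h | h | h
    · exfalso
      rw [hlow q hq h.le] at hW
      obtain ⟨K, hK⟩ := hnice qs hqs0
      obtain ⟨η, hη, β, hβ, hd⟩ := (hC2 q hq).near1 (hA1 q hq).2.2.2.2.1
      obtain ⟨C, hC, hF⟩ := hF2 qs hqs0
      have hDC : C2 (fun w => f w qs - f w q)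
          (fun w => derivWithin (fun w => f w qs) (Icc 0 1) w - derivWithin (fun w => f w q) (Icc 0 1) w)
          (fun w => iteratedDerivWithin 2 (fun w => f w qs) (Icc 0 1) w
            - iteratedDerivWithin 2 (fun w => f w q) (Icc 0 1) w) :=
        ⟨fun x hx => ((hC2 qs hqs0).d1 x hx).sub ((hC2 q hq).d1 x hx),
          fun x hx => ((hC2 qs hqs0).d2 x hx).sub ((hC2 q hq).d2 x hx), (hC2 qs hqs0).c2.sub (hC2 q hq).c2⟩
      obtain ⟨cD, hcD, w0, hw0, hD⟩ := hDC.quad (by simp [(hA1 qs hqs0).2.1, (hA1 q hq).2.1])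
        (by simp only [(hA1 qs hqs0).2.2.2.1, (hA1 q hq).2.2.2.1, sub_self]) (sub_pos.2 (hA3 q qs hq h).2)
      exact case1 hJ (hK q hq h.le) (hK qs hqs0 le_rfl) H hβ hη hd hC hF hcD hw0 hD (hA3 q qs hq h).1 hW hW0 hB hB0
        hlo hWB0
    · exact h
    · exfalso
      obtain ⟨C, hC, hF⟩ := hF2 q hq
      have hs := hgt q h
      exact no_asym H hC hs hB (front_adm hW) hW.1.continuous hW.2.2.2.1
        (C2.F1 (g := fun w => f w q) (hA1 q hq).2.1 hF) (front_deriv (hc0.trans hs) hW) hlo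
  · intro h
    subst h
    rw [← hcs] at hW0
    obtain ⟨τ, hτ⟩ := huniq q hq W0 W hW0 hW
    have hWe : W = fun x => W0 (x - -τ) := by ext x; rw [hτ, sub_neg_eq_add]
    refine ⟨Real.exp (lam₀ * (-τ)) * B0, by positivity, ?_⟩
    rw [asym_iff, hWe]
    exact Zf_shift_lim hWB0 (-τ)
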